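/- For every ε > 0 there exists n₀ such that every graph G on n ≥ n₀ vertices in which every vertex has even degree and with minimum degree at least (0.9 + ε)n admits a partition of its edge set into the edge sets of complete subgraphs of odd order. -/

import Mathlib

/-!
The proof is by absorption; a graph is handled as its set of edges, and `Dec E` says that `E` is
decomposable into cliques of odd order. Write `n` for the number of vertices.

**Reserved graph.** A labelling obtained by repeated random halving (`labelling`) distributes the
vertices over the cells of a `q × q` grid. Let `P` (`cellRel`) join two vertices whose cells share a
row or a column, or which are both the last ones of their cells, and let `X` be the set of edges of
the graph that lie in `P`. For large `q` the relation `P` is sparse, yet any two vertices have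
linearly many common neighbours in `X` (`reserve`). Moreover, modulo two, every even subgraph of `P`
is a sum of triangles and four-cycles from a fixed system in which each pair occurs boundedly often
(`generators`, `cell_generators`); the edges of these cycles are pairs related by `P`, not
necessarily edges of the graph.

**Omni-absorber.** There is a sparse `A` disjoint from `X` such that `A ∪ L` is decomposable for
every even `L ⊆ X` (`omni`). To build it, each edge of each generating cycle gets two copies, paths
of length two with the same ends (`exists_middles`). Replacing the edges of a generating cycle by
copies gives a cycle of length six or eight, and two copies of the same pair form a four-cycle; for
each of these even cycles a private gadget (`absPat`, `exists_absorbers`) is decomposable both with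
and without the cycle. If `L` is the sum of some generating cycles, their gadgets use up one copy of
each of their edges; by parity, the remaining copies together with `L` split into four-cycles of two
copies and triangles made of a copy and an edge of `L` (`absorb_pairs`, `absorb_all`). All these
pieces are embedded edge-disjointly by a greedy argument (`embed_tasks`).

**Approximate decomposition.** The graph without `X` and `A` still has minimum degree at least
`0.9 n`, and then has a fractional triangle decomposition with weights `O(1/n)`
(`DenseMat.fractional`). By a separating hyperplane this reduces to an inequality for each symmetric
function `y` on pairs (`DenseMat.key`), witnessed by explicit weights: a triangle gets `3n` minus the
number of its common neighbours, corrected within each `K₄` according to the order of the values of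
`y` on opposite edges; the error terms are bounded by `coarea`. A random nibble (`nibble`) turns the
fractional decomposition into edge-disjoint triangles leaving a graph of small maximum degree
(`approx_triangles`).

**Conclusion.** The leftover edges are covered by triangles with two edges in `X` (`cover`). What
remains of `X` has even degrees, since everything else has, and is absorbed by `A`
(`dec_of_minDegree`).
-/

open scoped BigOperators
set_option linter.unusedSectionVars false

/-! ### Random subsets and concentration -/

/-- Expectation of `f t`, where `t` is the random subset of `s` containing each `i ∈ s`
independently with probability `p i`. -/
noncomputable def Ex {ι : Type} [DecidableEq ι] (p : ι → ℝ) (s : Finset ι)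
    (f : Finset ι → ℝ) : ℝ :=
  ∑ t ∈ s.powerset, ((∏ i ∈ t, p i) * ∏ i ∈ s \ t, (1 - p i)) * f t

section ExBasic
variable {ι : Type} [DecidableEq ι] {p : ι → ℝ}

lemma Ex_empty (f : Finset ι → ℝ) : Ex p ∅ f = f ∅ := by simp [Ex]

lemma Ex_insert {a : ι} {s : Finset ι} (ha : a ∉ s) (f : Finset ι → ℝ) :
    Ex p (insert a s) f = (1 - p a) * Ex p s f + p a * Ex p s (fun t => f (insert a t)) := by
  unfold Ex
  rw [Finset.sum_powerset_insert ha, Finset.mul_sum, Finset.mul_sum]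
  congr 1
  · refine Finset.sum_congr rfl fun t ht => ?_
    have hts := Finset.mem_powerset.1 ht
    have hat : a ∉ t := fun h => ha (hts h)
    have hst : a ∉ s \ t := fun h => ha (Finset.mem_sdiff.1 h).1
    rw [Finset.insert_sdiff_of_notMem _ hat, Finset.prod_insert hst]
    ring
  · refine Finset.sum_congr rfl fun t ht => ?_
    have hts := Finset.mem_powerset.1 ht
    have hat : a ∉ t := fun h => ha (hts h)
    have : insert a s \ insert a t = s \ t := by
      ext x; simp only [Finset.mem_sdiff, Finset.mem_insert]
      constructor
      · rintro ⟨h1 | h1, h2⟩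
        · exact absurd (Or.inl h1) h2
        · exact ⟨h1, fun h => h2 (Or.inr h)⟩
      · rintro ⟨h1, h2⟩
        refine ⟨Or.inr h1, ?_⟩
        rintro (h | h)
        · exact ha (h ▸ h1)
        · exact h2 h
    rw [this, Finset.prod_insert hat]
    ring

lemma Ex_congr {s : Finset ι} {f g : Finset ι → ℝ} (h : ∀ t ⊆ s, f t = g t) :
    Ex p s f = Ex p s g :=
  Finset.sum_congr rfl fun t ht => by rw [h t (Finset.mem_powerset.1 ht)]

lemma Ex_mono {s : Finset ι} (hp : ∀ i ∈ s, 0 ≤ p i ∧ p i ≤ 1) {f g : Finset ι → ℝ}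
    (h : ∀ t ⊆ s, f t ≤ g t) : Ex p s f ≤ Ex p s g := by
  refine Finset.sum_le_sum fun t ht => ?_
  have hts := Finset.mem_powerset.1 ht
  refine mul_le_mul_of_nonneg_left (h t hts) (mul_nonneg ?_ ?_)
  · exact Finset.prod_nonneg fun i hi => (hp i (hts hi)).1
  · exact Finset.prod_nonneg fun i hi => by linarith [(hp i (Finset.mem_sdiff.1 hi).1).2]

lemma Ex_add (s : Finset ι) (f g : Finset ι → ℝ) :
    Ex p s (fun t => f t + g t) = Ex p s f + Ex p s g := by
  simp only [Ex, mul_add, Finset.sum_add_distrib]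

lemma Ex_sub (s : Finset ι) (f g : Finset ι → ℝ) :
    Ex p s (fun t => f t - g t) = Ex p s f - Ex p s g := by
  simp only [Ex, mul_sub, Finset.sum_sub_distrib]

lemma Ex_mul (s : Finset ι) (c : ℝ) (f : Finset ι → ℝ) :
    Ex p s (fun t => c * f t) = c * Ex p s f := by
  simp only [Ex, Finset.mul_sum]
  exact Finset.sum_congr rfl fun t _ => by ring

lemma Ex_sum {J : Type} (s : Finset ι) (A : Finset J) (f : J → Finset ι → ℝ) :
    Ex p s (fun t => ∑ j ∈ A, f j t) = ∑ j ∈ A, Ex p s (f j) := by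
  simp only [Ex, Finset.mul_sum]
  exact Finset.sum_comm

lemma Ex_const (s : Finset ι) (c : ℝ) : Ex p s (fun _ => c) = c := by
  induction s using Finset.induction_on with
  | empty => rw [Ex_empty]
  | insert a s ha ih => rw [Ex_insert ha, ih]; ring

/-- Fubini for the two independent halves of the random subset. -/
lemma Ex_union {s u : Finset ι} (hd : Disjoint s u) (f : Finset ι → ℝ) :
    Ex p (s ∪ u) f = Ex p s (fun x => Ex p u (fun y => f (x ∪ y))) := by
  induction s using Finset.induction_on generalizing f with
  | empty => simp [Ex_empty]
  | insert a s ha ih =>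
    rw [Finset.disjoint_insert_left] at hd
    have hau : a ∉ s ∪ u := by simp [ha, hd.1]
    rw [Finset.insert_union, Ex_insert hau, Ex_insert ha, ih hd.2, ih hd.2]
    simp only [Finset.insert_union]

/-- The probability that the random subset avoids `B`. -/
lemma Ex_avoid (s B : Finset ι) :
    Ex p s (fun t => if Disjoint t B then 1 else 0) = ∏ i ∈ s ∩ B, (1 - p i) := by
  induction s using Finset.induction_on with
  | empty => simp [Ex_empty]
  | insert a s ha ih =>
    rw [Ex_insert ha, ih]
    by_cases haB : a ∈ B
    · have : (fun t : Finset ι => if Disjoint (insert a t) B then (1:ℝ) else 0)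
          = fun _ => 0 := by
        funext t; simp [Finset.disjoint_insert_left, haB]
      rw [this, Ex_const, Finset.insert_inter_of_mem haB,
        Finset.prod_insert (fun h => ha (Finset.mem_inter.1 h).1)]
      ring
    · have : (fun t : Finset ι => if Disjoint (insert a t) B then (1:ℝ) else 0)
          = fun t => if Disjoint t B then 1 else 0 := by
        funext t; simp [Finset.disjoint_insert_left, haB]
      rw [this, ih, Finset.insert_inter_of_notMem haB]
      ring

lemma Ex_mem {s : Finset ι} {i : ι} (hi : i ∈ s) (f : Finset ι → ℝ) :
    Ex p s (fun t => if i ∈ t then f t else 0)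
      = p i * Ex p (s.erase i) (fun t => f (insert i t)) := by
  conv_lhs => rw [← Finset.insert_erase hi]
  rw [Ex_insert (Finset.notMem_erase i s)]
  have h1 : Ex p (s.erase i) (fun t => if i ∈ t then f t else 0) = 0 :=
    (Ex_congr (g := fun _ => 0) fun t ht => by
      rw [if_neg (fun h => Finset.notMem_erase i s (ht h))]).trans (Ex_const _ 0)
  rw [h1]
  simp

lemma Ex_mem_one {s : Finset ι} {i : ι} (hi : i ∈ s) :
    Ex p s (fun t => if i ∈ t then 1 else 0) = p i := by
  rw [Ex_mem hi (fun _ => 1), Ex_const, mul_one]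

lemma Ex_mem_two {s : Finset ι} {i j : ι} (hi : i ∈ s) (hj : j ∈ s) (hij : i ≠ j) :
    Ex p s (fun t => if i ∈ t then (if j ∈ t then 1 else 0) else 0) = p i * p j := by
  rw [Ex_mem hi (fun t => if j ∈ t then 1 else 0)]
  congr 1
  have : (fun t : Finset ι => if j ∈ insert i t then (1:ℝ) else 0)
      = fun t => if j ∈ t then 1 else 0 := by
    funext t; simp [hij.symm]
  rw [this, Ex_mem_one (Finset.mem_erase.2 ⟨hij.symm, hj⟩)]

lemma exp_two_point {q d c : ℝ} (hq : 0 ≤ q) (hd : |d| ≤ c) (hc : c ≤ 1) :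
    (1 - q) + q * Real.exp d ≤ Real.exp (q * d + q * c ^ 2) := by
  have h1 : Real.exp d ≤ 1 + d + d ^ 2 := by
    have := Real.abs_exp_sub_one_sub_id_le (hd.trans hc)
    linarith [(abs_le.1 this).2]
  have h2 : d ^ 2 ≤ c ^ 2 := sq_le_sq' (by linarith [(abs_le.1 hd).1]) (abs_le.1 hd).2
  have h3 := Real.add_one_le_exp (q * d + q * c ^ 2)
  nlinarith [mul_le_mul_of_nonneg_left h1 hq, mul_le_mul_of_nonneg_left h2 hq]

/-- Exponential-moment form of the bounded-difference inequality: a function whose value moves by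
at most `c i` when the coordinate `i` is switched has an exponential moment controlled by
`∑ p i * c i ^ 2`. Small probabilities `p i` make this sharper than McDiarmid's bound. -/
lemma Ex_exp_le (s : Finset ι) (hp : ∀ i ∈ s, 0 ≤ p i ∧ p i ≤ 1) (c : ι → ℝ)
    (hc : ∀ i ∈ s, c i ≤ 1) (f : Finset ι → ℝ)
    (hf : ∀ i ∈ s, ∀ t ⊆ s, i ∉ t → |f (insert i t) - f t| ≤ c i) :
    Ex p s (fun t => Real.exp (f t)) ≤ Real.exp (Ex p s f + ∑ i ∈ s, p i * c i ^ 2) := by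
  induction s using Finset.induction_on generalizing f with
  | empty => simp [Ex_empty]
  | insert a s ha ih =>
    have hp' : ∀ i ∈ s, 0 ≤ p i ∧ p i ≤ 1 := fun i hi => hp i (Finset.mem_insert_of_mem hi)
    have hc' : ∀ i ∈ s, c i ≤ 1 := fun i hi => hc i (Finset.mem_insert_of_mem hi)
    have i0 := ih hp' hc' f fun i hi t ht hit =>
      hf i (Finset.mem_insert_of_mem hi) t (ht.trans (Finset.subset_insert _ _)) hit
    have i1 := ih hp' hc' (fun t => f (insert a t)) fun i hi t ht hit => by
      have hia : i ≠ a := fun h => ha (h ▸ hi)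
      have := hf i (Finset.mem_insert_of_mem hi) (insert a t) (Finset.insert_subset_insert _ ht)
        (by simp [hia, hit])
      rwa [Finset.insert_comm] at this
    rw [Ex_insert ha, Ex_insert ha, Finset.sum_insert ha]
    set m0 := Ex p s f
    set m1 := Ex p s (fun t => f (insert a t))
    set W := ∑ i ∈ s, p i * c i ^ 2
    have hpa := hp a (Finset.mem_insert_self _ _)
    have hd : |m1 - m0| ≤ c a := by
      have h : m1 - m0 = Ex p s (fun t => f (insert a t) - f t) := (Ex_sub _ _ _).symm
      have hb : ∀ t ⊆ s, |f (insert a t) - f t| ≤ c a := fun t ht =>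
        hf a (Finset.mem_insert_self _ _) t (ht.trans (Finset.subset_insert _ _))
          (fun h => ha (ht h))
      rw [h, abs_le]
      constructor
      · rw [← Ex_const (p := p) s (-c a)]
        exact Ex_mono hp' fun t ht => (abs_le.1 (hb t ht)).1
      · rw [← Ex_const (p := p) s (c a)]
        exact Ex_mono hp' fun t ht => (abs_le.1 (hb t ht)).2
    have key := exp_two_point hpa.1 hd (hc a (Finset.mem_insert_self _ _))
    calc (1 - p a) * Ex p s (fun t => Real.exp (f t))
          + p a * Ex p s (fun t => Real.exp (f (insert a t)))
        ≤ (1 - p a) * Real.exp (m0 + W) + p a * Real.exp (m1 + W) := by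
          gcongr
          · linarith [hpa.2]
          · exact hpa.1
      _ = Real.exp (m0 + W) * ((1 - p a) + p a * Real.exp (m1 - m0)) := by
          rw [mul_add, mul_left_comm, ← Real.exp_add]; ring_nf
      _ ≤ Real.exp (m0 + W) * Real.exp (p a * (m1 - m0) + p a * c a ^ 2) := by
          gcongr
      _ = _ := by rw [← Real.exp_add]; ring_nf

/-- Markov's inequality applied to an exponential moment. -/
lemma Ex_tail_of_exp (s : Finset ι) (hp : ∀ i ∈ s, 0 ≤ p i ∧ p i ≤ 1) (f : Finset ι → ℝ)
    (l m r B : ℝ) (hl : 0 < l)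
    (h : Ex p s (fun t => Real.exp (l * f t)) ≤ Real.exp (l * m + B)) :
    Ex p s (fun t => if m + r < f t then 1 else 0) ≤ Real.exp (B - l * r) := by
  have h1 : Ex p s (fun t => if m + r < f t then 1 else 0)
      ≤ Ex p s (fun t => Real.exp (-(l * (m + r))) * Real.exp (l * f t)) := by
    refine Ex_mono hp fun t _ => ?_
    split_ifs with hh
    · rw [← Real.exp_add]
      apply Real.one_le_exp
      nlinarith
    · positivity
  rw [Ex_mul] at h1
  refine h1.trans ((mul_le_mul_of_nonneg_left h (Real.exp_pos _).le).trans (le_of_eq ?_))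
  rw [← Real.exp_add]; ring_nf

lemma Ex_tail (s : Finset ι) (hp : ∀ i ∈ s, 0 ≤ p i ∧ p i ≤ 1) (c : ι → ℝ) (f : Finset ι → ℝ)
    (hf : ∀ i ∈ s, ∀ t ⊆ s, i ∉ t → |f (insert i t) - f t| ≤ c i)
    (l r S : ℝ) (hl : 0 < l) (hc : ∀ i ∈ s, l * c i ≤ 1) (hS : ∑ i ∈ s, p i * c i ^ 2 ≤ S) :
    Ex p s (fun t => if Ex p s f + r < f t then 1 else 0) ≤ Real.exp (l ^ 2 * S - l * r) := by
  refine Ex_tail_of_exp s hp f l _ r _ hl ?_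
  have := Ex_exp_le s hp (fun i => l * c i) hc (fun t => l * f t) (fun i hi t ht hit => by
    rw [← mul_sub, abs_mul, abs_of_pos hl]
    exact mul_le_mul_of_nonneg_left (hf i hi t ht hit) hl.le)
  refine this.trans (Real.exp_le_exp.2 ?_)
  rw [Ex_mul]
  have e : ∑ i ∈ s, p i * (l * c i) ^ 2 = l ^ 2 * ∑ i ∈ s, p i * c i ^ 2 := by
    rw [Finset.mul_sum]; exact Finset.sum_congr rfl fun i _ => by ring
  rw [e]
  gcongr

lemma Ex_tail_lower (s : Finset ι) (hp : ∀ i ∈ s, 0 ≤ p i ∧ p i ≤ 1) (c : ι → ℝ)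
    (f : Finset ι → ℝ)
    (hf : ∀ i ∈ s, ∀ t ⊆ s, i ∉ t → |f (insert i t) - f t| ≤ c i)
    (l r S : ℝ) (hl : 0 < l) (hc : ∀ i ∈ s, l * c i ≤ 1) (hS : ∑ i ∈ s, p i * c i ^ 2 ≤ S) :
    Ex p s (fun t => if f t < Ex p s f - r then 1 else 0) ≤ Real.exp (l ^ 2 * S - l * r) := by
  have := Ex_tail s hp c (fun t => -f t) (fun i hi t ht hit => by
    have := hf i hi t ht hit
    rwa [← abs_neg, show -(-f (insert i t) - -f t) = f (insert i t) - f t by ring])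
    l r S hl hc hS
  refine le_trans (le_of_eq (Ex_congr fun t _ => ?_)) this
  have e : Ex p s (fun t => -f t) = -Ex p s f := by
    have := Ex_mul (p := p) s (-1) f
    simpa using this
  rw [e]
  congr 1
  rw [eq_iff_iff]
  constructor <;> intro h <;> linarith

/-- Union bound. -/
lemma Ex_exists (s : Finset ι) (hp : ∀ i ∈ s, 0 ≤ p i ∧ p i ≤ 1) (f : Finset ι → ℝ)
    (h : Ex p s f < 1) : ∃ t ⊆ s, f t < 1 := by
  by_contra! hcon
  have := Ex_mono hp (f := fun _ => 1) (g := f) hcon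
  rw [Ex_const] at this
  linarith

end ExBasic

/-- Polynomially many exponentially small failure probabilities add up to less than `1`. -/
lemma eventually_sq_mul_exp_lt (K c r : ℝ) (hc : 0 < c) (hr : 0 < r) :
    ∃ n₀ : ℕ, ∀ n : ℕ, n₀ ≤ n → K * (n:ℝ) ^ 2 * Real.exp (-(c * n)) < r := by
  have h := (Real.tendsto_pow_mul_exp_neg_atTop_nhds_zero 2).comp
    (Filter.Tendsto.const_mul_atTop hc tendsto_natCast_atTop_atTop)
  have h2 := (h.const_mul (K / c ^ 2))
  simp only [mul_zero] at h2
  have h3 := h2.eventually (gt_mem_nhds hr)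
  obtain ⟨n₀, hn⟩ := Filter.eventually_atTop.1 h3
  refine ⟨n₀, fun n hn' => ?_⟩
  have := hn n hn'
  simp only [Function.comp] at this
  refine lt_of_eq_of_lt ?_ this
  rw [mul_pow]
  field_simp

/-! ### The nibble: almost perfect matchings in weighted linear triple systems -/

lemma exp_neg_sub_sq_le {x : ℝ} (h0 : 0 ≤ x) (h1 : x ≤ 1 / 2) :
    Real.exp (-x - x ^ 2) ≤ 1 - x := by
  have h := Real.quadratic_le_exp_of_nonneg (x := x + x ^ 2) (by positivity)
  have h2 : 1 ≤ (1 - x) * Real.exp (x + x ^ 2) := by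
    have : 1 ≤ (1 - x) * (1 + (x + x ^ 2) + (x + x ^ 2) ^ 2 / 2) := by
      have e : (1 - x) * (1 + (x + x ^ 2) + (x + x ^ 2) ^ 2 / 2)
          = 1 + x ^ 2 / 2 * (1 - x - x ^ 2 - x ^ 3) := by ring
      rw [e]
      have : 0 ≤ 1 - x - x ^ 2 - x ^ 3 := by
        have a1 : x ^ 2 ≤ 1 / 4 := by nlinarith
        have a2 : x ^ 3 ≤ 1 / 8 := by nlinarith
        linarith
      have := mul_nonneg (by positivity : 0 ≤ x ^ 2 / 2) this
      linarith
    exact this.trans (mul_le_mul_of_nonneg_left h (by linarith))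
  rw [show -x - x ^ 2 = -(x + x ^ 2) by ring, Real.exp_neg]
  rw [inv_le_iff_one_le_mul₀ (Real.exp_pos _)]
  exact h2

lemma prod_one_sub_le {ι : Type} (s : Finset ι) (p : ι → ℝ) (hp : ∀ i ∈ s, p i ≤ 1) :
    ∏ i ∈ s, (1 - p i) ≤ Real.exp (-∑ i ∈ s, p i) := by
  rw [← Finset.sum_neg_distrib, Real.exp_sum]
  exact Finset.prod_le_prod (fun i hi => by linarith [hp i hi])
    fun i _ => by linarith [Real.add_one_le_exp (-p i)]

lemma le_prod_one_sub {ι : Type} (s : Finset ι) (p : ι → ℝ) (hp : ∀ i ∈ s, 0 ≤ p i ∧ p i ≤ 1 / 2) :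
    Real.exp (-∑ i ∈ s, p i - ∑ i ∈ s, p i ^ 2) ≤ ∏ i ∈ s, (1 - p i) := by
  rw [sub_eq_add_neg, ← Finset.sum_neg_distrib, ← Finset.sum_neg_distrib,
    ← Finset.sum_add_distrib, Real.exp_sum]
  exact Finset.prod_le_prod (fun i _ => (Real.exp_pos _).le)
    fun i hi => by simpa [sub_eq_add_neg] using exp_neg_sub_sq_le (hp i hi).1 (hp i hi).2

/-- A linear triple system `pts i`, `i ∈ H`, on the ground set `E`, with an almost perfect
fractional matching `w` whose weights are `O(1/n)`, together with a family `T` of at most `n` test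
sets. The parameter `a` bounds the (rescaled) sizes of the test sets inside `E`; the field `far`
says that a point outside a test set `Q` lies in at most one triple meeting `Q`. -/
structure NState {ι P : Type} [DecidableEq ι] [DecidableEq P] (n : ℕ) (C δ a : ℝ)
    (pts : ι → Finset P) (E : Finset P) (H : Finset ι) (w : ι → ℝ)
    (T : Finset (Finset P)) : Prop where
  sub : ∀ i ∈ H, pts i ⊆ E
  card : ∀ i ∈ H, (pts i).card = 3
  lin : ∀ i ∈ H, ∀ j ∈ H, i ≠ j → (pts i ∩ pts j).card ≤ 1
  wnn : ∀ i ∈ H, 0 ≤ w i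
  wle : ∀ i ∈ H, w i ≤ C / n
  sum : ∀ e ∈ E, |∑ i ∈ H with e ∈ pts i, w i - 1| ≤ δ
  Ecard : (E.card : ℝ) ≤ (n : ℝ) ^ 2
  Tcard : (T.card : ℝ) ≤ n
  Q : ∀ Q ∈ T, ((Q ∩ E).card : ℝ) ≤ a * n
  far : ∀ Q ∈ T, ∀ h ∈ E, h ∉ Q → (H.filter fun i => h ∈ pts i ∧ ¬ Disjoint (pts i) Q).card ≤ 1

section
variable {ι P : Type} [DecidableEq ι] [DecidableEq P] {pts : ι → Finset P} {H : Finset ι}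

lemma sum_inc (A : Finset P) (f : ι → ℝ) :
    ∑ h ∈ A, ∑ i ∈ H with h ∈ pts i, f i = ∑ i ∈ H, ((A ∩ pts i).card : ℝ) * f i := by
  simp only [Finset.sum_filter]
  rw [Finset.sum_comm]
  refine Finset.sum_congr rfl fun i _ => ?_
  rw [← Finset.sum_filter, Finset.sum_const, nsmul_eq_mul, Finset.filter_mem_eq_inter]

lemma sum_meet_le (A : Finset P) (f : ι → ℝ) (hf : ∀ i ∈ H, 0 ≤ f i) :
    ∑ i ∈ H with ¬ Disjoint (pts i) A, f i ≤ ∑ h ∈ A, ∑ i ∈ H with h ∈ pts i, f i := by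
  rw [sum_inc, Finset.sum_filter]
  refine Finset.sum_le_sum fun i hi => ?_
  split_ifs with h
  · exact mul_nonneg (Nat.cast_nonneg _) (hf i hi)
  · have : 1 ≤ (A ∩ pts i).card := by
      rw [Finset.one_le_card]
      rw [Finset.inter_comm]
      exact Finset.not_disjoint_iff_nonempty_inter.1 h
    have h1 : (1:ℝ) ≤ ((A ∩ pts i).card : ℝ) := by exact_mod_cast this
    nlinarith [hf i hi]

end

section
variable {ι P : Type} [DecidableEq ι] [DecidableEq P] {n : ℕ} {C δ a : ℝ}
  {pts : ι → Finset P} {E : Finset P} {H : Finset ι} {w : ι → ℝ} {T : Finset (Finset P)}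

lemma NState.wsum_le (S : NState n C δ a pts E H w T) (hδ : δ ≤ 1) {e : P} (he : e ∈ E) :
    ∑ i ∈ H with e ∈ pts i, w i ≤ 2 := by
  linarith [(abs_le.1 (S.sum e he)).2]

/-- The triples other than possibly those through `e` alone which meet triple `i` outside `e`. -/
def meetOff (pts : ι → Finset P) (H : Finset ι) (e : P) (i : ι) : Finset ι :=
  H.filter fun j => ∃ g ∈ pts i, g ≠ e ∧ g ∈ pts j

lemma meetOff_eq (e : P) (i : ι) :
    meetOff pts H e i = H.filter fun j => ¬ Disjoint (pts j) ((pts i).erase e) := by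
  ext j
  simp only [meetOff, Finset.mem_filter, Finset.not_disjoint_iff, Finset.mem_erase]
  constructor
  · rintro ⟨h, g, a, b, c⟩; exact ⟨h, g, c, b, a⟩
  · rintro ⟨h, g, a, b, c⟩; exact ⟨h, g, c, b, a⟩

/-- Total weight of triples meeting the two other points of `i`. -/
lemma NState.sum_meetOff (S : NState n C δ a pts E H w T) {e : P} {i : ι} (hi : i ∈ H)
    (he : e ∈ pts i) :
    |∑ j ∈ meetOff pts H e i, w j - 2| ≤ 2 * δ + C / n := by
  have hdc : ((pts i).erase e).card = 2 := by rw [Finset.card_erase_of_mem he, S.card i hi]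
  obtain ⟨g, g', hgg, hg⟩ := Finset.card_eq_two.1 hdc
  have hgm : g ∈ pts i := Finset.mem_of_mem_erase (a := e) (hg ▸ (by simp))
  have hgm' : g' ∈ pts i := Finset.mem_of_mem_erase (a := e) (hg ▸ (by simp))
  have key : ∑ j ∈ meetOff pts H e i, w j
      = ∑ j ∈ H with g ∈ pts j, w j + ∑ j ∈ H with g' ∈ pts j, w j - w i := by
    have h1 : meetOff pts H e i = (H.filter (fun j => g ∈ pts j)) ∪ (H.filter fun j => g' ∈ pts j) := by
      rw [meetOff_eq, hg]
      ext j
      simp only [Finset.mem_filter, Finset.mem_union, Finset.disjoint_insert_right,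
        Finset.disjoint_singleton_right]
      tauto
    have h2 : (H.filter (fun j => g ∈ pts j)) ∩ (H.filter fun j => g' ∈ pts j) = {i} := by
      ext j
      simp only [Finset.mem_filter, Finset.mem_inter, Finset.mem_singleton]
      constructor
      · rintro ⟨⟨hj, a⟩, _, b⟩
        by_contra hne
        have := S.lin j hj i hi hne
        have h3 : ({g, g'} : Finset P) ⊆ pts j ∩ pts i := by
          intro x hx
          simp only [Finset.mem_insert, Finset.mem_singleton] at hx
          rcases hx with rfl | rfl <;> simp [*]
        have := (Finset.card_le_card h3).trans this
        rw [Finset.card_pair hgg] at this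
        omega
      · rintro rfl; exact ⟨⟨hi, hgm⟩, hi, hgm'⟩
    have := Finset.sum_union_inter (s₁ := H.filter (fun j => g ∈ pts j))
      (s₂ := H.filter fun j => g' ∈ pts j) (f := w)
    rw [h2, Finset.sum_singleton, ← h1] at this
    linarith
  have a1 := abs_le.1 (S.sum g (S.sub i hi hgm))
  have a2 := abs_le.1 (S.sum g' (S.sub i hi hgm'))
  have b1 := S.wnn i hi
  have b2 := S.wle i hi
  rw [key, abs_le]
  constructor <;> linarith [a1.1, a1.2, a2.1, a2.2]

/-- The weight of the triples through `e` both of whose other points survive the choice `t`. -/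
noncomputable def survW (pts : ι → Finset P) (H : Finset ι) (w : ι → ℝ) (e : P) (t : Finset ι) : ℝ :=
  ∑ i ∈ H with e ∈ pts i, w i * if Disjoint t (meetOff pts H e i) then 1 else 0

lemma exp_le_of_small {x d : ℝ} (hx : x ≤ d) (hd0 : 0 ≤ d) (hd : d ≤ 1) :
    Real.exp x ≤ 1 + d + d ^ 2 := by
  refine (Real.exp_le_exp.2 hx).trans ?_
  have := Real.abs_exp_sub_one_sub_id_le (x := d) (by rwa [abs_of_nonneg hd0])
  linarith [(abs_le.1 this).2]

lemma NState.Ex_survW (S : NState n C δ a pts E H w T) (hδ0 : 0 < δ) (hδ : δ ≤ 1 / 8)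
    {θ : ℝ} (hθ0 : 0 < θ) (hθ : θ ≤ 1 / 10) (hC : 0 < C) (hn : 10 * C ≤ δ * n)
    {e : P} (he : e ∈ E) :
    |Real.exp (2 * θ) * Ex (fun i => θ * w i) H (survW pts H w e) - 1| ≤ 4 * δ := by
  have hn0 : (0:ℝ) < n := by
    by_contra h
    have : (n:ℝ) ≤ 0 := not_lt.1 h
    nlinarith
  have hCn : C / n ≤ δ / 10 := by
    rw [div_le_iff₀ hn0]; linarith
  have hCn0 : 0 < C / n := by positivity
  have hEx : Ex (fun i => θ * w i) H (survW pts H w e)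
      = ∑ i ∈ H with e ∈ pts i, w i * ∏ j ∈ meetOff pts H e i, (1 - θ * w j) := by
    unfold survW
    rw [Ex_sum]
    refine Finset.sum_congr rfl fun i _ => ?_
    rw [Ex_mul, Ex_avoid, Finset.inter_eq_right.2 (show meetOff pts H e i ⊆ H from Finset.filter_subset _ _)]
  have hw : ∀ j ∈ H, 0 ≤ θ * w j ∧ θ * w j ≤ 1 / 2 := fun j hj => by
    have h1 := S.wnn j hj
    have h2 := S.wle j hj
    exact ⟨by positivity, by nlinarith⟩
  have hsub : ∀ i, ∀ j ∈ meetOff pts H e i, j ∈ H := fun i j hj => (Finset.mem_filter.1 hj).1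
  have hterm : ∀ i ∈ H.filter (fun i => e ∈ pts i),
      1 - δ ≤ Real.exp (2 * θ) * ∏ j ∈ meetOff pts H e i, (1 - θ * w j) ∧
      Real.exp (2 * θ) * ∏ j ∈ meetOff pts H e i, (1 - θ * w j) ≤ 1 + δ + δ ^ 2 := by
    intro i hi
    obtain ⟨hi, hei⟩ := Finset.mem_filter.1 hi
    have hs := abs_le.1 (S.sum_meetOff hi hei)
    have e1 : ∑ j ∈ meetOff pts H e i, θ * w j = θ * ∑ j ∈ meetOff pts H e i, w j := by
      rw [Finset.mul_sum]
    constructor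
    · have h1 := le_prod_one_sub (meetOff pts H e i) (fun j => θ * w j) fun j hj => hw j (hsub i j hj)
      have h2 : ∑ j ∈ meetOff pts H e i, (θ * w j) ^ 2 ≤ C / n * ∑ j ∈ meetOff pts H e i, θ * w j := by
        rw [Finset.mul_sum]
        refine Finset.sum_le_sum fun j hj => ?_
        have h1 := S.wnn j (hsub i j hj)
        have h2 := S.wle j (hsub i j hj)
        have h3 := (hw j (hsub i j hj)).1
        have : θ * w j ≤ C / n := by nlinarith
        nlinarith
      have h3 := Real.add_one_le_exp (2 * θ + (-∑ j ∈ meetOff pts H e i, θ * w j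
        - ∑ j ∈ meetOff pts H e i, (θ * w j) ^ 2))
      rw [Real.exp_add] at h3
      have h4 := h3.trans (mul_le_mul_of_nonneg_left h1 (Real.exp_pos _).le)
      refine le_trans ?_ h4
      rw [e1] at h2 ⊢
      set s := ∑ j ∈ meetOff pts H e i, w j
      have hs3 : s ≤ 3 := by linarith [hs.2]
      have : C / n * (θ * s) ≤ δ / 10 * (1 / 10 * 3) := by
        have hs0 : 0 ≤ s := Finset.sum_nonneg fun j hj => S.wnn j (hsub i j hj)
        gcongr
      nlinarith [hs.2]
    · have h1 := prod_one_sub_le (meetOff pts H e i) (fun j => θ * w j) fun j hj => by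
        linarith [(hw j (hsub i j hj)).2]
      refine (mul_le_mul_of_nonneg_left h1 (Real.exp_pos _).le).trans ?_
      rw [← Real.exp_add]
      refine exp_le_of_small ?_ hδ0.le (by linarith)
      rw [e1]
      nlinarith [hs.1]
  rw [hEx, Finset.mul_sum]
  have hS := abs_le.1 (S.sum e he)
  have hw' : ∀ i ∈ H.filter (fun i => e ∈ pts i), 0 ≤ w i := fun i hi =>
    S.wnn i (Finset.mem_filter.1 hi).1
  rw [abs_le]
  constructor
  · have : (1 - δ) * ∑ i ∈ H with e ∈ pts i, w i ≤
      ∑ i ∈ H with e ∈ pts i, Real.exp (2 * θ) * (w i * ∏ j ∈ meetOff pts H e i, (1 - θ * w j)) := by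
      rw [Finset.mul_sum]
      refine Finset.sum_le_sum fun i hi => ?_
      have := mul_le_mul_of_nonneg_left (hterm i hi).1 (hw' i hi)
      linarith
    nlinarith [hS.1]
  · have : ∑ i ∈ H with e ∈ pts i, Real.exp (2 * θ) * (w i * ∏ j ∈ meetOff pts H e i, (1 - θ * w j))
      ≤ (1 + δ + δ ^ 2) * ∑ i ∈ H with e ∈ pts i, w i := by
      rw [Finset.mul_sum]
      refine Finset.sum_le_sum fun i hi => ?_
      have := mul_le_mul_of_nonneg_left (hterm i hi).2 (hw' i hi)
      linarith
    have h1 : (1 + δ + δ ^ 2) * ∑ i ∈ H with e ∈ pts i, w i ≤ (1 + δ + δ ^ 2) * (1 + δ) :=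
      mul_le_mul_of_nonneg_left (by linarith [hS.2]) (by positivity)
    nlinarith

end

section
variable {ι P : Type} [DecidableEq ι] [DecidableEq P] {n : ℕ} {C δ a : ℝ}
  {pts : ι → Finset P} {E : Finset P} {H : Finset ι} {w : ι → ℝ} {T : Finset (Finset P)}

lemma NState.prob (S : NState n C δ a pts E H w T) (hCn : C ≤ n) (hn : 0 < n)
    {θ : ℝ} (hθ0 : 0 < θ) (hθ : θ ≤ 1) : ∀ i ∈ H, 0 ≤ θ * w i ∧ θ * w i ≤ 1 := by
  intro i hi
  have h1 := S.wnn i hi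
  have h2 := S.wle i hi
  have h3 : C / n ≤ 1 := by
    rw [div_le_one (by exact_mod_cast hn)]; exact hCn
  exact ⟨by positivity, by nlinarith⟩

lemma NState.card_two_points (S : NState n C δ a pts E H w T) {e g : P} (h : g ≠ e) :
    (H.filter fun i => e ∈ pts i ∧ g ∈ pts i).card ≤ 1 := by
  rw [Finset.card_le_one]
  intro i hi j hj
  simp only [Finset.mem_filter] at hi hj
  by_contra hne
  have h1 := S.lin i hi.1 j hj.1 hne
  have h3 : ({g, e} : Finset P) ⊆ pts i ∩ pts j := by
    intro x hx
    simp only [Finset.mem_insert, Finset.mem_singleton] at hx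
    rcases hx with rfl | rfl <;> simp [hi, hj]
  have := (Finset.card_le_card h3).trans h1
  rw [Finset.card_pair h] at this
  omega

lemma NState.survW_tail (S : NState n C δ a pts E H w T) (hC : 0 < C) (hCn : C ≤ n) (hn : 0 < n)
    (hδ : δ ≤ 1) {θ : ℝ} (hθ0 : 0 < θ) (hθ : θ ≤ 1) {r l : ℝ} (hl0 : 0 < l)
    (hl1 : l * (3 * C) ≤ 1) (hl2 : l * (72 * C) ≤ r) {e : P} (he : e ∈ E) :
    Ex (fun i => θ * w i) H (fun t => if Ex (fun i => θ * w i) H (survW pts H w e) + r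
        < survW pts H w e t then 1 else 0) ≤ Real.exp (-(l * r / 2 * n)) ∧
    Ex (fun i => θ * w i) H (fun t => if survW pts H w e t
        < Ex (fun i => θ * w i) H (survW pts H w e) - r then 1 else 0)
        ≤ Real.exp (-(l * r / 2 * n)) := by
  have hn0 : (0:ℝ) < n := by exact_mod_cast hn
  have hp := S.prob hCn hn hθ0 hθ
  set c : ι → ℝ := fun j => ∑ i ∈ H with e ∈ pts i, w i * if j ∈ meetOff pts H e i then 1 else 0
    with hc
  have hc0 : ∀ j, 0 ≤ c j := fun j => Finset.sum_nonneg fun i hi => by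
    have := S.wnn i (Finset.mem_filter.1 hi).1
    split_ifs <;> simp [this]
  have hf : ∀ j ∈ H, ∀ t ⊆ H, j ∉ t → |survW pts H w e (insert j t) - survW pts H w e t| ≤ c j := by
    intro j hj t ht hjt
    unfold survW
    rw [← Finset.sum_sub_distrib]
    refine (Finset.abs_sum_le_sum_abs _ _).trans (Finset.sum_le_sum fun i hi => ?_)
    have := S.wnn i (Finset.mem_filter.1 hi).1
    rw [← mul_sub, abs_mul, abs_of_nonneg this]
    refine mul_le_mul_of_nonneg_left ?_ this
    by_cases h1 : j ∈ meetOff pts H e i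
    · rw [if_pos h1]; split_ifs <;> simp
    · by_cases h2 : Disjoint t (meetOff pts H e i) <;>
        simp [Finset.disjoint_insert_left, h1, h2]
  have hc3 : ∀ j ∈ H, c j ≤ 3 * C / n := by
    intro j hj
    have hcard : ((H.filter (fun i => e ∈ pts i)).filter fun i => j ∈ meetOff pts H e i).card ≤ 3 := by
      have hs : ((H.filter (fun i => e ∈ pts i)).filter fun i => j ∈ meetOff pts H e i)
          ⊆ ((pts j).erase e).biUnion fun g => H.filter fun i => e ∈ pts i ∧ g ∈ pts i := by
        intro i hi
        simp only [Finset.mem_filter, meetOff, Finset.mem_biUnion, Finset.mem_erase] at hi ⊢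
        obtain ⟨⟨h1, h2⟩, _, g, h3, h4, h5⟩ := hi
        exact ⟨g, ⟨h4, h5⟩, h1, h2, h3⟩
      refine (Finset.card_le_card hs).trans (Finset.card_biUnion_le.trans ?_)
      refine (Finset.sum_le_card_nsmul _ _ 1 fun g hg =>
        S.card_two_points (Finset.mem_erase.1 hg).1).trans ?_
      have := Finset.card_erase_le (s := pts j) (a := e)
      rw [S.card j hj] at this
      simpa using this
    have : c j = ∑ i ∈ (H.filter (fun i => e ∈ pts i)).filter (fun i => j ∈ meetOff pts H e i), w i := by
      rw [hc, Finset.sum_filter _ (fun i => w i)]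
      exact Finset.sum_congr rfl fun i _ => by split_ifs <;> simp
    rw [this]
    refine (Finset.sum_le_card_nsmul _ _ (C / n) fun i hi => S.wle i ?_).trans ?_
    · exact (Finset.mem_filter.1 (Finset.mem_filter.1 hi).1).1
    · rw [nsmul_eq_mul, mul_div_assoc]
      have : (((H.filter (fun i => e ∈ pts i)).filter fun i => j ∈ meetOff pts H e i).card : ℝ) ≤ 3 := by
        exact_mod_cast hcard
      gcongr
  have hsum : ∑ j ∈ H, θ * w j * c j ^ 2 ≤ 30 * C / n := by
    have h1 : ∑ j ∈ H, θ * w j * c j ^ 2 ≤ 3 * C / n * ∑ j ∈ H, θ * w j * c j := by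
      rw [Finset.mul_sum]
      refine Finset.sum_le_sum fun j hj => ?_
      have := mul_le_mul_of_nonneg_left (hc3 j hj) (mul_nonneg (hp j hj).1 (hc0 j))
      nlinarith
    have h2 : ∑ j ∈ H, θ * w j * c j ≤ 10 := by
      have : ∑ j ∈ H, θ * w j * c j
          = ∑ i ∈ H with e ∈ pts i, w i * (θ * ∑ j ∈ meetOff pts H e i, w j) := by
        simp only [hc, Finset.mul_sum]
        rw [Finset.sum_comm]
        refine Finset.sum_congr rfl fun i _ => ?_
        have hm : meetOff pts H e i = H.filter (fun j => j ∈ meetOff pts H e i) := by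
          rw [Finset.filter_mem_eq_inter, Finset.inter_eq_right.2]
          exact Finset.filter_subset _ _
        conv_rhs => rw [hm]
        rw [Finset.sum_filter]
        exact Finset.sum_congr rfl fun j _ => by split_ifs <;> ring
      rw [this]
      have h3 : ∑ i ∈ H with e ∈ pts i, w i * (θ * ∑ j ∈ meetOff pts H e i, w j)
          ≤ ∑ i ∈ H with e ∈ pts i, w i * 5 := by
        refine Finset.sum_le_sum fun i hi => ?_
        obtain ⟨hi, hei⟩ := Finset.mem_filter.1 hi
        refine mul_le_mul_of_nonneg_left ?_ (S.wnn i hi)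
        have := (abs_le.1 (S.sum_meetOff hi hei)).2
        have h4 : C / n ≤ 1 := by rw [div_le_one hn0]; exact hCn
        have h5 : 0 ≤ ∑ j ∈ meetOff pts H e i, w j :=
          Finset.sum_nonneg fun j hj => S.wnn j (Finset.mem_filter.1 hj).1
        nlinarith
      rw [← Finset.sum_mul] at h3
      linarith [S.wsum_le hδ he]
    refine h1.trans ?_
    have : 0 ≤ 3 * C / n := by positivity
    calc 3 * C / n * ∑ j ∈ H, θ * w j * c j ≤ 3 * C / n * 10 := by gcongr
      _ = 30 * C / n := by ring
  have hlc : ∀ j ∈ H, l * n * c j ≤ 1 := fun j hj => by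
    have := mul_le_mul_of_nonneg_left (hc3 j hj) (by positivity : 0 ≤ l * n)
    refine this.trans (le_of_eq_of_le ?_ hl1)
    field_simp
  have hexp : (l * n) ^ 2 * (30 * C / n) - l * n * r ≤ -(l * r / 2 * n) := by
    have e : (l * n) ^ 2 * (30 * C / n) = l * n * (l * (30 * C)) := by field_simp
    rw [e]
    have : 0 < l * n := by positivity
    nlinarith [mul_pos hl0 hC]
  exact ⟨(Ex_tail H hp c _ hf (l * n) r _ (by positivity) hlc hsum).trans (Real.exp_le_exp.2 hexp),
    (Ex_tail_lower H hp c _ hf (l * n) r _ (by positivity) hlc hsum).trans (Real.exp_le_exp.2 hexp)⟩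

/-- The number of points of `Q ∩ E` covered by no chosen triple. -/
noncomputable def aliveN (pts : ι → Finset P) (H : Finset ι) (E Q : Finset P) (t : Finset ι) : ℝ :=
  ∑ h ∈ Q ∩ E, if Disjoint t (H.filter fun j => h ∈ pts j) then 1 else 0

lemma NState.near_sum (S : NState n C δ a pts E H w T) (hδ0 : 0 < δ) {Q : Finset P} (hQ : Q ∈ T) :
    ∑ i ∈ H with ¬ Disjoint (pts i) Q, w i ≤ a * n * (1 + δ) := by
  have h0 : H.filter (fun i => ¬ Disjoint (pts i) Q)
      = H.filter fun i => ¬ Disjoint (pts i) (Q ∩ E) := by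
    refine Finset.filter_congr fun i hi => ?_
    rw [not_iff_not]
    rw [Finset.disjoint_iff_inter_eq_empty, Finset.disjoint_iff_inter_eq_empty,
      Finset.inter_comm Q E, ← Finset.inter_assoc, Finset.inter_eq_left.2 (S.sub i hi)]
  rw [h0]
  refine (sum_meet_le _ w S.wnn).trans ?_
  have : ∑ h ∈ Q ∩ E, ∑ i ∈ H with h ∈ pts i, w i ≤ ∑ h ∈ Q ∩ E, (1 + δ) :=
    Finset.sum_le_sum fun h hh => by
      linarith [(abs_le.1 (S.sum h (Finset.mem_inter.1 hh).2)).2]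
  rw [Finset.sum_const, nsmul_eq_mul] at this
  refine this.trans ?_
  exact mul_le_mul_of_nonneg_right (S.Q Q hQ) (by linarith)

end

section
variable {ι P : Type} [DecidableEq ι] [DecidableEq P] {n : ℕ} {C δ a : ℝ}
  {pts : ι → Finset P} {E : Finset P} {H : Finset ι} {w : ι → ℝ} {T : Finset (Finset P)}

lemma NState.Ex_aliveN (S : NState n C δ a pts E H w T) (hCn : C ≤ n) (hn : 0 < n)
    (hδ0 : 0 < δ) (hδ : δ ≤ 1 / 8) {θ : ℝ} (hθ0 : 0 < θ) (hθ : θ ≤ 1 / 10) {Q : Finset P}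
    (hQ : Q ∈ T) :
    Ex (fun i => θ * w i) H (aliveN pts H E Q) ≤ (1 - 3 / 4 * θ) * (a * n) := by
  have hp := S.prob hCn hn hθ0 (by linarith)
  unfold aliveN
  rw [Ex_sum]
  have h1 : ∀ h ∈ Q ∩ E, Ex (fun i => θ * w i) H
      (fun t => if Disjoint t (H.filter fun j => h ∈ pts j) then 1 else 0) ≤ 1 - 3 / 4 * θ := by
    intro h hh
    rw [Ex_avoid, Finset.inter_eq_right.2 (Finset.filter_subset _ _)]
    refine (prod_one_sub_le _ _ fun i hi => (hp i (Finset.mem_filter.1 hi).1).2).trans ?_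
    rw [← Finset.mul_sum]
    have hs := (abs_le.1 (S.sum h (Finset.mem_inter.1 hh).2)).1
    have h2 : -(θ * ∑ i ∈ H with h ∈ pts i, w i) ≤ -(7 / 8 * θ) := by nlinarith
    refine (Real.exp_le_exp.2 h2).trans ?_
    have := Real.abs_exp_sub_one_sub_id_le (x := -(7 / 8 * θ))
      (by rw [abs_neg, abs_of_pos (by positivity)]; linarith)
    have := (abs_le.1 this).2
    nlinarith
  refine (Finset.sum_le_card_nsmul _ _ _ h1).trans ?_
  rw [nsmul_eq_mul, mul_comm]
  exact mul_le_mul_of_nonneg_left (S.Q Q hQ) (by linarith)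

lemma NState.aliveN_tail (S : NState n C δ a pts E H w T) (hCn : C ≤ n) (hn : 0 < n)
    (hδ0 : 0 < δ) (hδ : δ ≤ 1) (ha : a ≤ 1) {θ : ℝ} (hθ0 : 0 < θ) (hθ : θ ≤ 1) {r l : ℝ}
    (hl0 : 0 < l) (hl1 : l ≤ 1 / 3) (hl2 : l * 36 ≤ r) {Q : Finset P} (hQ : Q ∈ T) :
    Ex (fun i => θ * w i) H (fun t => if Ex (fun i => θ * w i) H (aliveN pts H E Q) + r * n
        < aliveN pts H E Q t then 1 else 0) ≤ Real.exp (-(l * r / 2 * n)) := by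
  have hn0 : (0:ℝ) < n := by exact_mod_cast hn
  have hp := S.prob hCn hn hθ0 hθ
  set c : ι → ℝ := fun j => if Disjoint (pts j) Q then 0 else 3
  have hf : ∀ j ∈ H, ∀ t ⊆ H, j ∉ t →
      |aliveN pts H E Q (insert j t) - aliveN pts H E Q t| ≤ c j := by
    intro j hj t ht hjt
    unfold aliveN
    rw [← Finset.sum_sub_distrib]
    refine (Finset.abs_sum_le_sum_abs _ _).trans ?_
    have h1 : ∑ h ∈ Q ∩ E, |(if Disjoint (insert j t) (H.filter fun j => h ∈ pts j) then (1:ℝ) else 0)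
        - (if Disjoint t (H.filter fun j => h ∈ pts j) then 1 else 0)|
        ≤ ∑ h ∈ Q ∩ E, if h ∈ pts j then 1 else 0 := by
      refine Finset.sum_le_sum fun h _ => ?_
      by_cases h1 : h ∈ pts j
      · rw [if_pos h1]; split_ifs <;> simp
      · by_cases h2 : Disjoint t (H.filter fun j => h ∈ pts j) <;>
          simp [Finset.disjoint_insert_left, h1, h2]
    refine h1.trans ?_
    rw [← Finset.sum_filter, Finset.sum_const, nsmul_eq_mul, mul_one]
    simp only [c]
    split_ifs with hd
    · have : (Q ∩ E).filter (fun h => h ∈ pts j) = ∅ := by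
        rw [Finset.filter_eq_empty_iff]
        intro x hx hxj
        exact Finset.disjoint_left.1 hd hxj (Finset.mem_inter.1 hx).1
      simp [this]
    · have : ((Q ∩ E).filter fun h => h ∈ pts j).card ≤ (pts j).card :=
        Finset.card_le_card fun x hx => (Finset.mem_filter.1 hx).2
      rw [S.card j hj] at this
      exact_mod_cast this
  have hsum : ∑ j ∈ H, θ * w j * c j ^ 2 ≤ 18 * n := by
    have h1 := S.near_sum hδ0 hQ
    have h2 : ∑ j ∈ H, θ * w j * c j ^ 2 = 9 * θ * ∑ i ∈ H with ¬ Disjoint (pts i) Q, w i := by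
      rw [Finset.sum_filter, Finset.mul_sum]
      refine Finset.sum_congr rfl fun j _ => ?_
      simp only [c]
      by_cases h : Disjoint (pts j) Q
      · simp [h]
      · simp [h]; ring
    have h3 : 0 ≤ ∑ i ∈ H with ¬ Disjoint (pts i) Q, w i :=
      Finset.sum_nonneg fun i hi => S.wnn i (Finset.mem_filter.1 hi).1
    have h4 : a * n * (1 + δ) ≤ 1 * n * 2 := by gcongr; linarith
    rw [h2]
    nlinarith
  refine (Ex_tail H hp c _ hf l (r * n) _ hl0 (fun j _ => ?_) hsum).trans (Real.exp_le_exp.2 ?_)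
  · simp only [c]; split_ifs
    · simp
    · linarith
  · have : 0 < l * n := by positivity
    nlinarith

/-- Contribution of a point `h` to the waste near `Q`: the number of chosen triples through `h`
which meet `Q`, counted only when at least two chosen triples collide at `h`. -/
noncomputable def coll (pts : ι → Finset P) (Q : Finset P) (h : P) (t : Finset ι) : ℝ :=
  if 2 ≤ (t.filter fun j => h ∈ pts j).card
    then ((t.filter fun i => ¬ Disjoint (pts i) Q ∧ h ∈ pts i).card : ℝ) else 0

lemma coll_insert_of_notMem {Q : Finset P} {h : P} {j : ι} (hj : h ∉ pts j) (t : Finset ι) :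
    coll pts Q h (insert j t) = coll pts Q h t := by
  unfold coll
  simp [Finset.filter_insert, hj]

lemma coll_insert_mono (Q : Finset P) (h : P) (j : ι) (t : Finset ι) :
    coll pts Q h t ≤ coll pts Q h (insert j t) := by
  unfold coll
  have h1 : (t.filter fun j => h ∈ pts j).card ≤ ((insert j t).filter fun j => h ∈ pts j).card :=
    Finset.card_le_card (Finset.filter_subset_filter _ (Finset.subset_insert _ _))
  have h2 : (t.filter fun i => ¬ Disjoint (pts i) Q ∧ h ∈ pts i).card
      ≤ ((insert j t).filter fun i => ¬ Disjoint (pts i) Q ∧ h ∈ pts i).card :=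
    Finset.card_le_card (Finset.filter_subset_filter _ (Finset.subset_insert _ _))
  split_ifs
  · exact_mod_cast h2
  · omega
  · positivity
  · exact le_rfl

lemma coll_insert_le (Q : Finset P) (h : P) (j : ι) (t : Finset ι) :
    coll pts Q h (insert j t) ≤ coll pts Q h t + 2 := by
  unfold coll
  have h1 : ((insert j t).filter fun j => h ∈ pts j).card ≤ (t.filter fun j => h ∈ pts j).card + 1 := by
    rw [Finset.filter_insert]; split_ifs
    · exact Finset.card_insert_le _ _
    · omega
  have h2 : ((insert j t).filter fun i => ¬ Disjoint (pts i) Q ∧ h ∈ pts i).card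
      ≤ (t.filter fun i => ¬ Disjoint (pts i) Q ∧ h ∈ pts i).card + 1 := by
    rw [Finset.filter_insert]; split_ifs
    · exact Finset.card_insert_le _ _
    · omega
  have h3 : (t.filter fun i => ¬ Disjoint (pts i) Q ∧ h ∈ pts i).card
      ≤ (t.filter fun j => h ∈ pts j).card :=
    Finset.card_le_card fun x hx => by
      simp only [Finset.mem_filter] at hx ⊢; exact ⟨hx.1, hx.2.2⟩
  split_ifs
  · have : (((insert j t).filter fun i => ¬ Disjoint (pts i) Q ∧ h ∈ pts i).card : ℝ)
      ≤ (t.filter fun i => ¬ Disjoint (pts i) Q ∧ h ∈ pts i).card + 1 := by exact_mod_cast h2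
    linarith
  · rw [zero_add]; norm_cast; omega
  · have : (0:ℝ) ≤ (t.filter fun i => ¬ Disjoint (pts i) Q ∧ h ∈ pts i).card := by positivity
    linarith
  · linarith

/-- A triple `j` far from `Q` only creates waste at `h` through the chosen near triples at `h`. -/
lemma coll_insert_far {Q : Finset P} (h : P) {j : ι} (hj : Disjoint (pts j) Q) (t : Finset ι) :
    coll pts Q h (insert j t) ≤ coll pts Q h t
      + (t.filter fun i => ¬ Disjoint (pts i) Q ∧ h ∈ pts i).card := by
  have h2 : ((insert j t).filter fun i => ¬ Disjoint (pts i) Q ∧ h ∈ pts i)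
      = (t.filter fun i => ¬ Disjoint (pts i) Q ∧ h ∈ pts i) := by
    rw [Finset.filter_insert, if_neg]; tauto
  unfold coll
  rw [h2]
  have h3 : (0:ℝ) ≤ (t.filter fun i => ¬ Disjoint (pts i) Q ∧ h ∈ pts i).card := by positivity
  split_ifs <;> linarith

/-- Total waste near `Q`. -/
noncomputable def waste (pts : ι → Finset P) (E Q : Finset P) (t : Finset ι) : ℝ :=
  ∑ h ∈ E, coll pts Q h t

lemma waste_insert (E Q : Finset P) {j : ι} (hj : pts j ⊆ E) (t : Finset ι) :
    waste pts E Q (insert j t) - waste pts E Q t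
      = ∑ h ∈ pts j, (coll pts Q h (insert j t) - coll pts Q h t) := by
  unfold waste
  rw [← Finset.sum_sub_distrib]
  symm
  refine Finset.sum_subset hj fun h _ hh => ?_
  rw [coll_insert_of_notMem hh, sub_self]

lemma coll_le (Q : Finset P) (h : P) (t : Finset ι) (ht : t ⊆ H) :
    coll pts Q h t ≤ ∑ i ∈ H with ¬ Disjoint (pts i) Q ∧ h ∈ pts i,
      ∑ j ∈ (H.filter fun j => h ∈ pts j).erase i, if i ∈ t then (if j ∈ t then 1 else 0) else 0 := by
  have hnn : 0 ≤ ∑ i ∈ H with ¬ Disjoint (pts i) Q ∧ h ∈ pts i,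
      ∑ j ∈ (H.filter fun j => h ∈ pts j).erase i,
        if i ∈ t then (if j ∈ t then (1:ℝ) else 0) else 0 :=
    Finset.sum_nonneg fun i _ => Finset.sum_nonneg fun j _ => by split_ifs <;> norm_num
  unfold coll
  split_ifs with h2
  · have e1 : ((t.filter fun i => ¬ Disjoint (pts i) Q ∧ h ∈ pts i).card : ℝ)
        = ∑ i ∈ H with ¬ Disjoint (pts i) Q ∧ h ∈ pts i, if i ∈ t then 1 else 0 := by
      rw [Finset.sum_ite, Finset.sum_const_zero, add_zero, Finset.sum_const, nsmul_eq_mul, mul_one]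
      congr 2
      ext i; simp only [Finset.mem_filter]
      constructor
      · rintro ⟨a, b⟩; exact ⟨⟨ht a, b⟩, a⟩
      · rintro ⟨⟨_, b⟩, a⟩; exact ⟨a, b⟩
    rw [e1]
    refine Finset.sum_le_sum fun i hi => ?_
    by_cases hit : i ∈ t
    · simp only [hit, if_true]
      obtain ⟨j, hj, hji⟩ := Finset.exists_mem_ne (s := t.filter fun j => h ∈ pts j) (by omega) i
      obtain ⟨hjt, hjh⟩ := Finset.mem_filter.1 hj
      have := Finset.single_le_sum (f := fun j => if j ∈ t then (1:ℝ) else 0)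
        (s := (H.filter fun j => h ∈ pts j).erase i) (fun j _ => by split_ifs <;> norm_num)
        (Finset.mem_erase.2 ⟨hji, Finset.mem_filter.2 ⟨ht hjt, hjh⟩⟩)
      simpa [hjt] using this
    · simp [hit]
  · exact hnn

lemma NState.Ex_waste (S : NState n C δ a pts E H w T) (hCn : C ≤ n) (hn : 0 < n)
    (hδ0 : 0 < δ) (hδ : δ ≤ 1 / 8) (ha : a ≤ 1) {θ : ℝ} (hθ0 : 0 < θ) (hθ : θ ≤ 1) {Q : Finset P}
    (hQ : Q ∈ T) :
    Ex (fun i => θ * w i) H (waste pts E Q) ≤ 4 * θ ^ 2 * n := by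
  have hp := S.prob hCn hn hθ0 hθ
  have h1 : Ex (fun i => θ * w i) H (waste pts E Q) ≤
      ∑ h ∈ E, ∑ i ∈ H with ¬ Disjoint (pts i) Q ∧ h ∈ pts i,
      ∑ j ∈ (H.filter fun j => h ∈ pts j).erase i, (θ * w i) * (θ * w j) := by
    unfold waste
    rw [Ex_sum]
    refine Finset.sum_le_sum fun h _ => ?_
    refine (Ex_mono hp fun t ht => coll_le (H := H) Q h t ht).trans ?_
    rw [Ex_sum]
    refine Finset.sum_le_sum fun i hi => ?_
    rw [Ex_sum]
    refine Finset.sum_le_sum fun j hj => ?_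
    rw [Ex_mem_two (p := fun i => θ * w i)]
    · exact (Finset.mem_filter.1 hi).1
    · exact (Finset.mem_filter.1 (Finset.mem_erase.1 hj).2).1
    · exact (Finset.mem_erase.1 hj).1.symm
  have h2 : ∑ h ∈ E, ∑ i ∈ H with ¬ Disjoint (pts i) Q ∧ h ∈ pts i,
      ∑ j ∈ (H.filter fun j => h ∈ pts j).erase i, (θ * w i) * (θ * w j)
      ≤ ∑ h ∈ E, ∑ i ∈ (H.filter fun i => ¬ Disjoint (pts i) Q) with h ∈ pts i,
        (θ * w i) * (θ * (1 + δ)) := by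
    refine Finset.sum_le_sum fun h hh => ?_
    rw [Finset.filter_filter]
    refine Finset.sum_le_sum fun i hi => ?_
    rw [← Finset.mul_sum, ← Finset.mul_sum]
    refine mul_le_mul_of_nonneg_left (mul_le_mul_of_nonneg_left ?_ hθ0.le)
      (hp i (Finset.mem_filter.1 hi).1).1
    have := (abs_le.1 (S.sum h hh)).2
    have h3 : ∑ j ∈ (H.filter fun j => h ∈ pts j).erase i, w j ≤ ∑ j ∈ H with h ∈ pts j, w j :=
      Finset.sum_le_sum_of_subset_of_nonneg (Finset.erase_subset _ _)
        fun j hj _ => S.wnn j (Finset.mem_filter.1 hj).1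
    linarith
  refine (h1.trans h2).trans ?_
  rw [sum_inc]
  have h3 : ∑ i ∈ H with ¬ Disjoint (pts i) Q, ((E ∩ pts i).card : ℝ) * (θ * w i * (θ * (1 + δ)))
      = 3 * θ ^ 2 * (1 + δ) * ∑ i ∈ H with ¬ Disjoint (pts i) Q, w i := by
    rw [Finset.mul_sum]
    refine Finset.sum_congr rfl fun i hi => ?_
    have hi := (Finset.mem_filter.1 hi).1
    rw [Finset.inter_eq_right.2 (S.sub i hi), S.card i hi]
    push_cast; ring
  rw [h3]
  have h4 := S.near_sum hδ0 hQ
  have h5 : a * n * (1 + δ) ≤ 1 * n * (1 + 1 / 8) := by gcongr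
  have h6 : 3 * θ ^ 2 * (1 + δ) * ∑ i ∈ H with ¬ Disjoint (pts i) Q, w i
      ≤ 3 * θ ^ 2 * (1 + 1 / 8) * (1 * n * (1 + 1 / 8)) := by
    have := Finset.sum_nonneg (s := H.filter fun i => ¬ Disjoint (pts i) Q) (f := w)
      fun i hi => S.wnn i (Finset.mem_filter.1 hi).1
    gcongr
    exact h4.trans h5
  refine h6.trans ?_
  have : 0 ≤ θ ^ 2 * n := by positivity
  nlinarith

end

section
variable {ι P : Type} [DecidableEq ι] [DecidableEq P] {n : ℕ} {C δ a : ℝ}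
  {pts : ι → Finset P} {E : Finset P} {H : Finset ι} {w : ι → ℝ} {T : Finset (Finset P)}

/-- Concentration of the waste. The triples far from `Q` are exposed first: a far triple has only a
tiny effect on the conditional expectation of the waste given the far choices, and there are few
near triples. -/
lemma NState.waste_tail (S : NState n C δ a pts E H w T) (hC : 0 < C) (hCn : C ≤ n) (hn : 0 < n)
    (hCn2 : 9 * C ^ 2 ≤ n)
    (hδ0 : 0 < δ) (hδ : δ ≤ 1) (ha : a ≤ 1) {θ : ℝ} (hθ0 : 0 < θ) (hθ : θ ≤ 1) {r l : ℝ}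
    (hl0 : 0 < l) (hl1 : l ≤ 1 / 6) (hl2 : l * 146 ≤ r) {Q : Finset P} (hQ : Q ∈ T) :
    Ex (fun i => θ * w i) H (fun t => if Ex (fun i => θ * w i) H (waste pts E Q) + r * n
        < waste pts E Q t then 1 else 0) ≤ Real.exp (-(l * r / 2 * n)) := by
  have hn0 : (0:ℝ) < n := by exact_mod_cast hn
  have hp := S.prob hCn hn hθ0 hθ
  set p : ι → ℝ := fun i => θ * w i with hpdef
  set Far := H.filter fun i => Disjoint (pts i) Q with hFar
  set Near := H.filter fun i => ¬ Disjoint (pts i) Q with hNear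
  have hFN : Far ∪ Near = H := Finset.filter_union_filter_not_eq _ _
  have hdis : Disjoint Far Near := Finset.disjoint_filter_filter_not _ _ _
  have hpF : ∀ i ∈ Far, 0 ≤ p i ∧ p i ≤ 1 := fun i hi => hp i (Finset.mem_filter.1 hi).1
  have hpN : ∀ i ∈ Near, 0 ≤ p i ∧ p i ≤ 1 := fun i hi => hp i (Finset.mem_filter.1 hi).1
  have hns : ∑ i ∈ Near, p i ≤ 2 * n := by
    have h1 := S.near_sum hδ0 hQ
    have h4 : a * n * (1 + δ) ≤ 1 * n * 2 := by gcongr; linarith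
    have h3 : 0 ≤ ∑ i ∈ Near, w i :=
      Finset.sum_nonneg fun i hi => S.wnn i (Finset.mem_filter.1 hi).1
    rw [hpdef, ← Finset.mul_sum]
    nlinarith
  have hfs : ∑ i ∈ Far, p i ≤ n ^ 2 := by
    have h1 : ∑ i ∈ Far, p i ≤ ∑ i ∈ H, p i :=
      Finset.sum_le_sum_of_subset_of_nonneg (Finset.filter_subset _ _) fun i hi _ => (hp i hi).1
    have h2 : ∑ i ∈ H, ((E ∩ pts i).card : ℝ) * p i = 3 * ∑ i ∈ H, p i := by
      rw [Finset.mul_sum]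
      refine Finset.sum_congr rfl fun i hi => ?_
      rw [Finset.inter_eq_right.2 (S.sub i hi), S.card i hi]; norm_num
    rw [← sum_inc] at h2
    have h3 : ∑ h ∈ E, ∑ i ∈ H with h ∈ pts i, p i ≤ ∑ h ∈ E, 2 := by
      refine Finset.sum_le_sum fun h hh => ?_
      rw [hpdef, ← Finset.mul_sum]
      have := S.wsum_le hδ hh
      nlinarith
    rw [Finset.sum_const, nsmul_eq_mul] at h3
    have := S.Ecard
    nlinarith [sq_nonneg (n:ℝ)]
  -- the increment caused by a near triple
  have hnear : ∀ j ∈ H, ∀ t, |waste pts E Q (insert j t) - waste pts E Q t| ≤ 6 := by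
    intro j hj t
    rw [waste_insert E Q (S.sub j hj)]
    rw [abs_of_nonneg (Finset.sum_nonneg fun h _ => sub_nonneg.2 (coll_insert_mono Q h j t))]
    refine (Finset.sum_le_card_nsmul _ _ 2 fun h _ => ?_).trans ?_
    · linarith [coll_insert_le (pts := pts) Q h j t]
    · rw [S.card j hj]; norm_num
  set X : Finset ι → ℝ := fun x => Ex p Near (fun y => waste pts E Q (x ∪ y)) with hX
  have st1 : ∀ x ⊆ Far, Ex p Near (fun y => Real.exp (l * waste pts E Q (x ∪ y)))
      ≤ Real.exp (l * X x + 72 * l ^ 2 * n) := by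
    intro x hx
    have := Ex_exp_le Near hpN (fun _ => 6 * l) (fun _ _ => by linarith)
      (fun y => l * waste pts E Q (x ∪ y)) (fun j hj y hy hjy => by
        rw [← mul_sub, abs_mul, abs_of_pos hl0, Finset.union_insert, mul_comm]
        exact mul_le_mul_of_nonneg_right (hnear j (Finset.mem_filter.1 hj).1 _) hl0.le)
    refine this.trans (Real.exp_le_exp.2 ?_)
    rw [Ex_mul, ← Finset.sum_mul]
    have : (∑ i ∈ Near, p i) * (6 * l) ^ 2 ≤ 2 * n * (6 * l) ^ 2 := by gcongr
    nlinarith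
  have hXinf : ∀ j ∈ Far, ∀ x ⊆ Far, j ∉ x → |X (insert j x) - X x| ≤ 3 * C / n := by
    intro j hj x hx hjx
    obtain ⟨hjH, hjQ⟩ := Finset.mem_filter.1 hj
    rw [hX]
    simp only
    rw [← Ex_sub]
    have hpos : ∀ y ⊆ Near, 0 ≤ waste pts E Q (insert j x ∪ y) - waste pts E Q (x ∪ y) := by
      intro y _
      rw [Finset.insert_union, waste_insert E Q (S.sub j hjH)]
      exact Finset.sum_nonneg fun h _ => sub_nonneg.2 (coll_insert_mono Q h j _)
    have hle : ∀ y ⊆ Near, waste pts E Q (insert j x ∪ y) - waste pts E Q (x ∪ y)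
        ≤ ∑ h ∈ pts j, ∑ i ∈ Near with h ∈ pts i, if i ∈ y then 1 else 0 := by
      intro y hy
      rw [Finset.insert_union, waste_insert E Q (S.sub j hjH)]
      refine Finset.sum_le_sum fun h _ => ?_
      have h1 := coll_insert_far (pts := pts) h hjQ (x ∪ y)
      have h2 : ((x ∪ y).filter fun i => ¬ Disjoint (pts i) Q ∧ h ∈ pts i)
          ⊆ (Near.filter fun i => h ∈ pts i).filter fun i => i ∈ y := by
        intro i hi
        simp only [Finset.mem_filter, Finset.mem_union] at hi ⊢
        obtain ⟨hi1 | hi1, hi2, hi3⟩ := hi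
        · exact absurd (Finset.mem_filter.1 (hx hi1)).2 hi2
        · exact ⟨⟨hy hi1, hi3⟩, hi1⟩
      have h3 : (((x ∪ y).filter fun i => ¬ Disjoint (pts i) Q ∧ h ∈ pts i).card : ℝ)
          ≤ ∑ i ∈ Near with h ∈ pts i, if i ∈ y then 1 else 0 := by
        rw [← Finset.sum_filter, Finset.sum_const, nsmul_eq_mul, mul_one]
        exact_mod_cast Finset.card_le_card h2
      linarith
    rw [abs_le]
    constructor
    · have := Ex_mono hpN hpos
      rw [Ex_const] at this
      have h0 : 0 ≤ 3 * C / n := by positivity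
      linarith
    · refine (Ex_mono hpN hle).trans ?_
      rw [Ex_sum]
      have : ∀ h ∈ pts j, Ex p Near (fun y => ∑ i ∈ Near with h ∈ pts i, if i ∈ y then 1 else 0)
          ≤ C / n := by
        intro h hh
        rw [Ex_sum]
        have hhQ : h ∉ Q := Finset.disjoint_left.1 hjQ hh
        have h1 := S.far Q hQ h (S.sub j hjH hh) hhQ
        have h2 : (Near.filter fun i => h ∈ pts i).card ≤ 1 := by
          refine le_trans (Finset.card_le_card ?_) h1
          intro i hi
          simp only [hNear, Finset.mem_filter] at hi ⊢
          tauto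
        refine (Finset.sum_le_card_nsmul _ _ (C / n) fun i hi => ?_).trans ?_
        · have hi' := (Finset.mem_filter.1 hi).1
          have hiH := (Finset.mem_filter.1 hi').1
          rw [Ex_mem_one hi']
          have a1 := S.wnn i hiH
          have a2 := S.wle i hiH
          simp only [hpdef]
          nlinarith
        · rw [nsmul_eq_mul]
          have h3 : ((Near.filter fun i => h ∈ pts i).card : ℝ) ≤ 1 := by exact_mod_cast h2
          have : 0 ≤ C / n := by positivity
          nlinarith
      refine (Finset.sum_le_card_nsmul _ _ _ this).trans (le_of_eq ?_)
      rw [S.card j hjH, nsmul_eq_mul]; push_cast; ring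
  have hCn9 : C ^ 2 / n ^ 2 * n ^ 2 = C ^ 2 := by field_simp
  have st2 : Ex p Far (fun x => Real.exp (l * X x)) ≤ Real.exp (l * Ex p Far X + l ^ 2 * n) := by
    have h3 : l * (3 * C / n) ≤ 1 := by
      have : C / n ≤ 1 := by rw [div_le_one hn0]; exact hCn
      have : l * (3 * C / n) = 3 * l * (C / n) := by ring
      rw [this]; nlinarith
    have := Ex_exp_le Far hpF (fun _ => l * (3 * C / n)) (fun _ _ => h3)
      (fun x => l * X x) (fun j hj x hx hjx => by
        rw [← mul_sub, abs_mul, abs_of_pos hl0]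
        exact mul_le_mul_of_nonneg_left (hXinf j hj x hx hjx) hl0.le)
    refine this.trans (Real.exp_le_exp.2 ?_)
    rw [Ex_mul, ← Finset.sum_mul]
    have h4 : (∑ i ∈ Far, p i) * (l * (3 * C / n)) ^ 2 ≤ n ^ 2 * (l * (3 * C / n)) ^ 2 := by gcongr
    have h5 : (n:ℝ) ^ 2 * (l * (3 * C / n)) ^ 2 = l ^ 2 * (9 * C ^ 2) := by field_simp; ring
    have : l ^ 2 * (9 * C ^ 2) ≤ l ^ 2 * n := by gcongr
    linarith
  have hExW : Ex p H (waste pts E Q) = Ex p Far X := by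
    rw [← hFN, Ex_union hdis]
  have main : Ex p H (fun t => Real.exp (l * waste pts E Q t))
      ≤ Real.exp (l * Ex p H (waste pts E Q) + 73 * l ^ 2 * n) := by
    rw [hExW]
    conv_lhs => rw [← hFN, Ex_union hdis]
    refine (Ex_mono hpF st1).trans ?_
    have e1 : (fun x => Real.exp (l * X x + 72 * l ^ 2 * n))
        = fun x => Real.exp (72 * l ^ 2 * n) * Real.exp (l * X x) := by
      funext x; rw [← Real.exp_add]; ring_nf
    rw [e1, Ex_mul]
    refine (mul_le_mul_of_nonneg_left st2 (Real.exp_pos _).le).trans (le_of_eq ?_)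
    rw [← Real.exp_add]; ring_nf
  refine (Ex_tail_of_exp H hp _ l _ (r * n) _ hl0 main).trans (Real.exp_le_exp.2 ?_)
  have : 0 < l * n := by positivity
  nlinarith

end

section
variable {ι P : Type} [DecidableEq ι] [DecidableEq P] {n : ℕ} {C δ a : ℝ}
  {pts : ι → Finset P} {E : Finset P} {H : Finset ι} {w : ι → ℝ} {T : Finset (Finset P)}

/-- The chosen triples which meet no other chosen triple. -/
def kept (pts : ι → Finset P) (t : Finset ι) : Finset ι :=
  t.filter fun i => ∀ j ∈ t, j ≠ i → Disjoint (pts i) (pts j)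

lemma NState.wasted_le (S : NState n C δ a pts E H w T) (Q : Finset P) {t : Finset ι} (ht : t ⊆ H) :
    ((((Q ∩ E) ∩ t.biUnion pts) \ (kept pts t).biUnion pts).card : ℝ) ≤ 3 * waste pts E Q t := by
  set Bad := t.filter fun i => ¬ Disjoint (pts i) Q ∧ i ∉ kept pts t with hBad
  have h1 : (((Q ∩ E) ∩ t.biUnion pts) \ (kept pts t).biUnion pts) ⊆ Bad.biUnion pts := by
    intro h hh
    simp only [Finset.mem_sdiff, Finset.mem_inter, Finset.mem_biUnion] at hh
    obtain ⟨⟨⟨hQ, hE⟩, i, hi, hhi⟩, hk⟩ := hh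
    rw [Finset.mem_biUnion]
    refine ⟨i, Finset.mem_filter.2 ⟨hi, Finset.not_disjoint_iff.2 ⟨h, hhi, hQ⟩, fun hki => hk ⟨i, hki, hhi⟩⟩, hhi⟩
  have h2 : (Bad.biUnion pts).card ≤ Bad.card * 3 :=
    Finset.card_biUnion_le_card_mul _ _ _ fun i hi =>
      (S.card i (ht (Finset.mem_filter.1 hi).1)).le
  have h3 : (Bad.card : ℝ) ≤ waste pts E Q t := by
    have e : waste pts E Q t = ∑ i ∈ t.filter (fun i => ¬ Disjoint (pts i) Q), ∑ h ∈ E,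
        if h ∈ pts i ∧ 2 ≤ (t.filter fun j => h ∈ pts j).card then 1 else 0 := by
      unfold waste
      rw [Finset.sum_comm]
      refine Finset.sum_congr rfl fun h _ => ?_
      unfold coll
      split_ifs with h2
      · simp only [h2, and_true]
        rw [← Finset.sum_filter, Finset.sum_const, nsmul_eq_mul, mul_one, Finset.filter_filter]
      · simp [h2]
    rw [e]
    have h4 : (Bad.card : ℝ) = ∑ i ∈ Bad, 1 := by simp
    rw [h4]
    refine le_trans (Finset.sum_le_sum fun i hi => ?_)
      (Finset.sum_le_sum_of_subset_of_nonneg (s := Bad) (fun i hi => ?_) fun i _ _ => ?_)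
    · obtain ⟨hit, _, hk⟩ := Finset.mem_filter.1 hi
      have : ∃ j ∈ t, j ≠ i ∧ ¬ Disjoint (pts i) (pts j) := by
        by_contra! hcon
        exact hk (Finset.mem_filter.2 ⟨hit, hcon⟩)
      obtain ⟨j, hj, hji, hd⟩ := this
      obtain ⟨h, hhi, hhj⟩ := Finset.not_disjoint_iff.1 hd
      have h5 : 2 ≤ (t.filter fun j => h ∈ pts j).card := by
        rw [← Finset.card_pair hji]
        refine Finset.card_le_card fun x hx => ?_
        simp only [Finset.mem_insert, Finset.mem_singleton] at hx
        rcases hx with rfl | rfl <;> simp [*]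
      have := Finset.single_le_sum (f := fun h => if h ∈ pts i ∧ 2 ≤ (t.filter fun j => h ∈ pts j).card
        then (1:ℝ) else 0) (s := E) (fun j _ => by split_ifs <;> norm_num) (S.sub i (ht hit) hhi)
      simpa [hhi, h5] using this
    · obtain ⟨hit, h6, hk⟩ := Finset.mem_filter.1 hi
      exact Finset.mem_filter.2 ⟨hit, h6⟩
    · exact Finset.sum_nonneg fun _ _ => by split_ifs <;> norm_num
  have h4 : ((((Q ∩ E) ∩ t.biUnion pts) \ (kept pts t).biUnion pts).card : ℝ) ≤ Bad.card * 3 := by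
    exact_mod_cast (Finset.card_le_card h1).trans h2
  linarith

lemma aliveN_eq (E Q : Finset P) {t : Finset ι} (ht : t ⊆ H) :
    aliveN pts H E Q t = ((Q ∩ (E \ t.biUnion pts)).card : ℝ) := by
  unfold aliveN
  rw [← Finset.sum_filter, Finset.sum_const, nsmul_eq_mul, mul_one]
  congr 2
  ext h
  simp only [Finset.mem_filter, Finset.mem_inter, Finset.mem_sdiff, Finset.mem_biUnion,
    Finset.disjoint_left]
  constructor
  · rintro ⟨⟨a, b⟩, c⟩
    exact ⟨a, b, fun ⟨j, hj, hh⟩ => c hj ⟨ht hj, hh⟩⟩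
  · rintro ⟨a, b, c⟩
    exact ⟨⟨a, b⟩, fun j hj hh => c ⟨j, hj, hh.2⟩⟩

lemma NState.survW_eq (S : NState n C δ a pts E H w T) {t : Finset ι} (ht : t ⊆ H) {e : P}
    (he : e ∈ E \ t.biUnion pts) :
    survW pts H w e t = ∑ i ∈ H.filter (fun i => pts i ⊆ E \ t.biUnion pts) with e ∈ pts i, w i := by
  unfold survW
  simp only [mul_ite, mul_one, mul_zero]
  rw [← Finset.sum_filter]
  refine Finset.sum_congr ?_ fun _ _ => rfl
  ext i
  simp only [Finset.mem_filter, Finset.mem_sdiff, Finset.mem_biUnion, Finset.disjoint_left,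
    meetOff, Finset.subset_iff] at he ⊢
  constructor
  · rintro ⟨⟨hi, hei⟩, h⟩
    refine ⟨⟨hi, fun g hg => ⟨S.sub i hi hg, ?_⟩⟩, hei⟩
    rintro ⟨j, hj, hgj⟩
    by_cases hge : g = e
    · exact he.2 ⟨j, hj, hge ▸ hgj⟩
    · exact h hj ⟨ht hj, g, hg, hge, hgj⟩
  · rintro ⟨⟨hi, h⟩, hei⟩
    refine ⟨⟨hi, hei⟩, ?_⟩
    rintro j hj ⟨_, g, hg, _, hgj⟩
    exact (h hg).2 ⟨j, hj, hgj⟩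

lemma NState.next (S : NState n C δ a pts E H w T) {θ δ' : ℝ} (hθ : θ ≤ 1 / 10)
    {t : Finset ι} (ht : t ⊆ H)
    (hsum : ∀ e ∈ E, |Real.exp (2 * θ) * survW pts H w e t - 1| ≤ δ')
    (hQ : ∀ Q ∈ T, aliveN pts H E Q t ≤ (1 - θ / 2) * a * n) :
    NState n (2 * C) δ' ((1 - θ / 2) * a) pts (E \ t.biUnion pts)
      (H.filter fun i => pts i ⊆ E \ t.biUnion pts) (fun i => Real.exp (2 * θ) * w i) T where
  sub i hi := (Finset.mem_filter.1 hi).2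
  card i hi := S.card i (Finset.mem_filter.1 hi).1
  lin i hi j hj := S.lin i (Finset.mem_filter.1 hi).1 j (Finset.mem_filter.1 hj).1
  wnn i hi := mul_nonneg (Real.exp_pos _).le (S.wnn i (Finset.mem_filter.1 hi).1)
  wle i hi := by
    have h1 := S.wnn i (Finset.mem_filter.1 hi).1
    have h2 := S.wle i (Finset.mem_filter.1 hi).1
    have h3 : Real.exp (2 * θ) ≤ 2 := by
      have := exp_le_of_small (x := 2 * θ) (d := 1 / 2) (by linarith) (by norm_num) (by norm_num)
      linarith
    rw [mul_div_assoc]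
    exact mul_le_mul h3 h2 h1 (by norm_num)
  sum e he := by
    rw [← Finset.mul_sum, ← S.survW_eq ht he]
    exact hsum e (Finset.mem_sdiff.1 he).1
  Ecard := le_trans (by exact_mod_cast Finset.card_le_card Finset.sdiff_subset) S.Ecard
  Tcard := S.Tcard
  Q Q hQT := by rw [← aliveN_eq E Q ht]; exact hQ Q hQT
  far Q hQT h hh hhQ := by
    refine le_trans (Finset.card_le_card ?_) (S.far Q hQT h (Finset.mem_sdiff.1 hh).1 hhQ)
    exact Finset.filter_subset_filter _ (Finset.filter_subset _ _)

/-- The union of the isolated chosen triples with a matching of the surviving system. -/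
lemma NState.combine (S : NState n C δ a pts E H w T) {t : Finset ι} (ht : t ⊆ H)
    {M : Finset ι} (hM : M ⊆ H.filter fun i => pts i ⊆ E \ t.biUnion pts)
    (hd : ∀ i ∈ M, ∀ j ∈ M, i ≠ j → Disjoint (pts i) (pts j)) :
    kept pts t ∪ M ⊆ H ∧
    (∀ i ∈ kept pts t ∪ M, ∀ j ∈ kept pts t ∪ M, i ≠ j → Disjoint (pts i) (pts j)) ∧
    ∀ Q : Finset P, (((Q ∩ E) \ (kept pts t ∪ M).biUnion pts).card : ℝ)
      ≤ ((Q ∩ (E \ t.biUnion pts)) \ M.biUnion pts).card + 3 * waste pts E Q t := by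
  have hcross : ∀ i ∈ kept pts t, ∀ j ∈ M, Disjoint (pts i) (pts j) := by
    intro i hi j hj
    rw [Finset.disjoint_left]
    intro x hx hxj
    have := (Finset.mem_sdiff.1 ((Finset.mem_filter.1 (hM hj)).2 hxj)).2
    exact this (Finset.mem_biUnion.2 ⟨i, (Finset.mem_filter.1 hi).1, hx⟩)
  refine ⟨?_, ?_, ?_⟩
  · exact Finset.union_subset ((Finset.filter_subset _ _).trans ht)
      (hM.trans (Finset.filter_subset _ _))
  · intro i hi j hj hij
    rcases Finset.mem_union.1 hi with hi | hi <;> rcases Finset.mem_union.1 hj with hj | hj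
    · exact (Finset.mem_filter.1 hi).2 j (Finset.mem_filter.1 hj).1 hij.symm
    · exact hcross i hi j hj
    · exact (hcross j hj i hi).symm
    · exact hd i hi j hj hij
  · intro Q
    have hsub : (Q ∩ E) \ (kept pts t ∪ M).biUnion pts ⊆
        ((Q ∩ (E \ t.biUnion pts)) \ M.biUnion pts)
        ∪ (((Q ∩ E) ∩ t.biUnion pts) \ (kept pts t).biUnion pts) := by
      intro h
      simp only [Finset.mem_sdiff, Finset.mem_inter, Finset.mem_union, Finset.union_biUnion]
      tauto
    have h1 := S.wasted_le Q ht
    have h2 : (((Q ∩ E) \ (kept pts t ∪ M).biUnion pts).card : ℝ)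
      ≤ ((Q ∩ (E \ t.biUnion pts)) \ M.biUnion pts).card
        + (((Q ∩ E) ∩ t.biUnion pts) \ (kept pts t).biUnion pts).card := by
      exact_mod_cast (Finset.card_le_card hsub).trans (Finset.card_union_le _ _)
    linarith

end

/-- Every sufficiently regular system with test sets of density `a` has a matching leaving at most a
density `ℓ` of every test set uncovered. -/
def NibbleTo (a ℓ : ℝ) : Prop :=
  ∀ C : ℝ, 0 < C → ∃ δ : ℝ, 0 < δ ∧ ∃ N₀ : ℕ, ∀ (ι P : Type) [DecidableEq ι] [DecidableEq P]
    (n : ℕ) (pts : ι → Finset P) (E : Finset P) (H : Finset ι) (w : ι → ℝ)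
    (T : Finset (Finset P)), N₀ ≤ n → NState n C δ a pts E H w T →
    ∃ M ⊆ H, (∀ i ∈ M, ∀ j ∈ M, i ≠ j → Disjoint (pts i) (pts j)) ∧
      ∀ Q ∈ T, (((Q ∩ E) \ M.biUnion pts).card : ℝ) ≤ ℓ * n

lemma nibbleTo_self (a : ℝ) : NibbleTo a a := fun C _ =>
  ⟨1, one_pos, 0, fun ι P _ _ n pts E H w T _ S => ⟨∅, by simp, by simp, fun Q hQ => by
    simpa using S.Q Q hQ⟩⟩

/-- One bite of the nibble. -/
lemma nibble_bite {a ℓ θ : ℝ} (ha0 : 0 < a) (ha : a ≤ 1) (hθ0 : 0 < θ) (hθ : θ ≤ 1 / 10)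
    (h : NibbleTo ((1 - θ / 2) * a) ℓ) : NibbleTo a (ℓ + 15 * θ ^ 2) := by
  intro C hC
  obtain ⟨δ₁, hδ₁, N₁, hN₁⟩ := h (2 * C) (by positivity)
  set δ' := min δ₁ 1 with hδ'
  have hδ'0 : 0 < δ' := lt_min hδ₁ one_pos
  have hδ'1 : δ' ≤ 1 := min_le_right _ _
  set δ := δ' / 8 with hδ
  have hδ0 : 0 < δ := by positivity
  have hδ8 : δ ≤ 1 / 8 := by rw [hδ]; linarith
  -- deviations tolerated in the three tests, and a common exponent
  set r₁ := δ' / 4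
  set r₂ := θ * a / 4
  set r₃ := θ ^ 2
  have hr₁ : 0 < r₁ := by positivity
  have hr₂ : 0 < r₂ := by positivity
  have hr₃ : 0 < r₃ := by positivity
  obtain ⟨l₁, hl₁0, hl₁1, hl₁2⟩ : ∃ l : ℝ, 0 < l ∧ l * (3 * C) ≤ 1 ∧ l * (72 * C) ≤ r₁ := by
    refine ⟨min (1 / (3 * C)) (r₁ / (72 * C)), by positivity, ?_, ?_⟩
    · rw [← le_div_iff₀ (by positivity)]; exact min_le_left _ _
    · rw [← le_div_iff₀ (by positivity)]; exact min_le_right _ _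
  obtain ⟨l₂, hl₂0, hl₂1, hl₂2⟩ : ∃ l : ℝ, 0 < l ∧ l ≤ 1 / 3 ∧ l * 36 ≤ r₂ := by
    refine ⟨min (1 / 3) (r₂ / 36), by positivity, min_le_left _ _, ?_⟩
    rw [← le_div_iff₀ (by positivity)]; exact min_le_right _ _
  obtain ⟨l₃, hl₃0, hl₃1, hl₃2⟩ : ∃ l : ℝ, 0 < l ∧ l ≤ 1 / 6 ∧ l * 146 ≤ r₃ := by
    refine ⟨min (1 / 6) (r₃ / 146), by positivity, min_le_left _ _, ?_⟩
    rw [← le_div_iff₀ (by positivity)]; exact min_le_right _ _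
  set c := min (l₁ * r₁ / 2) (min (l₂ * r₂ / 2) (l₃ * r₃ / 2)) with hc
  have hc0 : 0 < c := by positivity
  obtain ⟨N₂, hN₂⟩ := eventually_sq_mul_exp_lt 4 c 1 hc0 one_pos
  obtain ⟨N₃, hN₃⟩ := exists_nat_ge (10 * C / δ + C + 9 * C ^ 2 + 1)
  refine ⟨δ, hδ0, max N₁ (max N₂ N₃), fun ι P _ _ n pts E H w T hn S => ?_⟩
  have hn1 : N₁ ≤ n := (le_max_left _ _).trans hn
  have hn2 : N₂ ≤ n := ((le_max_left _ _).trans (le_max_right _ _)).trans hn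
  have hn3 : N₃ ≤ n := ((le_max_right _ _).trans (le_max_right _ _)).trans hn
  have hn4 : 10 * C / δ + C + 9 * C ^ 2 + 1 ≤ (n:ℝ) := hN₃.trans (by exact_mod_cast hn3)
  have g1 : 0 ≤ 10 * C / δ := by positivity
  have g2 : 0 ≤ 9 * C ^ 2 := by positivity
  have hnR : (1:ℝ) ≤ n := by linarith
  have hnpos : 0 < n := by exact_mod_cast (by linarith : (0:ℝ) < n)
  have hCn : C ≤ n := by linarith
  have hCn2 : 9 * C ^ 2 ≤ n := by linarith
  have hCδ : 10 * C ≤ δ * n := by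
    have : 10 * C / δ ≤ n := by linarith
    rw [div_le_iff₀ hδ0] at this; linarith
  have hp := S.prob hCn hnpos hθ0 (by linarith)
  set p : ι → ℝ := fun i => θ * w i with hpdef
  have hexp : ∀ x, c ≤ x → Real.exp (-(x * n)) ≤ Real.exp (-(c * n)) := fun x hx =>
    Real.exp_le_exp.2 (by nlinarith)
  have tE := fun e (he : e ∈ E) => S.survW_tail hC hCn hnpos (by linarith) hθ0 (by linarith)
    hl₁0 hl₁1 hl₁2 he
  have tA := fun Q (hQ : Q ∈ T) => S.aliveN_tail hCn hnpos hδ0 (by linarith) ha hθ0 (by linarith)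
    hl₂0 hl₂1 hl₂2 hQ
  have tW := fun Q (hQ : Q ∈ T) => S.waste_tail hC hCn hnpos hCn2 hδ0 (by linarith) ha hθ0
    (by linarith) hl₃0 hl₃1 hl₃2 hQ
  set x := Real.exp (-(c * n)) with hx
  have hx0 : 0 < x := Real.exp_pos _
  have hEx : Ex p H (fun t =>
      (∑ e ∈ E, ((if Ex p H (survW pts H w e) + r₁ < survW pts H w e t then 1 else 0)
        + (if survW pts H w e t < Ex p H (survW pts H w e) - r₁ then 1 else 0)))
      + ∑ Q ∈ T, ((if Ex p H (aliveN pts H E Q) + r₂ * n < aliveN pts H E Q t then 1 else 0)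
        + (if Ex p H (waste pts E Q) + r₃ * n < waste pts E Q t then 1 else 0))) < 1 := by
    rw [Ex_add, Ex_sum, Ex_sum]
    have b1 : ∑ e ∈ E, Ex p H (fun t =>
        (if Ex p H (survW pts H w e) + r₁ < survW pts H w e t then 1 else 0)
        + (if survW pts H w e t < Ex p H (survW pts H w e) - r₁ then 1 else 0)) ≤ E.card * (2 * x) := by
      rw [← nsmul_eq_mul]
      refine Finset.sum_le_card_nsmul _ _ _ fun e he => ?_
      rw [Ex_add]
      have h1 := (tE e he).1.trans (hexp _ (min_le_left _ _))
      have h2 := (tE e he).2.trans (hexp _ (min_le_left _ _))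
      linarith
    have b2 : ∑ Q ∈ T, Ex p H (fun t =>
        (if Ex p H (aliveN pts H E Q) + r₂ * n < aliveN pts H E Q t then 1 else 0)
        + (if Ex p H (waste pts E Q) + r₃ * n < waste pts E Q t then 1 else 0)) ≤ T.card * (2 * x) := by
      rw [← nsmul_eq_mul]
      refine Finset.sum_le_card_nsmul _ _ _ fun Q hQ => ?_
      rw [Ex_add]
      have h1 := (tA Q hQ).trans (hexp _ ((min_le_right _ _).trans (min_le_left _ _)))
      have h2 := (tW Q hQ).trans (hexp _ ((min_le_right _ _).trans (min_le_right _ _)))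
      linarith
    have b3 : (E.card : ℝ) * (2 * x) ≤ n ^ 2 * (2 * x) := by
      have := S.Ecard; gcongr
    have b4 : (T.card : ℝ) * (2 * x) ≤ n ^ 2 * (2 * x) := by
      have := S.Tcard
      have : (n:ℝ) ≤ n ^ 2 := by nlinarith
      gcongr; linarith
    have := hN₂ n hn2
    linarith
  obtain ⟨t, ht, hgood⟩ := Ex_exists H hp _ hEx
  -- a sum of nonnegative integers below `1` vanishes, so no test fails at `t`
  have ind_nn : ∀ q : Prop, [Decidable q] → (0:ℝ) ≤ if q then 1 else 0 := fun q _ => by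
    split_ifs <;> norm_num
  have sE := Finset.sum_nonneg (s := E) (f := fun e =>
    ((if Ex p H (survW pts H w e) + r₁ < survW pts H w e t then (1:ℝ) else 0)
        + (if survW pts H w e t < Ex p H (survW pts H w e) - r₁ then 1 else 0)))
    fun e _ => add_nonneg (ind_nn _) (ind_nn _)
  have sT := Finset.sum_nonneg (s := T) (f := fun Q =>
    ((if Ex p H (aliveN pts H E Q) + r₂ * n < aliveN pts H E Q t then (1:ℝ) else 0)
        + (if Ex p H (waste pts E Q) + r₃ * n < waste pts E Q t then 1 else 0)))
    fun e _ => add_nonneg (ind_nn _) (ind_nn _)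
  have gE : ∀ e ∈ E, |survW pts H w e t - Ex p H (survW pts H w e)| ≤ r₁ := by
    intro e he
    have := Finset.single_le_sum (f := fun e =>
      ((if Ex p H (survW pts H w e) + r₁ < survW pts H w e t then (1:ℝ) else 0)
        + (if survW pts H w e t < Ex p H (survW pts H w e) - r₁ then 1 else 0)))
      (fun e _ => add_nonneg (ind_nn _) (ind_nn _)) he
    have h1 := this.trans_lt (by linarith : _ < (1:ℝ))
    rw [abs_le]
    constructor
    · by_contra hcon
      rw [if_pos (show survW pts H w e t < Ex p H (survW pts H w e) - r₁ by linarith)] at h1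
      linarith [ind_nn (Ex p H (survW pts H w e) + r₁ < survW pts H w e t)]
    · by_contra hcon
      rw [if_pos (show Ex p H (survW pts H w e) + r₁ < survW pts H w e t by linarith)] at h1
      linarith [ind_nn (survW pts H w e t < Ex p H (survW pts H w e) - r₁)]
  have gT : ∀ Q ∈ T, aliveN pts H E Q t ≤ Ex p H (aliveN pts H E Q) + r₂ * n ∧
      waste pts E Q t ≤ Ex p H (waste pts E Q) + r₃ * n := by
    intro Q hQ
    have := Finset.single_le_sum (f := fun Q =>
      ((if Ex p H (aliveN pts H E Q) + r₂ * n < aliveN pts H E Q t then (1:ℝ) else 0)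
        + (if Ex p H (waste pts E Q) + r₃ * n < waste pts E Q t then 1 else 0)))
      (fun e _ => add_nonneg (ind_nn _) (ind_nn _)) hQ
    have h1 := this.trans_lt (by linarith : _ < (1:ℝ))
    constructor
    · by_contra hcon
      rw [if_pos (not_le.1 hcon)] at h1
      linarith [ind_nn (Ex p H (waste pts E Q) + r₃ * n < waste pts E Q t)]
    · by_contra hcon
      rw [if_pos (not_le.1 hcon)] at h1
      linarith [ind_nn (Ex p H (aliveN pts H E Q) + r₂ * n < aliveN pts H E Q t)]
  have hexp2 : Real.exp (2 * θ) ≤ 2 := by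
    have := exp_le_of_small (x := 2 * θ) (d := 1 / 2) (by linarith) (by norm_num) (by norm_num)
    linarith
  have S' := S.next (δ' := δ₁) hθ ht (fun e he => by
    have h1 := S.Ex_survW hδ0 hδ8 hθ0 hθ hC hCδ he
    have h2 := gE e he
    have h3 : |Real.exp (2 * θ) * survW pts H w e t
        - Real.exp (2 * θ) * Ex p H (survW pts H w e)| ≤ 2 * r₁ := by
      rw [← mul_sub, abs_mul, abs_of_pos (Real.exp_pos _)]
      exact mul_le_mul hexp2 h2 (abs_nonneg _) (by norm_num)
    have h4 := abs_add_le (Real.exp (2 * θ) * survW pts H w e t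
        - Real.exp (2 * θ) * Ex p H (survW pts H w e))
        (Real.exp (2 * θ) * Ex p H (survW pts H w e) - 1)
    rw [sub_add_sub_cancel] at h4
    have h5 : 2 * r₁ + 4 * δ = δ' := by simp only [r₁, hδ]; ring
    have h6 : δ' ≤ δ₁ := min_le_left _ _
    linarith) (fun Q hQ => by
    have h1 := S.Ex_aliveN hCn hnpos hδ0 hδ8 hθ0 hθ hQ
    have h2 := (gT Q hQ).1
    have h3 : (1 - 3 / 4 * θ) * (a * n) + r₂ * n = (1 - θ / 2) * a * n := by
      simp only [r₂]; ring
    linarith)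
  obtain ⟨M, hM, hMd, hMQ⟩ := hN₁ ι P n pts _ _ _ T hn1 S'
  obtain ⟨k1, k2, k3⟩ := S.combine ht hM hMd
  refine ⟨_, k1, k2, fun Q hQ => (k3 Q).trans ?_⟩
  have h1 := hMQ Q hQ
  have h2 := (gT Q hQ).2
  have h3 := S.Ex_waste hCn hnpos hδ0 hδ8 ha hθ0 (by linarith) hQ
  have h4 : r₃ * n = θ ^ 2 * n := rfl
  nlinarith

lemma nibble_iterate {θ : ℝ} (hθ0 : 0 < θ) (hθ : θ ≤ 1 / 10) (K : ℕ) {a : ℝ} (ha0 : 0 < a)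
    (ha : a ≤ 1) : NibbleTo a ((1 - θ / 2) ^ K * a + K * (15 * θ ^ 2)) := by
  induction K generalizing a with
  | zero => simpa using nibbleTo_self a
  | succ K ih =>
    have h1 : 0 < (1 - θ / 2) * a := mul_pos (by linarith) ha0
    have h2 : (1 - θ / 2) * a ≤ 1 := by nlinarith
    have := nibble_bite ha0 ha hθ0 hθ (ih h1 h2)
    convert this using 1
    push_cast; ring

lemma NibbleTo.mono {a ℓ ℓ' : ℝ} (h : NibbleTo a ℓ) (hl : ℓ ≤ ℓ') : NibbleTo a ℓ' := by
  intro C hC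
  obtain ⟨δ, hδ, N, hN⟩ := h C hC
  refine ⟨δ, hδ, N, fun ι P _ _ n pts E H w T hn S => ?_⟩
  obtain ⟨M, a, b, c⟩ := hN ι P n pts E H w T hn S
  exact ⟨M, a, b, fun Q hQ => (c Q hQ).trans (by gcongr)⟩

/-- With bites of size `θ = 1/s²` repeated `s³` times, the surviving density is `exp(-s/2)` and the
accumulated waste is `15/s`. -/
theorem nibble (η : ℝ) (hη : 0 < η) : NibbleTo 1 η := by
  obtain ⟨s, hs⟩ := exists_nat_ge (32 / η + 4)
  have hs0 : (4:ℝ) ≤ s := by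
    have : 0 ≤ 32 / η := by positivity
    linarith
  have hsη : 32 ≤ s * η := by
    have : 32 / η ≤ s := by linarith
    rwa [div_le_iff₀ hη] at this
  have hspos : (0:ℝ) < s := by linarith
  have hθ : (1:ℝ) / s ^ 2 ≤ 1 / 10 := by
    apply one_div_le_one_div_of_le (by norm_num); nlinarith
  have h := nibble_iterate (θ := 1 / (s:ℝ) ^ 2) (by positivity) hθ (s ^ 3) one_pos le_rfl
  refine h.mono ?_
  have e1 : ((s ^ 3 : ℕ) : ℝ) * (15 * (1 / (s:ℝ) ^ 2) ^ 2) = 15 / s := by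
    push_cast; field_simp
  have e2 : (1 - 1 / (s:ℝ) ^ 2 / 2) ^ (s ^ 3) ≤ 2 / s := by
    have h1 : 1 - 1 / (s:ℝ) ^ 2 / 2 ≤ Real.exp (-(1 / (s:ℝ) ^ 2 / 2)) := by
      linarith [Real.add_one_le_exp (-(1 / (s:ℝ) ^ 2 / 2))]
    refine (pow_le_pow_left₀ (by linarith) h1 _).trans ?_
    rw [← Real.exp_nat_mul]
    have e3 : ((s ^ 3 : ℕ) : ℝ) * (-(1 / (s:ℝ) ^ 2 / 2)) = -(s / 2) := by
      push_cast; field_simp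
    rw [e3, Real.exp_neg]
    have h2 : (s:ℝ) / 2 ≤ Real.exp (s / 2) := by linarith [Real.add_one_le_exp ((s:ℝ) / 2)]
    calc (Real.exp (s / 2))⁻¹ ≤ ((s:ℝ) / 2)⁻¹ := inv_anti₀ (by positivity) h2
      _ = 2 / s := by rw [inv_div]
  rw [e1, mul_one]
  have e4 : 2 / (s:ℝ) + 15 / s ≤ η := by
    rw [← add_div, div_le_iff₀ hspos]; linarith
  linarith

/-! ### Fractional triangle decompositions -/

lemma integral_Ico_one (u v : ℝ) :
    MeasureTheory.Integrable (Set.indicator (Set.Ico v u) (fun _ => (1:ℝ))) ∧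
    ∫ θ, Set.indicator (Set.Ico v u) (fun _ => (1:ℝ)) θ = max (u - v) 0 := by
  constructor
  · rw [MeasureTheory.integrable_indicator_iff measurableSet_Ico]
    exact MeasureTheory.integrableOn_const (by simp) (by simp)
  · rw [MeasureTheory.integral_indicator measurableSet_Ico]
    simp [MeasureTheory.measureReal_def, Real.volume_Ico, ENNReal.toReal_ofReal']

/-- Threshold form of the next inequality; `s` is the indicator of a superlevel set. -/
lemma coarea_threshold {α : Type} [Fintype α] (μ s : α → ℝ) (r : α → α → ℝ)
    (hμ : ∀ e, 0 ≤ μ e) (hr0 : ∀ e g, 0 ≤ r e g) (hr1 : ∀ e g, r e g ≤ 1)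
    (hs0 : ∀ e, 0 ≤ s e) (hs1 : ∀ e, s e ≤ 1) :
    ∑ e₁, ∑ e₂, ∑ g, μ e₁ * μ e₂ * μ g * r e₁ g * r g e₂ * (s e₁ * (1 - s e₂))
      ≤ (∑ g, μ g) * ∑ e, ∑ g, μ e * μ g * r e g * (s e * (1 - s g)) := by
  have h1 : ∀ e₁ e₂ g, μ e₁ * μ e₂ * μ g * r e₁ g * r g e₂ * (s e₁ * (1 - s e₂))
      ≤ (μ e₁ * s e₁) * (μ g * μ e₂ * r g e₂ * (s g * (1 - s e₂)))
        + (μ e₂ * (1 - s e₂)) * (μ e₁ * μ g * r e₁ g * (s e₁ * (1 - s g))) := by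
    intro e₁ e₂ g
    have hm : 0 ≤ μ e₁ * μ e₂ * μ g * (s e₁ * (1 - s e₂)) :=
      mul_nonneg (mul_nonneg (mul_nonneg (hμ _) (hμ _)) (hμ _))
        (mul_nonneg (hs0 _) (by linarith [hs1 e₂]))
    have : r e₁ g * r g e₂ ≤ r g e₂ * s g + r e₁ g * (1 - s g) := by
      have a1 := hr0 e₁ g; have a2 := hr0 g e₂; have a3 := hr1 e₁ g; have a4 := hr1 g e₂
      have a5 := hs0 g; have a6 := hs1 g
      have b1 : r e₁ g * r g e₂ * s g ≤ r g e₂ * s g := by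
        have := mul_nonneg a2 a5; nlinarith
      have b2 : r e₁ g * r g e₂ * (1 - s g) ≤ r e₁ g * (1 - s g) := by
        have := mul_nonneg a1 (by linarith : 0 ≤ 1 - s g); nlinarith
      linarith
    have := mul_le_mul_of_nonneg_left this hm
    nlinarith
  have h2 := Finset.sum_le_sum fun e₁ (_ : e₁ ∈ Finset.univ) =>
    Finset.sum_le_sum fun e₂ (_ : e₂ ∈ Finset.univ) =>
    Finset.sum_le_sum fun g (_ : g ∈ Finset.univ) => h1 e₁ e₂ g
  refine h2.trans (le_of_eq ?_)
  simp only [Finset.sum_add_distrib]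
  have e1 : ∑ e₁, ∑ e₂, ∑ g, (μ e₁ * s e₁) * (μ g * μ e₂ * r g e₂ * (s g * (1 - s e₂)))
      = (∑ e, μ e * s e) * ∑ e, ∑ g, μ e * μ g * r e g * (s e * (1 - s g)) := by
    simp only [← Finset.mul_sum]
    rw [← Finset.sum_mul, Finset.sum_comm (f := fun e₂ g => μ g * μ e₂ * r g e₂ * (s g * (1 - s e₂)))]
  have e2 : ∑ e₁, ∑ e₂, ∑ g, (μ e₂ * (1 - s e₂)) * (μ e₁ * μ g * r e₁ g * (s e₁ * (1 - s g)))
      = (∑ e, μ e * (1 - s e)) * ∑ e, ∑ g, μ e * μ g * r e g * (s e * (1 - s g)) := by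
    rw [Finset.sum_comm]
    simp only [← Finset.mul_sum]
    rw [← Finset.sum_mul]
  rw [e1, e2, ← add_mul, ← Finset.sum_add_distrib]
  congr 1
  exact Finset.sum_congr rfl fun e _ => by ring

/-- A path `e₁, g, e₂` descending in `y` costs no more, on average, than the total mass of single
descending steps. Proved one threshold at a time. -/
lemma coarea {α : Type} [Fintype α] (μ y : α → ℝ) (r : α → α → ℝ)
    (hμ : ∀ e, 0 ≤ μ e) (hr0 : ∀ e g, 0 ≤ r e g) (hr1 : ∀ e g, r e g ≤ 1) :
    ∑ e₁, ∑ e₂, ∑ g, μ e₁ * μ e₂ * μ g * r e₁ g * r g e₂ * max (y e₁ - y e₂) 0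
      ≤ (∑ g, μ g) * ∑ e, ∑ g, μ e * μ g * r e g * max (y e - y g) 0 := by
  set I : α → α → ℝ → ℝ := fun e g => Set.indicator (Set.Ico (y g) (y e)) (fun _ => (1:ℝ)) with hI
  have hIint : ∀ e g, MeasureTheory.Integrable (I e g) := fun e g => (integral_Ico_one _ _).1
  have hval : ∀ e g, ∫ θ, I e g θ = max (y e - y g) 0 := fun e g => (integral_Ico_one _ _).2
  have hL : ∑ e₁, ∑ e₂, ∑ g, μ e₁ * μ e₂ * μ g * r e₁ g * r g e₂ * max (y e₁ - y e₂) 0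
      = ∫ θ, ∑ e₁, ∑ e₂, ∑ g, μ e₁ * μ e₂ * μ g * r e₁ g * r g e₂ * I e₁ e₂ θ := by
    rw [MeasureTheory.integral_finsetSum _ fun e₁ _ => MeasureTheory.integrable_finsetSum _
      fun e₂ _ => MeasureTheory.integrable_finsetSum _ fun g _ => (hIint e₁ e₂).const_mul _]
    refine Finset.sum_congr rfl fun e₁ _ => ?_
    rw [MeasureTheory.integral_finsetSum _ fun e₂ _ => MeasureTheory.integrable_finsetSum _
      fun g _ => (hIint e₁ e₂).const_mul _]
    refine Finset.sum_congr rfl fun e₂ _ => ?_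
    rw [MeasureTheory.integral_finsetSum _ fun g _ => (hIint e₁ e₂).const_mul _]
    refine Finset.sum_congr rfl fun g _ => ?_
    rw [MeasureTheory.integral_const_mul, hval]
  have hR : (∑ g, μ g) * ∑ e, ∑ g, μ e * μ g * r e g * max (y e - y g) 0
      = ∫ θ, (∑ g, μ g) * ∑ e, ∑ g, μ e * μ g * r e g * I e g θ := by
    rw [MeasureTheory.integral_const_mul]
    congr 1
    rw [MeasureTheory.integral_finsetSum _ fun e₁ _ => MeasureTheory.integrable_finsetSum _
      fun e₂ _ => (hIint e₁ e₂).const_mul _]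
    refine Finset.sum_congr rfl fun e₁ _ => ?_
    rw [MeasureTheory.integral_finsetSum _ fun e₂ _ => (hIint e₁ e₂).const_mul _]
    refine Finset.sum_congr rfl fun e₂ _ => ?_
    rw [MeasureTheory.integral_const_mul, hval]
  rw [hL, hR]
  refine MeasureTheory.integral_mono ?_ ?_ fun θ => ?_
  · exact MeasureTheory.integrable_finsetSum _ fun e₁ _ => MeasureTheory.integrable_finsetSum _
      fun e₂ _ => MeasureTheory.integrable_finsetSum _ fun g _ => (hIint e₁ e₂).const_mul _
  · exact (MeasureTheory.integrable_finsetSum _ fun e₁ _ => MeasureTheory.integrable_finsetSum _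
      fun e₂ _ => (hIint e₁ e₂).const_mul _).const_mul _
  · set s : α → ℝ := fun e => if θ < y e then 1 else 0 with hs
    have hIs : ∀ e g, I e g θ = s e * (1 - s g) := by
      intro e g
      simp only [hI, hs, Set.indicator, Set.mem_Ico]
      by_cases h1 : θ < y e <;> by_cases h2 : θ < y g <;> simp [h1, h2, not_le.2, not_lt.1]
    simp only [hIs]
    exact coarea_threshold μ s r hμ hr0 hr1 (fun e => by simp only [hs]; split_ifs <;> norm_num)
      (fun e => by simp only [hs]; split_ifs <;> norm_num)

/-- A symmetric `0`/`1` matrix in which every row has at most `0.1 n` zeros; it plays the role of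
the adjacency matrix of a graph of minimum degree at least `0.9 n`. -/
structure DenseMat {V : Type} [Fintype V] (A : V → V → ℝ) : Prop where
  h01 : ∀ a b, A a b = 0 ∨ A a b = 1
  symm : ∀ a b, A a b = A b a
  row : ∀ a, ∑ b, (1 - A a b) ≤ 0.1 * (Fintype.card V : ℝ)

section dense
variable {V : Type} [Fintype V]

/-- Number of common neighbours of a pair. -/
def tt (A : V → V → ℝ) (a b : V) : ℝ := ∑ c, A a c * A b c

/-- Number of common neighbours of a triple. -/
def n3 (A : V → V → ℝ) (a b c : V) : ℝ := ∑ d, A a d * A b d * A c d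

/-- Total base weight `3n - n3` of the triangles containing a pair. -/
def tw (A : V → V → ℝ) (a b : V) : ℝ :=
  ∑ c, A a c * A b c * (3 * (Fintype.card V : ℝ) - n3 A a b c)

/-- The indicator that all four pairs between two pairs of vertices are edges. -/
def rr (A : V → V → ℝ) (p q : V × V) : ℝ :=
  A p.1 q.1 * A p.1 q.2 * (A p.2 q.1 * A p.2 q.2)

lemma DenseMat.nonneg {A : V → V → ℝ} (h : DenseMat A) (a b : V) : 0 ≤ A a b := by
  rcases h.h01 a b with h | h <;> simp [h]

lemma DenseMat.le_one {A : V → V → ℝ} (h : DenseMat A) (a b : V) : A a b ≤ 1 := by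
  rcases h.h01 a b with h | h <;> simp [h]

lemma DenseMat.drop {A : V → V → ℝ} (h : DenseMat A) (a : V) (f : V → ℝ) (f1 : ∀ x, f x ≤ 1) :
    ∑ x, f x - 0.1 * (Fintype.card V : ℝ) ≤ ∑ x, f x * A a x := by
  have h1 : ∑ x, f x - ∑ x, f x * A a x ≤ ∑ x, (1 - A a x) := by
    rw [← Finset.sum_sub_distrib]
    refine Finset.sum_le_sum fun x _ => ?_
    nlinarith [f1 x, h.le_one a x]
  linarith [h.row a]

lemma DenseMat.le_drop {A : V → V → ℝ} (h : DenseMat A) (a : V) (f : V → ℝ) (f0 : ∀ x, 0 ≤ f x) :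
    ∑ x, f x * A a x ≤ ∑ x, f x :=
  Finset.sum_le_sum fun x _ => mul_le_of_le_one_right (f0 x) (h.le_one a x)

lemma DenseMat.row_ge {A : V → V → ℝ} (h : DenseMat A) (a : V) :
    0.9 * (Fintype.card V : ℝ) ≤ ∑ b, A a b := by
  have := h.drop a (fun _ => 1) (fun _ => le_rfl)
  simp at this
  linarith

lemma DenseMat.tt_ge {A : V → V → ℝ} (h : DenseMat A) (a b : V) :
    0.8 * (Fintype.card V : ℝ) ≤ tt A a b := by
  have := h.drop b (fun x => A a x) (fun x => h.le_one a x)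
  have := h.row_ge a
  unfold tt
  linarith

lemma DenseMat.tt_le {A : V → V → ℝ} (h : DenseMat A) (a b : V) :
    tt A a b ≤ (Fintype.card V : ℝ) := by
  unfold tt
  calc ∑ c, A a c * A b c ≤ ∑ c : V, (1:ℝ) := Finset.sum_le_sum fun x _ =>
        mul_le_one₀ (h.le_one _ _) (h.nonneg _ _) (h.le_one _ _)
    _ = _ := by simp

lemma DenseMat.n3_ge {A : V → V → ℝ} (h : DenseMat A) (a b c : V) :
    tt A a b - 0.1 * (Fintype.card V : ℝ) ≤ n3 A a b c :=
  h.drop c (fun x => A a x * A b x)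
    (fun _ => mul_le_one₀ (h.le_one _ _) (h.nonneg _ _) (h.le_one _ _))

lemma DenseMat.n3_le {A : V → V → ℝ} (h : DenseMat A) (a b c : V) :
    n3 A a b c ≤ tt A a b :=
  h.le_drop c (fun x => A a x * A b x) (fun _ => mul_nonneg (h.nonneg _ _) (h.nonneg _ _))

lemma DenseMat.n3_nonneg {A : V → V → ℝ} (h : DenseMat A) (a b c : V) : 0 ≤ n3 A a b c :=
  Finset.sum_nonneg fun _ _ => mul_nonneg (mul_nonneg (h.nonneg _ _) (h.nonneg _ _)) (h.nonneg _ _)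

lemma DenseMat.tw_le {A : V → V → ℝ} (h : DenseMat A) (a b : V) :
    tw A a b ≤ tt A a b * (3.1 * (Fintype.card V : ℝ) - tt A a b) := by
  unfold tw
  conv_rhs => rw [tt, Finset.sum_mul]
  refine Finset.sum_le_sum fun c _ => ?_
  refine mul_le_mul_of_nonneg_left ?_ (mul_nonneg (h.nonneg _ _) (h.nonneg _ _))
  have := h.n3_ge a b c
  unfold tt at this
  linarith

lemma DenseMat.le_tw {A : V → V → ℝ} (h : DenseMat A) (a b : V) :
    tt A a b * (3 * (Fintype.card V : ℝ) - tt A a b) ≤ tw A a b := by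
  unfold tw
  conv_lhs => rw [tt, Finset.sum_mul]
  refine Finset.sum_le_sum fun c _ => ?_
  refine mul_le_mul_of_nonneg_left ?_ (mul_nonneg (h.nonneg _ _) (h.nonneg _ _))
  have := h.n3_le a b c
  unfold tt at this
  linarith

lemma DenseMat.tw_ge {A : V → V → ℝ} (h : DenseMat A) (a b : V) :
    1.76 * (Fintype.card V : ℝ) ^ 2 ≤ tw A a b := by
  have h1 := h.le_tw a b
  have h2 := h.tt_ge a b
  have h3 := h.tt_le a b
  nlinarith

/-- The numerical heart of the threshold `0.9`: the imbalance of base weights between two edges is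
at most two thirds of the number of edges spanned by their common neighbourhood. -/
lemma DenseMat.tw_sub_le {A : V → V → ℝ} (h : DenseMat A) (e₁ e₂ : V × V) :
    tw A e₂.1 e₂.2 - tw A e₁.1 e₁.2 ≤
      2 / 3 * ∑ g : V × V, A g.1 g.2 * rr A e₁ g * rr A g e₂ := by
  obtain ⟨a, b⟩ := e₁
  obtain ⟨c, d⟩ := e₂
  set Q : V → ℝ := fun x => A a x * A b x * (A c x * A d x) with hQ
  have p01 : ∀ a b x, 0 ≤ A a x * A b x ∧ A a x * A b x ≤ 1 := fun a b x =>
    ⟨mul_nonneg (h.nonneg _ _) (h.nonneg _ _),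
      mul_le_one₀ (h.le_one _ _) (h.nonneg _ _) (h.le_one _ _)⟩
  have hQ0 : ∀ x, 0 ≤ Q x := fun x => mul_nonneg (p01 a b x).1 (p01 c d x).1
  have hQ1 : ∀ x, Q x ≤ 1 := fun x => mul_le_one₀ (p01 a b x).2 (p01 c d x).1 (p01 c d x).2
  have hq : tt A a b + tt A c d - (Fintype.card V : ℝ) ≤ ∑ x, Q x := by
    have : (Fintype.card V : ℝ) = ∑ x : V, (1:ℝ) := by simp
    rw [this]
    unfold tt
    rw [← Finset.sum_add_distrib, ← Finset.sum_sub_distrib]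
    refine Finset.sum_le_sum fun x _ => ?_
    simp only [hQ]
    nlinarith [p01 a b x, p01 c d x]
  have hs : ∑ g : V × V, A g.1 g.2 * rr A (a, b) g * rr A g (c, d) =
      ∑ x, Q x * ∑ y, Q y * A x y := by
    rw [Fintype.sum_prod_type]
    refine Finset.sum_congr rfl fun x _ => ?_
    rw [Finset.mul_sum]
    refine Finset.sum_congr rfl fun y _ => ?_
    simp only [rr, hQ]
    rw [h.symm x c, h.symm x d, h.symm y c, h.symm y d]
    ring
  have hl : (∑ x, Q x) * ((∑ x, Q x) - 0.1 * (Fintype.card V : ℝ)) ≤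
      ∑ x, Q x * ∑ y, Q y * A x y := by
    rw [Finset.sum_mul]
    exact Finset.sum_le_sum fun x _ => mul_le_mul_of_nonneg_left (h.drop x Q hQ1) (hQ0 x)
  have e1 := h.le_tw a b
  have e2 := h.tw_le c d
  have a1 := h.tt_ge a b
  have a2 := h.tt_le a b
  have b1 := h.tt_ge c d
  have b2 := h.tt_le c d
  rw [hs]
  dsimp only
  generalize tt A a b = t₁ at *
  generalize tt A c d = t₂ at *
  generalize (∑ x, Q x) = q at *
  generalize (Fintype.card V : ℝ) = n at *
  have h1 : (t₁ + t₂ - n) * (t₁ + t₂ - n - 0.1 * n) ≤ q * (q - 0.1 * n) := by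
    nlinarith
  have h2 : t₂ * (3.1 * n - t₂) - t₁ * (3 * n - t₁) ≤
      2 / 3 * ((t₁ + t₂ - n) * (t₁ + t₂ - n - 0.1 * n)) := by
    have hn : 0 ≤ n := by linarith
    have u1 : 0 ≤ t₁ - 0.8 * n := by linarith
    have u2 : 0 ≤ n - t₂ := by linarith
    have u3 : 0 ≤ n - t₁ := by linarith
    have u4 : 0 ≤ t₂ - 0.8 * n := by linarith
    nlinarith [mul_nonneg u1 u2, mul_nonneg u1 u3, mul_nonneg u1 u4, mul_nonneg u2 u3,
      mul_nonneg u2 u4, mul_nonneg u3 u4, mul_nonneg hn u1, mul_nonneg hn u2, mul_nonneg hn hn,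
      mul_nonneg hn u3, mul_nonneg hn u4]
  linarith

end dense

section dense
variable {V : Type} [Fintype V]

/-- Sum over ordered quadruples. -/
def Q4 (f : V → V → V → V → ℝ) : ℝ := ∑ a, ∑ b, ∑ c, ∑ d, f a b c d

lemma Q4_swap_pairs (f : V → V → V → V → ℝ) : Q4 f = Q4 fun a b c d => f c d a b := by
  have h := fun f : V → V → V → V → ℝ => (show Q4 f = ∑ p : V × V, ∑ q : V × V, f p.1 p.2 q.1 q.2 by
    simp only [Fintype.sum_prod_type, Q4])
  rw [h, h, Finset.sum_comm]

lemma Q4_swap_each (f : V → V → V → V → ℝ) : Q4 f = Q4 fun a b c d => f b a d c := by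
  unfold Q4
  rw [Finset.sum_comm]
  refine Finset.sum_congr rfl fun b _ => Finset.sum_congr rfl fun a _ => ?_
  rw [Finset.sum_comm]

lemma Q4_congr {f g : V → V → V → V → ℝ} (h : ∀ a b c d, f a b c d = g a b c d) : Q4 f = Q4 g := by
  have : f = g := by funext a b c d; exact h a b c d
  rw [this]

lemma Q4_add (f g : V → V → V → V → ℝ) :
    Q4 (fun a b c d => f a b c d + g a b c d) = Q4 f + Q4 g := by
  simp only [Q4, Finset.sum_add_distrib]

lemma Q4_neg (f : V → V → V → V → ℝ) :
    Q4 (fun a b c d => - f a b c d) = - Q4 f := by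
  simp only [Q4, Finset.sum_neg_distrib]

/-- The indicator of the ordered copies of `K₄`. -/
def F4 (A : V → V → ℝ) (a b c d : V) : ℝ :=
  A a b * A c d * (A a c * A a d * (A b c * A b d))

/-- Sign of the difference of the values of `y` on two pairs. -/
noncomputable def sg (y : V → V → ℝ) (a b c d : V) : ℝ := (SignType.sign (y a b - y c d) : ℝ)

lemma sg_swap (y : V → V → ℝ) (a b c d : V) : sg y c d a b = - sg y a b c d := by
  unfold sg
  rw [← neg_sub (y a b) (y c d), Left.sign_neg]
  simp

lemma sg_mul_self (y : V → V → ℝ) (a b c d : V) :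
    sg y a b c d * (y a b - y c d) = max (y a b - y c d) 0 + max (y c d - y a b) 0 := by
  unfold sg
  rw [sign_mul_self]
  rcases le_total (y a b) (y c d) with h | h
  · rw [abs_of_nonpos (by linarith), max_eq_right (by linarith), max_eq_left (by linarith)]; ring
  · rw [abs_of_nonneg (by linarith), max_eq_left (by linarith), max_eq_right (by linarith)]; ring

lemma abs_sg_le (y : V → V → ℝ) (a b c d : V) : |sg y a b c d| ≤ 1 := by
  unfold sg
  rcases SignType.trichotomy (SignType.sign (y a b - y c d)) with h | h | h <;> simp [h]

/-- Weight of a triangle: the base weight `3n - n3`, corrected in every `K₄` through it so that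
weight moves towards the edges on which `y` is large. -/
noncomputable def wt (A y : V → V → ℝ) (a b c : V) : ℝ :=
  3 * (Fintype.card V : ℝ) - n3 A a b c + 2 / 3 * ∑ d, A a d * A b d * A c d *
    (sg y a b c d + sg y a c b d + sg y b c a d)

lemma wt_comm₁ (A y : V → V → ℝ) (ys : ∀ a b, y a b = y b a) (a b c : V) :
    wt A y b a c = wt A y a b c := by
  unfold wt n3 sg
  congr 1
  · congr 1
    exact Finset.sum_congr rfl fun d _ => by ring
  · congr 1
    refine Finset.sum_congr rfl fun d _ => ?_
    rw [ys b a]; ring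

lemma wt_comm₂ (A y : V → V → ℝ) (ys : ∀ a b, y a b = y b a) (a b c : V) :
    wt A y a c b = wt A y a b c := by
  unfold wt n3 sg
  congr 1
  · congr 1
    exact Finset.sum_congr rfl fun d _ => by ring
  · congr 1
    refine Finset.sum_congr rfl fun d _ => ?_
    rw [ys c b]; ring

lemma DenseMat.wt_bounds {A : V → V → ℝ} (h : DenseMat A) (y : V → V → ℝ) (a b c : V) :
    0 ≤ wt A y a b c ∧ wt A y a b c ≤ 4 * (Fintype.card V : ℝ) := by
  have h3 : |∑ d, A a d * A b d * A c d * (sg y a b c d + sg y a c b d + sg y b c a d)| ≤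
      3 * n3 A a b c := by
    unfold n3
    rw [Finset.mul_sum]
    refine (Finset.abs_sum_le_sum_abs _ _).trans (Finset.sum_le_sum fun d _ => ?_)
    have h0 : 0 ≤ A a d * A b d * A c d :=
      mul_nonneg (mul_nonneg (h.nonneg _ _) (h.nonneg _ _)) (h.nonneg _ _)
    rw [abs_mul, abs_of_nonneg h0, mul_comm]
    refine mul_le_mul_of_nonneg_right ?_ h0
    refine (abs_add_le _ _).trans ?_
    have := abs_add_le (sg y a b c d) (sg y a c b d)
    linarith [abs_sg_le y a b c d, abs_sg_le y a c b d, abs_sg_le y b c a d]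
  have h4 := abs_le.1 h3
  have h5 := h.n3_le a b c
  have h6 := h.tt_le a b
  have h7 := h.n3_nonneg a b c
  unfold wt
  constructor <;> linarith

/-- The corrections transfer exactly the positive part of the differences of `y`. -/
lemma sum_wt (A y : V → V → ℝ) (As : ∀ a b, A a b = A b a) (ys : ∀ a b, y a b = y b a) :
    ∑ a, ∑ b, ∑ c, A a b * (A a c * A b c) * wt A y a b c * y a b =
      ∑ e : V × V, A e.1 e.2 * tw A e.1 e.2 * y e.1 e.2 +
      2 / 3 * ∑ e : V × V, ∑ g : V × V, A e.1 e.2 * A g.1 g.2 * rr A e g *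
        max (y e.1 e.2 - y g.1 g.2) 0 := by
  have h0 : ∑ e : V × V, ∑ g : V × V, A e.1 e.2 * A g.1 g.2 * rr A e g *
        max (y e.1 e.2 - y g.1 g.2) 0 = Q4 fun a b c d => F4 A a b c d * max (y a b - y c d) 0 := by
    simp only [Fintype.sum_prod_type, Q4, F4, rr]
  have F1 : ∀ a b c d, F4 A c d a b = F4 A a b c d := fun a b c d => by
    unfold F4; rw [As c a, As c b, As d a, As d b]; ring
  have F2 : ∀ a b c d, F4 A b a d c = F4 A a b c d := fun a b c d => by
    unfold F4; rw [As b a, As d c]; ring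
  have s1 : Q4 (fun a b c d => F4 A a b c d * (sg y a b c d * y a b)) =
      Q4 fun a b c d => F4 A a b c d * max (y a b - y c d) 0 := by
    have e1 : Q4 (fun a b c d => F4 A a b c d * (sg y a b c d * y a b)) =
        Q4 (fun a b c d => - (F4 A a b c d * (sg y a b c d * y c d))) := by
      rw [Q4_swap_pairs]
      refine Q4_congr fun a b c d => ?_
      rw [F1, sg_swap]; ring
    have e2 : Q4 (fun a b c d => F4 A a b c d * max (y a b - y c d) 0) =
        Q4 (fun a b c d => F4 A a b c d * max (y c d - y a b) 0) := by
      rw [Q4_swap_pairs]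
      exact Q4_congr fun a b c d => by rw [F1]
    have e3 := Q4_add (fun a b c d => F4 A a b c d * max (y a b - y c d) 0)
      (fun a b c d => F4 A a b c d * max (y c d - y a b) 0)
    have e4 := Q4_add (fun a b c d => F4 A a b c d * (sg y a b c d * y a b))
      (fun a b c d => - (F4 A a b c d * (sg y a b c d * y c d)))
    have e5 : Q4 (fun a b c d => F4 A a b c d * (sg y a b c d * y a b) +
        - (F4 A a b c d * (sg y a b c d * y c d))) =
        Q4 (fun a b c d => F4 A a b c d * max (y a b - y c d) 0 +
          F4 A a b c d * max (y c d - y a b) 0) := by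
      refine Q4_congr fun a b c d => ?_
      rw [← mul_add, ← sg_mul_self]; ring
    linarith
  have s2 : Q4 (fun a b c d => F4 A a b c d * (sg y a c b d * y a b)) = 0 := by
    have e1 : Q4 (fun a b c d => F4 A a b c d * (sg y a c b d * y a b)) =
        - Q4 (fun a b c d => F4 A a b c d * (sg y a c b d * y a b)) := by
      rw [← Q4_neg]
      conv_lhs => rw [Q4_swap_each]
      refine Q4_congr fun a b c d => ?_
      rw [F2, sg_swap, ys b a]; ring
    linarith
  have s3 : Q4 (fun a b c d => F4 A a b c d * (sg y b c a d * y a b)) = 0 := by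
    have e1 : Q4 (fun a b c d => F4 A a b c d * (sg y b c a d * y a b)) =
        - Q4 (fun a b c d => F4 A a b c d * (sg y b c a d * y a b)) := by
      rw [← Q4_neg]
      conv_lhs => rw [Q4_swap_each]
      refine Q4_congr fun a b c d => ?_
      rw [F2, sg_swap, ys b a]; ring
    linarith
  rw [h0, ← s1]
  have h1 : Q4 (fun a b c d => F4 A a b c d * (sg y a b c d * y a b)) =
      Q4 (fun a b c d => F4 A a b c d * ((sg y a b c d + sg y a c b d + sg y b c a d) * y a b)) := by
    have e3 := Q4_add (fun a b c d => F4 A a b c d * (sg y a b c d * y a b))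
      (fun a b c d => F4 A a b c d * (sg y a c b d * y a b))
    have e4 := Q4_add (fun a b c d => F4 A a b c d * (sg y a b c d * y a b) +
        F4 A a b c d * (sg y a c b d * y a b))
      (fun a b c d => F4 A a b c d * (sg y b c a d * y a b))
    have e5 := Q4_congr (f := fun a b c d => F4 A a b c d * (sg y a b c d * y a b) +
        F4 A a b c d * (sg y a c b d * y a b) + F4 A a b c d * (sg y b c a d * y a b))
      (g := fun a b c d => F4 A a b c d *
        ((sg y a b c d + sg y a c b d + sg y b c a d) * y a b)) (fun a b c d => by ring)
    linarith
  rw [h1, Fintype.sum_prod_type]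
  unfold Q4
  simp only [Finset.mul_sum, ← Finset.sum_add_distrib]
  refine Finset.sum_congr rfl fun a _ => Finset.sum_congr rfl fun b _ => ?_
  unfold tw
  rw [Finset.mul_sum, Finset.sum_mul, ← Finset.sum_add_distrib]
  refine Finset.sum_congr rfl fun c _ => ?_
  unfold wt
  rw [mul_add, add_mul]
  congr 1
  · ring
  · rw [Finset.mul_sum, Finset.mul_sum, Finset.sum_mul]
    refine Finset.sum_congr rfl fun d _ => ?_
    unfold F4
    ring

end dense

section dense
variable {V : Type} [Fintype V]

/-- The dual inequality: against any symmetric `y`, the weights `wt` do at least as well as a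
perfect fractional decomposition would. -/
lemma DenseMat.key {A : V → V → ℝ} (h : DenseMat A) (hM : 0 < ∑ e : V × V, A e.1 e.2)
    (y : V → V → ℝ) (ys : ∀ a b, y a b = y b a) :
    (∑ e : V × V, A e.1 e.2 * tw A e.1 e.2) / (∑ e : V × V, A e.1 e.2) *
      ∑ e : V × V, A e.1 e.2 * y e.1 e.2 ≤
    ∑ a, ∑ b, ∑ c, A a b * (A a c * A b c) * wt A y a b c * y a b := by
  rw [sum_wt A y h.symm ys]
  set μ : V × V → ℝ := fun e => A e.1 e.2 with hμ
  set τ : V × V → ℝ := fun e => tw A e.1 e.2 with hτ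
  set z : V × V → ℝ := fun e => y e.1 e.2 with hz
  have c := coarea μ z (rr A) (fun e => h.nonneg _ _)
    (fun e g => mul_nonneg (mul_nonneg (h.nonneg _ _) (h.nonneg _ _))
      (mul_nonneg (h.nonneg _ _) (h.nonneg _ _)))
    (fun e g => mul_le_one₀ (mul_le_one₀ (h.le_one _ _) (h.nonneg _ _) (h.le_one _ _))
      (mul_nonneg (h.nonneg _ _) (h.nonneg _ _))
      (mul_le_one₀ (h.le_one _ _) (h.nonneg _ _) (h.le_one _ _)))
  change (∑ e, μ e * τ e) / (∑ e, μ e) * ∑ e, μ e * z e ≤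
    ∑ e, μ e * τ e * z e + 2 / 3 * ∑ e, ∑ g, μ e * μ g * rr A e g * max (z e - z g) 0
  change 0 < ∑ e, μ e at hM
  rw [div_mul_eq_mul_div, div_le_iff₀ hM]
  -- symmetrisation of the covariance of `τ` and `z`
  have s1 : (∑ e, μ e * τ e) * (∑ e, μ e * z e) - (∑ e, μ e * τ e * z e) * ∑ e, μ e =
      ∑ e₁, ∑ e₂, μ e₁ * μ e₂ * (τ e₂ - τ e₁) * z e₁ := by
    have e1 : (∑ e, μ e * τ e) * (∑ e, μ e * z e) = ∑ e₁, ∑ e₂, μ e₁ * μ e₂ * τ e₂ * z e₁ := by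
      rw [mul_comm, Finset.sum_mul_sum]
      exact Finset.sum_congr rfl fun _ _ => Finset.sum_congr rfl fun _ _ => by ring
    have e2 : (∑ e, μ e * τ e * z e) * (∑ e, μ e) = ∑ e₁, ∑ e₂, μ e₁ * μ e₂ * τ e₁ * z e₁ := by
      rw [Finset.sum_mul_sum]
      exact Finset.sum_congr rfl fun _ _ => Finset.sum_congr rfl fun _ _ => by ring
    rw [e1, e2, ← Finset.sum_sub_distrib]
    refine Finset.sum_congr rfl fun _ _ => ?_
    rw [← Finset.sum_sub_distrib]
    exact Finset.sum_congr rfl fun _ _ => by ring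
  have s2 : ∑ e₁, ∑ e₂, μ e₁ * μ e₂ * (τ e₂ - τ e₁) * z e₁ =
      ∑ e₁, ∑ e₂, μ e₁ * μ e₂ * (τ e₂ - τ e₁) * max (z e₁ - z e₂) 0 := by
    have e1 : ∑ e₁, ∑ e₂, μ e₁ * μ e₂ * (τ e₂ - τ e₁) * z e₁ =
        ∑ e₁, ∑ e₂, - (μ e₁ * μ e₂ * (τ e₂ - τ e₁) * z e₂) := by
      rw [Finset.sum_comm]
      exact Finset.sum_congr rfl fun _ _ => Finset.sum_congr rfl fun _ _ => by ring
    have e2 : ∑ e₁, ∑ e₂, μ e₁ * μ e₂ * (τ e₂ - τ e₁) * max (z e₁ - z e₂) 0 =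
        ∑ e₁, ∑ e₂, - (μ e₁ * μ e₂ * (τ e₂ - τ e₁) * max (z e₂ - z e₁) 0) := by
      rw [Finset.sum_comm]
      exact Finset.sum_congr rfl fun _ _ => Finset.sum_congr rfl fun _ _ => by ring
    have e3 : ∑ e₁, ∑ e₂, μ e₁ * μ e₂ * (τ e₂ - τ e₁) * z e₁ +
        ∑ e₁, ∑ e₂, - (μ e₁ * μ e₂ * (τ e₂ - τ e₁) * z e₂) =
        ∑ e₁, ∑ e₂, μ e₁ * μ e₂ * (τ e₂ - τ e₁) * max (z e₁ - z e₂) 0 +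
        ∑ e₁, ∑ e₂, - (μ e₁ * μ e₂ * (τ e₂ - τ e₁) * max (z e₂ - z e₁) 0) := by
      simp only [← Finset.sum_add_distrib]
      refine Finset.sum_congr rfl fun e₁ _ => Finset.sum_congr rfl fun e₂ _ => ?_
      have : max (z e₁ - z e₂) 0 - max (z e₂ - z e₁) 0 = z e₁ - z e₂ := by
        rcases le_total (z e₁) (z e₂) with h | h
        · rw [max_eq_right (by linarith), max_eq_left (by linarith)]; ring
        · rw [max_eq_left (by linarith), max_eq_right (by linarith)]; ring
      linear_combination (- (μ e₁ * μ e₂ * (τ e₂ - τ e₁))) * this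
    linarith
  have s3 : ∑ e₁, ∑ e₂, μ e₁ * μ e₂ * (τ e₂ - τ e₁) * max (z e₁ - z e₂) 0 ≤
      2 / 3 * ∑ e₁, ∑ e₂, ∑ g, μ e₁ * μ e₂ * μ g * rr A e₁ g * rr A g e₂ *
        max (z e₁ - z e₂) 0 := by
    rw [Finset.mul_sum]
    refine Finset.sum_le_sum fun e₁ _ => ?_
    rw [Finset.mul_sum]
    refine Finset.sum_le_sum fun e₂ _ => ?_
    have hm : 0 ≤ μ e₁ * μ e₂ * max (z e₁ - z e₂) 0 :=
      mul_nonneg (mul_nonneg (h.nonneg _ _) (h.nonneg _ _)) (le_max_right _ _)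
    have := mul_le_mul_of_nonneg_left (h.tw_sub_le e₁ e₂) hm
    rw [Finset.mul_sum, Finset.mul_sum] at this
    rw [Finset.mul_sum]
    calc _ = μ e₁ * μ e₂ * max (z e₁ - z e₂) 0 * (τ e₂ - τ e₁) := by ring
      _ ≤ _ := this
      _ = _ := Finset.sum_congr rfl fun g _ => by simp only [hμ]; ring
  linarith

/-- Fractional triangle decomposition: a symmetric weighting of ordered triples with values in
`[0, 4/n]`, giving every edge total weight one. It exists by separating hyperplanes from the dual
inequality `DenseMat.key`. -/
theorem DenseMat.fractional [Nonempty V] {A : V → V → ℝ} (h : DenseMat A) :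
    ∃ ω : V → V → V → ℝ, (∀ a b c, 0 ≤ ω a b c ∧ ω a b c ≤ 4 / (Fintype.card V : ℝ)) ∧
      (∀ a b c, ω b a c = ω a b c) ∧ (∀ a b c, ω a c b = ω a b c) ∧
      ∀ a b, A a b = 1 → ∑ c, A a c * A b c * ω a b c = 1 := by
  classical
  have hn : (0:ℝ) < Fintype.card V := by exact_mod_cast Fintype.card_pos
  set U : ℝ := 4 / (Fintype.card V : ℝ) with hU
  set Ω : Set (V → V → V → ℝ) := Set.Icc (fun _ _ _ => 0) (fun _ _ _ => U) ∩
    {ω | (∀ a b c, ω b a c = ω a b c) ∧ (∀ a b c, ω a c b = ω a b c)} with hΩ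
  have memΩ : ∀ ω, ω ∈ Ω ↔ (∀ a b c, 0 ≤ ω a b c ∧ ω a b c ≤ U) ∧
      (∀ a b c, ω b a c = ω a b c) ∧ (∀ a b c, ω a c b = ω a b c) := by
    intro ω
    simp only [hΩ, Set.mem_inter_iff, Set.mem_Icc, Pi.le_def, Set.mem_ofPred_eq]
    constructor
    · rintro ⟨⟨h1, h2⟩, h3⟩
      exact ⟨fun a b c => ⟨h1 a b c, h2 a b c⟩, h3⟩
    · rintro ⟨h1, h3⟩
      exact ⟨⟨fun a b c => (h1 a b c).1, fun a b c => (h1 a b c).2⟩, h3⟩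
  let Φ : (V → V → V → ℝ) →ₗ[ℝ] (V × V → ℝ) :=
    { toFun := fun ω e => A e.1 e.2 * ∑ c, A e.1 c * A e.2 c * ω e.1 e.2 c
      map_add' := fun x y => by
        funext e; simp [mul_add, Finset.sum_add_distrib]
      map_smul' := fun r x => by
        funext e
        simp only [Pi.smul_apply, smul_eq_mul, RingHom.id_apply, Finset.mul_sum]
        exact Finset.sum_congr rfl fun _ _ => by ring }
  have hc : IsCompact Ω := by
    refine IsCompact.inter_right isCompact_Icc ?_
    simp only [Set.ofPred_and, Set.ofPred_forall]
    refine IsClosed.inter ?_ ?_ <;>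
    exact isClosed_iInter fun a => isClosed_iInter fun b => isClosed_iInter fun c =>
      isClosed_eq (by fun_prop) (by fun_prop)
  have hconv : Convex ℝ Ω := by
    refine Convex.inter (convex_Icc _ _) ?_
    intro x hx y hy s t _ _ _
    constructor <;> intro a b c <;> simp [hx.1 a b c, hx.2 a b c, hy.1 a b c, hy.2 a b c]
  have hΦc : Continuous Φ := LinearMap.continuous_of_finiteDimensional Φ
  by_cases hA : (fun e : V × V => A e.1 e.2) ∈ Φ '' Ω
  · obtain ⟨ω, hω, he⟩ := hA
    obtain ⟨h1, h2, h3⟩ := (memΩ ω).1 hω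
    refine ⟨ω, h1, h2, h3, fun a b hab => ?_⟩
    have := congrFun he (a, b)
    simpa [Φ, hab] using this
  exfalso
  obtain ⟨f, u, hf1, hf2⟩ := geometric_hahn_banach_closed_point (hconv.linear_image Φ)
    (hc.image hΦc).isClosed hA
  set Y : V → V → ℝ := fun a b => f (Pi.single (a, b) 1) with hY
  have hfY : ∀ g : V × V → ℝ, f g = ∑ e : V × V, g e * Y e.1 e.2 := by
    intro g
    have := LinearMap.pi_apply_eq_sum_univ (f : (V × V → ℝ) →ₗ[ℝ] ℝ) g
    simp only [ContinuousLinearMap.coe_coe, smul_eq_mul] at this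
    rw [this]
    refine Finset.sum_congr rfl fun e _ => ?_
    congr 2
    funext j
    simp [Pi.single_apply, eq_comm]
  set y : V → V → ℝ := fun a b => (Y a b + Y b a) / 2 with hy
  have ys : ∀ a b, y a b = y b a := fun a b => by simp only [hy]; ring
  have hsymm : ∀ g : V × V → ℝ, (∀ a b, g (a, b) = g (b, a)) →
      f g = ∑ e : V × V, g e * y e.1 e.2 := by
    intro g hg
    have e1 : ∑ e : V × V, g e * Y e.1 e.2 = ∑ e : V × V, g e * Y e.2 e.1 := by
      rw [Fintype.sum_prod_type, Fintype.sum_prod_type, Finset.sum_comm]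
      exact Finset.sum_congr rfl fun a _ => Finset.sum_congr rfl fun b _ => by rw [hg]
    have e2 : ∑ e : V × V, g e * y e.1 e.2 =
        (∑ e : V × V, g e * Y e.1 e.2 + ∑ e : V × V, g e * Y e.2 e.1) / 2 := by
      rw [← Finset.sum_add_distrib, Finset.sum_div]
      exact Finset.sum_congr rfl fun e _ => by simp only [hy]; ring
    rw [hfY, e2, ← e1]; ring
  have hM : 0 < ∑ e : V × V, A e.1 e.2 := by
    rw [Fintype.sum_prod_type]
    exact Finset.sum_pos (fun a _ => lt_of_lt_of_le (by linarith) (h.row_ge a))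
      Finset.univ_nonempty
  set T := (∑ e : V × V, A e.1 e.2 * tw A e.1 e.2) / (∑ e : V × V, A e.1 e.2) with hT
  have hTge : 1.76 * (Fintype.card V : ℝ) ^ 2 ≤ T := by
    rw [hT, le_div_iff₀ hM, Finset.mul_sum]
    refine Finset.sum_le_sum fun e _ => ?_
    rw [mul_comm]
    exact mul_le_mul_of_nonneg_left (h.tw_ge _ _) (h.nonneg _ _)
  have hT0 : 0 < T := lt_of_lt_of_le (by positivity) hTge
  set ω : V → V → V → ℝ := fun a b c => wt A y a b c / T with hω
  have hωΩ : ω ∈ Ω := by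
    rw [memΩ]
    refine ⟨fun a b c => ⟨div_nonneg (h.wt_bounds y a b c).1 hT0.le, ?_⟩, fun a b c => ?_,
      fun a b c => ?_⟩
    · rw [hU, div_le_div_iff₀ hT0 hn]
      nlinarith [(h.wt_bounds y a b c).2]
    · simp only [hω, wt_comm₁ A y ys]
    · simp only [hω, wt_comm₂ A y ys]
  have h1 := hf1 _ (Set.mem_image_of_mem Φ hωΩ)
  have h2 := h1.trans hf2
  rw [hsymm (fun e => A e.1 e.2) (fun a b => h.symm a b), hsymm (Φ ω)] at h2
  · have hk := h.key hM y ys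
    rw [← hT] at hk
    have h3 : ∑ e : V × V, Φ ω e * y e.1 e.2 =
        (∑ a, ∑ b, ∑ c, A a b * (A a c * A b c) * wt A y a b c * y a b) / T := by
      rw [Fintype.sum_prod_type, Finset.sum_div]
      refine Finset.sum_congr rfl fun a _ => ?_
      rw [Finset.sum_div]
      refine Finset.sum_congr rfl fun b _ => ?_
      rw [Finset.sum_div]
      change A a b * (∑ c, A a c * A b c * ω a b c) * y a b = _
      rw [Finset.mul_sum, Finset.sum_mul]
      refine Finset.sum_congr rfl fun c _ => ?_
      simp only [hω]
      ring
    rw [h3, div_lt_iff₀ hT0] at h2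
    linarith
  · intro a b
    change A a b * (∑ c, A a c * A b c * ω a b c) = A b a * (∑ c, A b c * A a c * ω b a c)
    rw [h.symm b a]
    congr 1
    refine Finset.sum_congr rfl fun c _ => ?_
    simp only [hω]
    rw [wt_comm₁ A y ys a b c]; ring

end dense

/-! ### Graphs as edge sets -/

section graphs
variable {V : Type} [Fintype V] [DecidableEq V]

/-- The edge set of the complete graph on `S`. -/
def edges (S : Finset V) : Finset (Sym2 V) := S.sym2.filter (fun e => ¬ e.IsDiag)

/-- The neighbourhood of `v` in the graph with edge set `E`. -/
def nb (E : Finset (Sym2 V)) (v : V) : Finset V := Finset.univ.filter (fun x => s(v, x) ∈ E)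

/-- The degree of `v` in the graph with edge set `E`. -/
def deg (E : Finset (Sym2 V)) (v : V) : ℕ := (nb E v).card

/-- The edge set `E` can be partitioned into edge sets of complete graphs of odd order. -/
def Dec (E : Finset (Sym2 V)) : Prop :=
  ∃ 𝒮 : Finset (Finset V), (∀ S ∈ 𝒮, Odd S.card ∧ edges S ⊆ E) ∧
    ∀ e ∈ E, ∃! S, S ∈ 𝒮 ∧ e ∈ edges S

@[simp] lemma mem_edges {S : Finset V} {a b : V} : s(a, b) ∈ edges S ↔ a ∈ S ∧ b ∈ S ∧ a ≠ b := by
  simp [edges, and_assoc]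

@[simp] lemma mem_nb {E : Finset (Sym2 V)} {v x : V} : x ∈ nb E v ↔ s(v, x) ∈ E := by
  simp [nb]

lemma edges_univ_iff {E : Finset (Sym2 V)} :
    E ⊆ edges (Finset.univ : Finset V) ↔ ∀ e ∈ E, ¬ e.IsDiag := by
  constructor
  · intro h e he
    have := h he
    simp only [edges, Finset.mem_filter] at this
    exact this.2
  · intro h e he
    simp [edges, h e he]

lemma edges_mono {S T : Finset V} (h : S ⊆ T) : edges S ⊆ edges T := by
  intro e
  induction e using Sym2.ind with
  | _ a b => simp only [mem_edges]; exact fun ⟨h1, h2, h3⟩ => ⟨h h1, h h2, h3⟩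

lemma nb_union (E F : Finset (Sym2 V)) (v : V) : nb (E ∪ F) v = nb E v ∪ nb F v := by
  ext x; simp

lemma nb_sdiff (E F : Finset (Sym2 V)) (v : V) : nb (E \ F) v = nb E v \ nb F v := by
  ext x; simp

lemma nb_mono {E F : Finset (Sym2 V)} (h : E ⊆ F) (v : V) : nb E v ⊆ nb F v := by
  intro x; simpa using fun hx => h hx

lemma deg_mono {E F : Finset (Sym2 V)} (h : E ⊆ F) (v : V) : deg E v ≤ deg F v :=
  Finset.card_le_card (nb_mono h v)

lemma deg_union_le (E F : Finset (Sym2 V)) (v : V) : deg (E ∪ F) v ≤ deg E v + deg F v := by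
  unfold deg; rw [nb_union]; exact Finset.card_union_le _ _

lemma deg_union {E F : Finset (Sym2 V)} (h : Disjoint E F) (v : V) :
    deg (E ∪ F) v = deg E v + deg F v := by
  unfold deg; rw [nb_union, Finset.card_union_of_disjoint]
  rw [Finset.disjoint_left]
  intro x h1 h2
  exact Finset.disjoint_left.1 h (mem_nb.1 h1) (mem_nb.1 h2)

lemma deg_sdiff {E F : Finset (Sym2 V)} (h : F ⊆ E) (v : V) :
    deg (E \ F) v + deg F v = deg E v := by
  rw [← deg_union Finset.sdiff_disjoint, Finset.sdiff_union_of_subset h]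

lemma deg_le_card (E : Finset (Sym2 V)) (v : V) : deg E v ≤ Fintype.card V := Finset.card_le_univ _

lemma deg_biUnion {ι : Type} [DecidableEq ι] (s : Finset ι) (f : ι → Finset (Sym2 V))
    (h : ∀ i ∈ s, ∀ j ∈ s, i ≠ j → Disjoint (f i) (f j)) (v : V) :
    deg (s.biUnion f) v = ∑ i ∈ s, deg (f i) v := by
  induction s using Finset.induction_on with
  | empty => simp [deg, nb]
  | insert i s hi ih =>
    rw [Finset.biUnion_insert, Finset.sum_insert hi, deg_union, ih]
    · exact fun a ha b hb => h a (Finset.mem_insert_of_mem ha) b (Finset.mem_insert_of_mem hb)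
    · rw [Finset.disjoint_biUnion_right]
      intro j hj
      exact h i (Finset.mem_insert_self _ _) j (Finset.mem_insert_of_mem hj)
        (fun e => hi (e ▸ hj))

lemma deg_edges (S : Finset V) (v : V) : deg (edges S) v = if v ∈ S then S.card - 1 else 0 := by
  unfold deg
  split_ifs with h
  · rw [← Finset.card_erase_of_mem h]
    congr 1
    ext x
    simp only [mem_nb, mem_edges, Finset.mem_erase]
    grind
  · rw [Finset.card_eq_zero]
    ext x
    simp [h]

lemma even_deg_edges {S : Finset V} (h : Odd S.card) (v : V) : Even (deg (edges S) v) := by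
  rw [deg_edges]
  split_ifs
  · obtain ⟨k, hk⟩ := h
    exact ⟨k, by omega⟩
  · simp

lemma Dec_empty : Dec (∅ : Finset (Sym2 V)) := ⟨∅, by simp, by simp⟩

lemma Dec_edges {S : Finset V} (h : Odd S.card) : Dec (edges S) :=
  ⟨{S}, by simp [h], fun e he => ⟨S, by simp [he], fun T hT => by simpa using hT.1⟩⟩

lemma Dec_union {E F : Finset (Sym2 V)} (hE : Dec E) (hF : Dec F) (h : Disjoint E F) :
    Dec (E ∪ F) := by
  obtain ⟨s, hs1, hs2⟩ := hE
  obtain ⟨t, ht1, ht2⟩ := hF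
  refine ⟨s ∪ t, ?_, ?_⟩
  · intro S hS
    rcases Finset.mem_union.1 hS with hS | hS
    · exact ⟨(hs1 S hS).1, (hs1 S hS).2.trans Finset.subset_union_left⟩
    · exact ⟨(ht1 S hS).1, (ht1 S hS).2.trans Finset.subset_union_right⟩
  · intro e he
    rcases Finset.mem_union.1 he with he | he
    · obtain ⟨S, hS, hu⟩ := hs2 e he
      refine ⟨S, ⟨Finset.mem_union_left _ hS.1, hS.2⟩, ?_⟩
      rintro T ⟨hT, heT⟩
      rcases Finset.mem_union.1 hT with hT | hT
      · exact hu T ⟨hT, heT⟩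
      · exact (Finset.disjoint_left.1 h he ((ht1 T hT).2 heT)).elim
    · obtain ⟨S, hS, hu⟩ := ht2 e he
      refine ⟨S, ⟨Finset.mem_union_right _ hS.1, hS.2⟩, ?_⟩
      rintro T ⟨hT, heT⟩
      rcases Finset.mem_union.1 hT with hT | hT
      · exact (Finset.disjoint_left.1 h ((hs1 T hT).2 heT) he).elim
      · exact hu T ⟨hT, heT⟩

lemma Dec_biUnion {ι : Type} [DecidableEq ι] (s : Finset ι) (f : ι → Finset (Sym2 V))
    (h : ∀ i ∈ s, ∀ j ∈ s, i ≠ j → Disjoint (f i) (f j)) (hd : ∀ i ∈ s, Dec (f i)) :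
    Dec (s.biUnion f) := by
  induction s using Finset.induction_on with
  | empty => simpa using Dec_empty
  | insert i s hi ih =>
    rw [Finset.biUnion_insert]
    refine Dec_union (hd i (Finset.mem_insert_self _ _)) (ih ?_ ?_) ?_
    · exact fun a ha b hb => h a (Finset.mem_insert_of_mem ha) b (Finset.mem_insert_of_mem hb)
    · exact fun a ha => hd a (Finset.mem_insert_of_mem ha)
    · rw [Finset.disjoint_biUnion_right]
      intro j hj
      exact h i (Finset.mem_insert_self _ _) j (Finset.mem_insert_of_mem hj)
        (fun e => hi (e ▸ hj))

lemma Dec_even {E : Finset (Sym2 V)} (h : Dec E) (v : V) : Even (deg E v) := by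
  obtain ⟨s, hs1, hs2⟩ := h
  have hE : E = s.biUnion edges := by
    ext e
    simp only [Finset.mem_biUnion]
    constructor
    · intro he
      obtain ⟨S, hS, -⟩ := hs2 e he
      exact ⟨S, hS⟩
    · rintro ⟨S, hS, he⟩
      exact (hs1 S hS).2 he
  rw [hE, deg_biUnion]
  · exact Finset.even_sum _ fun S hS => even_deg_edges (hs1 S hS).1 v
  · intro S hS T hT hne
    rw [Finset.disjoint_left]
    intro e h1 h2
    exact hne ((hs2 e ((hs1 S hS).2 h1)).unique ⟨hS, h1⟩ ⟨hT, h2⟩)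

lemma card_filter_mem (E : Finset (Sym2 V)) (v : V) : (E.filter (fun e => v ∈ e)).card = deg E v := by
  unfold deg
  symm
  refine Finset.card_bij (fun x _ => s(v, x)) ?_ ?_ ?_
  · intro x hx; simpa using hx
  · intro x _ y _ h
    simp at h
    grind
  · intro e he
    rw [Finset.mem_filter] at he
    obtain ⟨x, rfl⟩ := he.2
    exact ⟨x, by simpa using he.1, rfl⟩

lemma sum_deg (E : Finset (Sym2 V)) (hE : E ⊆ edges Finset.univ) : ∑ v, deg E v = 2 * E.card := by
  simp_rw [← card_filter_mem]
  simp only [Finset.card_eq_sum_ones, Finset.sum_filter, Finset.mul_sum]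
  rw [Finset.sum_comm]
  refine Finset.sum_congr rfl fun e he => ?_
  have hd := edges_univ_iff.1 hE e he
  induction e using Sym2.ind with
  | _ a b =>
    rw [← Finset.sum_filter, ← Finset.card_eq_sum_ones]
    have : (Finset.univ.filter fun v => v ∈ s(a, b)) = {a, b} := by ext; simp
    rw [this, Finset.card_pair (by simpa using hd), mul_one]

end graphs

/-! ### Approximate triangle decompositions -/

section approx
variable {V : Type} [Fintype V] [DecidableEq V]

lemma symm_triple {ω : V → V → V → ℝ} (h1 : ∀ a b c, ω b a c = ω a b c)
    (h2 : ∀ a b c, ω a c b = ω a b c) {a b c x y z : V} (hab : a ≠ b) (hac : a ≠ c) (hbc : b ≠ c)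
    (h : ({a, b, c} : Finset V) = {x, y, z}) : ω x y z = ω a b c := by
  have ha : a ∈ ({x, y, z} : Finset V) := by rw [← h]; simp
  have hb : b ∈ ({x, y, z} : Finset V) := by rw [← h]; simp
  have hc : c ∈ ({x, y, z} : Finset V) := by rw [← h]; simp
  simp only [Finset.mem_insert, Finset.mem_singleton] at ha hb hc
  have k1 := h1 a b c
  have k2 := h2 a b c
  have k3 := h1 a c b
  have k4 := h2 b a c
  have k5 := h1 b c a
  grind

/-- The value on an (unordered) triple of a symmetric function of three variables; zero on sets
which do not have three elements. -/
noncomputable def tripleVal (ω : V → V → V → ℝ) (S : Finset V) : ℝ :=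
  open Classical in
  if h : ∃ p : V × V × V, S = {p.1, p.2.1, p.2.2} ∧ S.card = 3 then
    ω h.choose.1 h.choose.2.1 h.choose.2.2 else 0

lemma tripleVal_eq {ω : V → V → V → ℝ} (h1 : ∀ a b c, ω b a c = ω a b c)
    (h2 : ∀ a b c, ω a c b = ω a b c) {a b c : V} (hab : a ≠ b) (hac : a ≠ c) (hbc : b ≠ c) :
    tripleVal ω {a, b, c} = ω a b c := by
  have hh : ∃ p : V × V × V, ({a, b, c} : Finset V) = {p.1, p.2.1, p.2.2} ∧
      ({a, b, c} : Finset V).card = 3 :=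
    ⟨(a, b, c), rfl, Finset.card_eq_three.2 ⟨a, b, c, hab, hac, hbc, rfl⟩⟩
  rw [tripleVal, dif_pos hh]
  exact symm_triple h1 h2 hab hac hbc hh.choose_spec.1

lemma tripleVal_bounds {ω : V → V → V → ℝ} {U : ℝ} (hU : 0 ≤ U)
    (h : ∀ a b c, 0 ≤ ω a b c ∧ ω a b c ≤ U) (S : Finset V) :
    0 ≤ tripleVal ω S ∧ tripleVal ω S ≤ U := by
  unfold tripleVal
  split_ifs
  · exact h _ _ _
  · exact ⟨le_rfl, hU⟩

lemma dense_of_deg {E : Finset (Sym2 V)}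
    (h : ∀ v, 0.9 * (Fintype.card V : ℝ) ≤ deg E v) :
    DenseMat (fun a b => if s(a, b) ∈ E then (1:ℝ) else 0) where
  h01 a b := by split_ifs <;> simp
  symm a b := by simp only [Sym2.eq_swap]
  row a := by
    rw [Finset.sum_sub_distrib, Finset.sum_boole]
    have := h a
    unfold deg nb at this
    simp only [Finset.sum_const, Finset.card_univ, nsmul_eq_mul, mul_one]
    linarith

lemma edges_inter_card {S T : Finset V} (hS : S.card = 3) (hT : T.card = 3) (h : S ≠ T) :
    (edges S ∩ edges T).card ≤ 1 := by
  rw [Finset.card_le_one]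
  intro e he f hf
  obtain ⟨a, b, c, hab, hac, hbc, rfl⟩ := Finset.card_eq_three.1 hS
  obtain ⟨x, y, z, hxy, hxz, hyz, rfl⟩ := Finset.card_eq_three.1 hT
  induction e using Sym2.ind with
  | _ p q =>
  induction f using Sym2.ind with
  | _ u v =>
    simp only [Finset.mem_inter, mem_edges] at he hf
    by_contra hne
    apply h
    have hpq := he.1.2.2
    have huv := hf.1.2.2
    -- two distinct edges span at least three vertices, all of them in both triples
    have key : ∃ w, w ≠ p ∧ w ≠ q ∧ w ∈ ({a, b, c} : Finset V) ∧ w ∈ ({x, y, z} : Finset V) := by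
      by_cases hu : u = p ∨ u = q
      · refine ⟨v, ?_, ?_, hf.1.2.1, hf.2.2.1⟩
        · rintro rfl
          rcases hu with rfl | rfl
          · exact huv rfl
          · exact hne Sym2.eq_swap
        · rintro rfl
          rcases hu with rfl | rfl
          · exact hne rfl
          · exact huv rfl
      · push Not at hu
        exact ⟨u, hu.1, hu.2, hf.1.1, hf.2.1⟩
    obtain ⟨w, hwp, hwq, hw1, hw2⟩ := key
    have h3 : ({p, q, w} : Finset V).card = 3 :=
      Finset.card_eq_three.2 ⟨p, q, w, hpq, hwp.symm, hwq.symm, rfl⟩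
    have e1 : ({p, q, w} : Finset V) = {a, b, c} := by
      apply Finset.eq_of_subset_of_card_le
      · intro t ht
        simp only [Finset.mem_insert, Finset.mem_singleton] at ht
        rcases ht with rfl | rfl | rfl
        exacts [he.1.1, he.1.2.1, hw1]
      · rw [h3, hS]
    have e2 : ({p, q, w} : Finset V) = {x, y, z} := by
      apply Finset.eq_of_subset_of_card_le
      · intro t ht
        simp only [Finset.mem_insert, Finset.mem_singleton] at ht
        rcases ht with rfl | rfl | rfl
        exacts [he.2.1, he.2.2.1, hw2]
      · rw [h3, hT]
    rw [← e1, ← e2]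

lemma edges_triple_eq (a b c : V) (hab : a ≠ b) (hac : a ≠ c) (hbc : b ≠ c) :
    edges ({a, b, c} : Finset V) = {s(a, b), s(a, c), s(b, c)} := by
  ext e
  induction e using Sym2.ind with
  | _ p q =>
    simp only [mem_edges, Finset.mem_insert, Finset.mem_singleton, Sym2.eq_iff]
    grind

lemma edges_card_three {S : Finset V} (h : S.card = 3) : (edges S).card = 3 := by
  obtain ⟨a, b, c, hab, hac, hbc, rfl⟩ := Finset.card_eq_three.1 h
  rw [edges_triple_eq a b c hab hac hbc, Finset.card_eq_three]
  refine ⟨_, _, _, ?_, ?_, ?_, rfl⟩ <;> simp only [ne_eq, Sym2.eq_iff] <;> grind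

/-- A set of three vertices containing a given pair is that pair with a third vertex. -/
lemma triple_of_pair {S : Finset V} (h : S.card = 3) {a b : V} (ha : a ∈ S) (hb : b ∈ S)
    (hab : a ≠ b) : ∃ c, c ≠ a ∧ c ≠ b ∧ S = {a, b, c} := by
  obtain ⟨x, y, z, hxy, hxz, hyz, rfl⟩ := Finset.card_eq_three.1 h
  simp only [Finset.mem_insert, Finset.mem_singleton] at ha hb
  have : ∃ c, c ≠ a ∧ c ≠ b ∧ (c = x ∨ c = y ∨ c = z) := by
    by_cases h1 : x ≠ a ∧ x ≠ b
    · exact ⟨x, h1.1, h1.2, Or.inl rfl⟩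
    by_cases h2 : y ≠ a ∧ y ≠ b
    · exact ⟨y, h2.1, h2.2, Or.inr (Or.inl rfl)⟩
    exact ⟨z, by grind, by grind, by grind⟩
  obtain ⟨c, h1, h2, h3⟩ := this
  refine ⟨c, h1, h2, ?_⟩
  ext t
  simp only [Finset.mem_insert, Finset.mem_singleton]
  grind

lemma edges_triple_subset {E : Finset (Sym2 V)} {a b c : V} (h1 : s(a, b) ∈ E) (h2 : s(a, c) ∈ E)
    (h3 : s(b, c) ∈ E) : edges ({a, b, c} : Finset V) ⊆ E := by
  intro e
  induction e using Sym2.ind with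
  | _ p q =>
    simp only [mem_edges, Finset.mem_insert, Finset.mem_singleton]
    rintro ⟨hp, hq, hpq⟩
    have e1 : s(b, a) ∈ E := by rwa [Sym2.eq_swap]
    have e2 : s(c, a) ∈ E := by rwa [Sym2.eq_swap]
    have e3 : s(c, b) ∈ E := by rwa [Sym2.eq_swap]
    rcases hp with rfl | rfl | rfl <;> rcases hq with rfl | rfl | rfl <;>
      first | exact absurd rfl hpq | assumption

end approx

/-- Graphs of minimum degree at least `0.9 n` have an edge-disjoint collection of triangles which
leaves a graph of small maximum degree. -/
theorem approx_triangles (η : ℝ) (hη : 0 < η) : ∃ n₀ : ℕ, ∀ (V : Type) [Fintype V] [DecidableEq V]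
    (E : Finset (Sym2 V)), n₀ ≤ Fintype.card V → E ⊆ edges Finset.univ →
    (∀ v, 0.9 * (Fintype.card V : ℝ) ≤ deg E v) →
    ∃ M : Finset (Finset V), (∀ S ∈ M, S.card = 3 ∧ edges S ⊆ E) ∧
      (∀ S ∈ M, ∀ T ∈ M, S ≠ T → Disjoint (edges S) (edges T)) ∧
      ∀ v, (deg (E \ M.biUnion edges) v : ℝ) ≤ η * (Fintype.card V : ℝ) := by
  obtain ⟨δ, hδ, N₀, hN⟩ := nibble η hη 4 (by norm_num)
  refine ⟨max N₀ 1, fun V _ _ E hn hE hdeg => ?_⟩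
  have hn1 : 1 ≤ Fintype.card V := (le_max_right _ _).trans hn
  have : Nonempty V := Fintype.card_pos_iff.1 hn1
  have hD := dense_of_deg hdeg
  obtain ⟨ω, hω, hs1, hs2, hsum⟩ := hD.fractional
  set H : Finset (Finset V) := Finset.univ.filter (fun S => S.card = 3 ∧ edges S ⊆ E) with hH
  have memH : ∀ S, S ∈ H ↔ S.card = 3 ∧ edges S ⊆ E := by simp [hH]
  set T : Finset (Finset (Sym2 V)) := Finset.univ.image (fun v : V => E.filter (fun e => v ∈ e))
    with hT
  have hw := tripleVal_bounds (ω := ω) (U := 4 / (Fintype.card V : ℝ)) (by positivity) hω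
  have hstate : NState (Fintype.card V) 4 δ 1 (edges : Finset V → Finset (Sym2 V)) E H
      (tripleVal ω) T := by
    refine ⟨?_, ?_, ?_, ?_, ?_, ?_, ?_, ?_, ?_, ?_⟩
    · intro S hS; exact ((memH S).1 hS).2
    · intro S hS; exact edges_card_three ((memH S).1 hS).1
    · intro S hS U hU hne; exact edges_inter_card ((memH S).1 hS).1 ((memH U).1 hU).1 hne
    · intro S _; exact (hw S).1
    · intro S _; exact (hw S).2
    · intro e he
      have hdiag := edges_univ_iff.1 hE e he
      induction e using Sym2.ind with
      | _ a b =>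
        have hab : a ≠ b := by simpa using hdiag
        have h1 := hsum a b (if_pos he)
        have h2 : ∑ S ∈ H with s(a, b) ∈ edges S, tripleVal ω S = 1 := by
          rw [← h1]
          symm
          have : ∀ c, (if s(a, c) ∈ E then (1:ℝ) else 0) * (if s(b, c) ∈ E then (1:ℝ) else 0) *
              ω a b c = if s(a, c) ∈ E ∧ s(b, c) ∈ E then ω a b c else 0 := by
            intro c
            by_cases h1 : s(a, c) ∈ E <;> by_cases h2 : s(b, c) ∈ E <;> simp [h1, h2]
          rw [Finset.sum_congr rfl fun c _ => this c, ← Finset.sum_filter]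
          have ne : ∀ c, s(a, c) ∈ E → s(b, c) ∈ E → a ≠ c ∧ b ≠ c := by
            intro c h1 h2
            have := edges_univ_iff.1 hE _ h1
            have := edges_univ_iff.1 hE _ h2
            simp_all
          refine Finset.sum_bij (fun c _ => ({a, b, c} : Finset V)) ?_ ?_ ?_ ?_
          · intro c hc
            simp only [Finset.mem_filter, Finset.mem_univ, true_and] at hc
            obtain ⟨n1, n2⟩ := ne c hc.1 hc.2
            simp only [Finset.mem_filter, memH, mem_edges]
            exact ⟨⟨Finset.card_eq_three.2 ⟨a, b, c, hab, n1, n2, rfl⟩,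
              edges_triple_subset he hc.1 hc.2⟩, by simp, by simp, hab⟩
          · intro c hc d hd hcd
            simp only [Finset.mem_filter, Finset.mem_univ, true_and] at hc hd
            obtain ⟨n1, n2⟩ := ne c hc.1 hc.2
            have : c ∈ ({a, b, d} : Finset V) := by rw [← hcd]; simp
            simp only [Finset.mem_insert, Finset.mem_singleton] at this
            grind
          · intro S hS
            simp only [Finset.mem_filter, memH, mem_edges] at hS
            obtain ⟨c, c1, c2, rfl⟩ := triple_of_pair hS.1.1 hS.2.1 hS.2.2.1 hab
            refine ⟨c, ?_, rfl⟩
            simp only [Finset.mem_filter, Finset.mem_univ, true_and]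
            exact ⟨hS.1.2 (by simp [c1.symm]), hS.1.2 (by simp [c2.symm])⟩
          · intro c hc
            simp only [Finset.mem_filter, Finset.mem_univ, true_and] at hc
            obtain ⟨n1, n2⟩ := ne c hc.1 hc.2
            exact (tripleVal_eq hs1 hs2 hab n1 n2).symm
        rw [h2]; simpa using hδ.le
    · have h1 := sum_deg E hE
      have h2 : ∑ v, deg E v ≤ ∑ _v : V, Fintype.card V := Finset.sum_le_sum fun v _ =>
        deg_le_card E v
      simp only [Finset.sum_const, Finset.card_univ, smul_eq_mul] at h2
      have h3 : E.card ≤ Fintype.card V ^ 2 := by nlinarith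
      exact_mod_cast h3
    · exact_mod_cast Finset.card_image_le
    · intro Q hQ
      obtain ⟨v, -, rfl⟩ := Finset.mem_image.1 hQ
      rw [one_mul, Finset.inter_eq_left.2 (Finset.filter_subset _ _), card_filter_mem]
      exact_mod_cast deg_le_card E v
    · intro Q hQ h hhE hhQ
      obtain ⟨v, -, rfl⟩ := Finset.mem_image.1 hQ
      have hvh : v ∉ h := fun hv => hhQ (Finset.mem_filter.2 ⟨hhE, hv⟩)
      have hdiag := edges_univ_iff.1 hE h hhE
      rw [Finset.card_le_one]
      induction h using Sym2.ind with
      | _ a b =>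
        have hab : a ≠ b := by simpa using hdiag
        have key : ∀ S ∈ H.filter (fun i => s(a, b) ∈ edges i ∧
            ¬ Disjoint (edges i) (E.filter fun e => v ∈ e)), S = {a, b, v} := by
          intro S hS
          simp only [Finset.mem_filter, memH, mem_edges, Finset.not_disjoint_iff] at hS
          obtain ⟨⟨hS3, -⟩, ⟨ha, hb, -⟩, e, heS, -, hve⟩ := hS
          obtain ⟨c, c1, c2, rfl⟩ := triple_of_pair hS3 ha hb hab
          obtain ⟨x, rfl⟩ := hve
          have := (mem_edges.1 heS).1
          simp only [Finset.mem_insert, Finset.mem_singleton] at this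
          simp only [Sym2.mem_iff, not_or] at hvh
          rcases this with h | h | h
          · exact absurd h hvh.1
          · exact absurd h hvh.2
          · rw [h]
        intro S hS U hU
        rw [key S hS, key U hU]
  obtain ⟨M, hM1, hM2, hM3⟩ := hN (Finset V) (Sym2 V) (Fintype.card V) edges E H (tripleVal ω) T
    ((le_max_left _ _).trans hn) hstate
  refine ⟨M, fun S hS => (memH S).1 (hM1 hS), hM2, fun v => ?_⟩
  have := hM3 (E.filter fun e => v ∈ e) (Finset.mem_image_of_mem _ (Finset.mem_univ v))
  rw [Finset.inter_eq_left.2 (Finset.filter_subset _ _)] at this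
  rw [← card_filter_mem]
  convert this using 3
  ext e
  simp only [Finset.mem_filter, Finset.mem_sdiff]
  tauto

/-! ### Embedding many small rooted patterns edge-disjointly -/

/-- A rooted pattern graph on the vertices `0, …, N - 1`, of which `0, …, r - 1` are roots;
`back i` is the set of neighbours of the non-root `i` among the smaller vertices. There are no
edges between roots. -/
structure Pat where
  r : ℕ
  N : ℕ
  back : ℕ → Finset ℕ

/-- At least one root, at most `D` vertices, every non-root with at most `b` smaller neighbours. -/
structure Pat.ok (p : Pat) (b D : ℕ) : Prop where
  one_le : 1 ≤ p.r
  le : p.r ≤ p.N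
  leD : p.N ≤ D
  lt : ∀ i, p.r ≤ i → i < p.N → ∀ j ∈ p.back i, j < i
  card : ∀ i, p.r ≤ i → i < p.N → (p.back i).card ≤ b

section embedding
variable {V : Type} [Fintype V] [DecidableEq V]

/-- The image of the edges of a pattern under a map of its vertices. -/
def Pat.img (p : Pat) (F : ℕ → V) : Finset (Sym2 V) :=
  (Finset.Ico p.r p.N).biUnion fun i => (p.back i).image fun j => s(F i, F j)

lemma Pat.mem_img {p : Pat} {F : ℕ → V} {e : Sym2 V} :
    e ∈ p.img F ↔ ∃ i, p.r ≤ i ∧ i < p.N ∧ ∃ j ∈ p.back i, s(F i, F j) = e := by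
  simp [Pat.img, and_assoc]

lemma Pat.img_vertex {p : Pat} {b D : ℕ} (hp : p.ok b D) {F : ℕ → V} {u v : V}
    (h : s(u, v) ∈ p.img F) : ∃ i < p.N, F i = u := by
  obtain ⟨i, h1, h2, j, hj, he⟩ := Pat.mem_img.1 h
  rcases Sym2.eq_iff.1 he with ⟨h3, -⟩ | ⟨-, h3⟩
  · exact ⟨i, h2, h3⟩
  · exact ⟨j, (hp.lt i h1 h2 j hj).trans h2, h3⟩

lemma Pat.deg_img_le {p : Pat} {b D : ℕ} (hp : p.ok b D) (F : ℕ → V) (v : V) :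
    deg (p.img F) v ≤ D := by
  have : nb (p.img F) v ⊆ (Finset.range p.N).image F := by
    intro x hx
    rw [mem_nb, Sym2.eq_swap] at hx
    obtain ⟨i, h1, h2⟩ := Pat.img_vertex hp hx
    exact Finset.mem_image.2 ⟨i, Finset.mem_range.2 h1, h2⟩
  calc deg (p.img F) v ≤ _ := Finset.card_le_card this
    _ ≤ _ := Finset.card_image_le
    _ = p.N := Finset.card_range _
    _ ≤ D := hp.leD

lemma Pat.card_img_le {p : Pat} {b D : ℕ} (hp : p.ok b D) (F : ℕ → V) :
    (p.img F).card ≤ D * b := by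
  calc (p.img F).card ≤ ∑ i ∈ Finset.Ico p.r p.N, ((p.back i).image fun j => s(F i, F j)).card :=
        Finset.card_biUnion_le
    _ ≤ ∑ i ∈ Finset.Ico p.r p.N, b := by
        refine Finset.sum_le_sum fun i hi => Finset.card_image_le.trans ?_
        rw [Finset.mem_Ico] at hi
        exact hp.card i hi.1 hi.2
    _ = (p.N - p.r) * b := by simp
    _ ≤ D * b := Nat.mul_le_mul_right _ (by have := hp.leD; omega)

/-- Greedy embedding of a single pattern. -/
lemma embed_one {p : Pat} {b D : ℕ} (hp : p.ok b D) (ρ : ℕ → V) (hρ : Set.InjOn ρ (Set.Iio p.r))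
    (K : Finset (Sym2 V)) (Bad : Finset V)
    (hav : ∀ U W : Finset V, U.card ≤ b → W.card ≤ D →
      ∃ x, x ∉ W ∧ x ∉ Bad ∧ ∀ u ∈ U, s(x, u) ∈ K) :
    ∃ F : ℕ → V, (∀ i < p.r, F i = ρ i) ∧ Set.InjOn F (Set.Iio p.N) ∧
      (∀ i, p.r ≤ i → i < p.N → F i ∉ Bad) ∧ p.img F ⊆ K := by
  have main : ∀ k, p.r ≤ k → k ≤ p.N → ∃ F : ℕ → V, (∀ i < p.r, F i = ρ i) ∧
      Set.InjOn F (Set.Iio k) ∧ (∀ i, p.r ≤ i → i < k → F i ∉ Bad ∧ ∀ j ∈ p.back i,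
        s(F i, F j) ∈ K) := by
    intro k hk
    induction k, hk using Nat.le_induction with
    | base => intro _; exact ⟨ρ, fun _ _ => rfl, hρ, fun i h1 h2 => absurd h1 (by omega)⟩
    | succ k hk ih =>
      intro hkN
      obtain ⟨F, hF1, hF2, hF3⟩ := ih (by omega)
      obtain ⟨x, hx1, hx2, hx3⟩ := hav ((p.back k).image F) ((Finset.range k).image F)
        (Finset.card_image_le.trans (hp.card k hk (by omega)))
        (Finset.card_image_le.trans (by rw [Finset.card_range]; have := hp.leD; omega))
      have hne : ∀ i < k, F i ≠ x := fun i hi h =>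
        hx1 (Finset.mem_image.2 ⟨i, Finset.mem_range.2 hi, h⟩)
      refine ⟨Function.update F k x, ?_, ?_, ?_⟩
      · intro i hi
        rw [Function.update_of_ne (by omega), hF1 i hi]
      · intro i hi j hj hij
        rw [Set.mem_Iio] at hi hj
        by_cases h1 : i = k <;> by_cases h2 : j = k
        · rw [h1, h2]
        · rw [h1, Function.update_self, Function.update_of_ne h2] at hij
          exact absurd hij.symm (hne j (by omega))
        · rw [h2, Function.update_self, Function.update_of_ne h1] at hij
          exact absurd hij (hne i (by omega))
        · rw [Function.update_of_ne h1, Function.update_of_ne h2] at hij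
          exact hF2 (Set.mem_Iio.2 (by omega)) (Set.mem_Iio.2 (by omega)) hij
      · intro i h1 h2
        by_cases hik : i = k
        · subst hik
          refine ⟨by rwa [Function.update_self], fun j hj => ?_⟩
          have := hp.lt i h1 (by omega) j hj
          rw [Function.update_self, Function.update_of_ne (by omega)]
          exact hx3 _ (Finset.mem_image_of_mem _ hj)
        · obtain ⟨h3, h4⟩ := hF3 i h1 (by omega)
          refine ⟨by rwa [Function.update_of_ne hik], fun j hj => ?_⟩
          have := hp.lt i h1 (by omega) j hj
          rw [Function.update_of_ne hik, Function.update_of_ne (by omega)]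
          exact h4 j hj
  obtain ⟨F, h1, h2, h3⟩ := main p.N hp.le le_rfl
  refine ⟨F, h1, h2, fun i h4 h5 => (h3 i h4 h5).1, ?_⟩
  intro e he
  obtain ⟨i, h4, h5, j, hj, rfl⟩ := Pat.mem_img.1 he
  exact (h3 i h4 h5).2 j hj

/-- The number of tasks in `s` of which `v` is a root. -/
def rootCount {ι : Type} (s : Finset ι) (p : ι → Pat) (ρ : ι → ℕ → V) (v : V) : ℕ :=
  (s.filter fun t => ∃ i ∈ Finset.range (p t).r, ρ t i = v).card

lemma card_le_sum_rootCount {ι : Type} [DecidableEq ι] (s : Finset ι) (p : ι → Pat) (ρ : ι → ℕ → V)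
    (h : ∀ t ∈ s, 1 ≤ (p t).r) : s.card ≤ ∑ v, rootCount s p ρ v := by
  have : s ⊆ Finset.univ.biUnion fun v =>
      s.filter fun t => ∃ i ∈ Finset.range (p t).r, ρ t i = v := by
    intro t ht
    simp only [Finset.mem_biUnion, Finset.mem_univ, true_and, Finset.mem_filter]
    exact ⟨ρ t 0, ht, 0, Finset.mem_range.2 (h t ht), rfl⟩
  exact (Finset.card_le_card this).trans Finset.card_biUnion_le

end embedding

/-- If any `b` vertices have many common neighbours in `E`, and no vertex is a root of too many
tasks, then all tasks can be embedded into `E` edge-disjointly and with small maximum degree. The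
tasks are embedded one at a time, putting non-roots only on vertices of so far small degree. -/
theorem embed_tasks (b D : ℕ) (κ β : ℝ) (hκ : 0 < κ) (hβ : 0 < β) :
    ∃ β₂ : ℝ, 0 < β₂ ∧ ∃ n₀ : ℕ, ∀ (V : Type) [Fintype V] [DecidableEq V] (ι : Type)
      [DecidableEq ι] (E : Finset (Sym2 V)) (s : Finset ι) (p : ι → Pat) (ρ : ι → ℕ → V),
      n₀ ≤ Fintype.card V → E ⊆ edges Finset.univ →
      (∀ U : Finset V, U.card ≤ b → κ * (Fintype.card V : ℝ) ≤
        ((Finset.univ.filter fun x => ∀ u ∈ U, s(x, u) ∈ E).card : ℝ)) →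
      (∀ t ∈ s, (p t).ok b D) → (∀ t ∈ s, Set.InjOn (ρ t) (Set.Iio (p t).r)) →
      (∀ v, (rootCount s p ρ v : ℝ) ≤ β₂ * (Fintype.card V : ℝ)) →
      ∃ F : ι → ℕ → V, (∀ t ∈ s, (∀ i < (p t).r, F t i = ρ t i) ∧
          Set.InjOn (F t) (Set.Iio (p t).N) ∧ (p t).img (F t) ⊆ E) ∧
        (∀ t ∈ s, ∀ t' ∈ s, t ≠ t' → Disjoint ((p t).img (F t)) ((p t').img (F t'))) ∧
        ∀ v, (deg (s.biUnion fun t => (p t).img (F t)) v : ℝ) ≤ β * (Fintype.card V : ℝ) := by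
  -- `γ` is the degree threshold for reusing a vertex
  set γ : ℝ := min (β / 2) (κ / (8 * (b + 1))) with hγ
  have hγ0 : 0 < γ := by positivity
  have hγβ : γ ≤ β / 2 := min_le_left _ _
  have hγκ : γ * (b + 1) ≤ κ / 8 := by
    have : γ ≤ κ / (8 * (b + 1)) := min_le_right _ _
    rw [le_div_iff₀ (by positivity)] at this
    linarith
  set β₂ : ℝ := min (γ / (2 * (D + 1))) (κ * γ / (16 * (D + 1) * (b + 1))) with hβ₂
  have hβ₂0 : 0 < β₂ := by positivity
  have hβ₂1 : β₂ * (D + 1) ≤ γ / 2 := by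
    have : β₂ ≤ γ / (2 * (D + 1)) := min_le_left _ _
    rw [le_div_iff₀ (by positivity)] at this
    linarith
  have hβ₂2 : β₂ * (2 * (D + 1) * (b + 1)) ≤ κ * γ / 8 := by
    have : β₂ ≤ κ * γ / (16 * (D + 1) * (b + 1)) := min_le_right _ _
    rw [le_div_iff₀ (by positivity)] at this
    linarith
  obtain ⟨n₀, hn₀⟩ := exists_nat_ge ((D + 1) * (2 / γ + 8 * (b + 2) / κ))
  refine ⟨β₂, hβ₂0, n₀ + 1, ?_⟩
  intro V _ _ ι _ E s p ρ hn hE hcn hok hinj hrc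
  set n : ℝ := (Fintype.card V : ℝ) with hnn
  have hnn0 : (D + 1) * (2 / γ + 8 * (b + 2) / κ) ≤ n := by
    refine hn₀.trans ?_
    rw [hnn]; exact_mod_cast (by omega : n₀ ≤ Fintype.card V)
  have hnpos : 0 < n := lt_of_lt_of_le (by positivity) hnn0
  have hDγ : (D + 1 : ℝ) ≤ γ * n / 2 := by
    have h1 : (D + 1 : ℝ) * (2 / γ) ≤ n := by
      refine le_trans ?_ hnn0
      gcongr
      have : 0 ≤ 8 * ((b:ℝ) + 2) / κ := by positivity
      linarith
    rw [mul_div_assoc', div_le_iff₀ hγ0] at h1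
    linarith
  have hDκ : (D + 1 : ℝ) * (b + 2) ≤ κ * n / 8 := by
    have h1 : (D + 1 : ℝ) * (8 * (b + 2) / κ) ≤ n := by
      refine le_trans ?_ hnn0
      gcongr
      have : 0 ≤ 2 / γ := by positivity
      linarith
    rw [mul_div_assoc', div_le_iff₀ hκ] at h1
    linarith
  -- invariant of the greedy procedure
  have main : ∀ s' ⊆ s, ∃ F : ι → ℕ → V, (∀ t ∈ s', (∀ i < (p t).r, F t i = ρ t i) ∧
          Set.InjOn (F t) (Set.Iio (p t).N) ∧ (p t).img (F t) ⊆ E) ∧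
        (∀ t ∈ s', ∀ t' ∈ s', t ≠ t' → Disjoint ((p t).img (F t)) ((p t').img (F t'))) ∧
        ∀ v, (deg (s'.biUnion fun t => (p t).img (F t)) v : ℝ) ≤
          D * (rootCount s' p ρ v : ℝ) + γ * n + D := by
    intro s'
    induction s' using Finset.induction_on with
    | empty =>
      intro _
      refine ⟨ρ, by simp, by simp, fun v => ?_⟩
      have : deg (∅ : Finset (Sym2 V)) v = 0 := by simp [deg, nb]
      simp only [Finset.biUnion_empty, this, Nat.cast_zero]
      positivity
    | insert t s' ht ih =>
      intro hs'
      have hts : t ∈ s := hs' (Finset.mem_insert_self _ _)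
      have hss : s' ⊆ s := fun x hx => hs' (Finset.mem_insert_of_mem hx)
      obtain ⟨F, hF1, hF2, hF3⟩ := ih hss
      set H := s'.biUnion fun t => (p t).img (F t) with hH
      have hHE : H ⊆ E := by
        intro e he
        obtain ⟨t', ht', he'⟩ := Finset.mem_biUnion.1 he
        exact (hF1 t' ht').2.2 he'
      have hrc' : ∀ v, (rootCount s' p ρ v : ℝ) ≤ β₂ * n := by
        intro v
        refine le_trans ?_ (hrc v)
        exact_mod_cast Finset.card_le_card (Finset.filter_subset_filter _ hss)
      have hdegH : ∀ v, (deg H v : ℝ) ≤ 2 * γ * n := by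
        intro v
        have h1 := hF3 v
        have h2 := hrc' v
        have h3 : (D:ℝ) * (rootCount s' p ρ v : ℝ) ≤ D * (β₂ * n) := by gcongr
        have h4 : β₂ * (D + 1) * n ≤ γ / 2 * n := by gcongr
        have h5 : 0 ≤ β₂ * n := by positivity
        nlinarith
      set Bad : Finset V := Finset.univ.filter fun v => γ * n ≤ (deg H v : ℝ) with hBad
      have hs'card : (s'.card : ℝ) ≤ β₂ * n * n := by
        have h1 := card_le_sum_rootCount s' p ρ (fun t ht => (hok t (hss ht)).one_le)
        calc (s'.card : ℝ) ≤ ∑ v, (rootCount s' p ρ v : ℝ) := by exact_mod_cast h1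
          _ ≤ ∑ _v : V, β₂ * n := Finset.sum_le_sum fun v _ => hrc' v
          _ = β₂ * n * n := by simp [hnn]; ring
      have hHcard : (H.card : ℝ) ≤ D * b * (β₂ * n * n) := by
        have h1 : H.card ≤ ∑ t ∈ s', (D * b) := Finset.card_biUnion_le.trans
          (Finset.sum_le_sum fun t ht => Pat.card_img_le (hok t (hss ht)) _)
        rw [Finset.sum_const, smul_eq_mul] at h1
        have h2 : (H.card : ℝ) ≤ s'.card * (D * b) := by exact_mod_cast h1
        calc (H.card : ℝ) ≤ s'.card * (D * b) := h2
          _ ≤ (β₂ * n * n) * (D * b) := by gcongr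
          _ = _ := by ring
      have hBadcard : (Bad.card : ℝ) ≤ κ * n / 8 := by
        have h1 : (Bad.card : ℝ) * (γ * n) ≤ 2 * H.card := by
          have h2 := sum_deg H (hHE.trans hE)
          calc (Bad.card : ℝ) * (γ * n) = ∑ v ∈ Bad, γ * n := by simp
            _ ≤ ∑ v ∈ Bad, (deg H v : ℝ) := Finset.sum_le_sum fun v hv => by
                rw [hBad, Finset.mem_filter] at hv; exact hv.2
            _ ≤ ∑ v, (deg H v : ℝ) := Finset.sum_le_sum_of_subset_of_nonneg
                (Finset.subset_univ _) (fun _ _ _ => by positivity)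
            _ = 2 * H.card := by exact_mod_cast h2
        have h3 : (2:ℝ) * H.card ≤ κ * n / 8 * (γ * n) := by
          have h4 : (D:ℝ) * b ≤ (D + 1) * (b + 1) := by nlinarith [(Nat.cast_nonneg D : (0:ℝ) ≤ D), (Nat.cast_nonneg b : (0:ℝ) ≤ b)]
          calc (2:ℝ) * H.card ≤ 2 * (D * b * (β₂ * n * n)) := by linarith
            _ ≤ 2 * ((D + 1) * (b + 1) * (β₂ * n * n)) := by gcongr
            _ = β₂ * (2 * (D + 1) * (b + 1)) * (n * n) := by ring
            _ ≤ κ * γ / 8 * (n * n) := by gcongr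
            _ = _ := by ring
        exact le_of_mul_le_mul_right (h1.trans h3) (by positivity)
      have hav : ∀ U W : Finset V, U.card ≤ b → W.card ≤ D →
          ∃ x, x ∉ W ∧ x ∉ Bad ∧ ∀ u ∈ U, s(x, u) ∈ E \ H := by
        intro U W hU hW
        by_contra hcon
        push Not at hcon
        have hsub : (Finset.univ.filter fun x => ∀ u ∈ U, s(x, u) ∈ E) ⊆
            W ∪ Bad ∪ U.biUnion (nb H) := by
          intro x hx
          simp only [Finset.mem_filter, Finset.mem_univ, true_and] at hx
          by_contra hx2
          simp only [Finset.mem_union, Finset.mem_biUnion, not_or, mem_nb, not_exists,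
            not_and] at hx2
          obtain ⟨u, hu, hu2⟩ := hcon x hx2.1.1 hx2.1.2
          refine hu2 (Finset.mem_sdiff.2 ⟨hx u hu, ?_⟩)
          rw [Sym2.eq_swap]
          exact hx2.2 u hu
        have h1 := (hcn U hU).trans (Nat.cast_le.2 (Finset.card_le_card hsub))
        have h2 : ((W ∪ Bad ∪ U.biUnion (nb H)).card : ℝ) ≤ D + κ * n / 8 + b * (2 * γ * n) := by
          have h3 : (U.biUnion (nb H)).card ≤ ∑ u ∈ U, deg H u := Finset.card_biUnion_le
          have h4 : ((U.biUnion (nb H)).card : ℝ) ≤ b * (2 * γ * n) := by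
            calc ((U.biUnion (nb H)).card : ℝ) ≤ ∑ u ∈ U, (deg H u : ℝ) := by exact_mod_cast h3
              _ ≤ ∑ _u ∈ U, 2 * γ * n := Finset.sum_le_sum fun u _ => hdegH u
              _ = U.card * (2 * γ * n) := by simp
              _ ≤ _ := by gcongr
          have h5 : (W ∪ Bad ∪ U.biUnion (nb H)).card ≤ W.card + Bad.card +
              (U.biUnion (nb H)).card := (Finset.card_union_le _ _).trans
                (Nat.add_le_add_right (Finset.card_union_le _ _) _)
          have h6 : ((W ∪ Bad ∪ U.biUnion (nb H)).card : ℝ) ≤ W.card + Bad.card +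
              (U.biUnion (nb H)).card := by exact_mod_cast h5
          have h7 : (W.card : ℝ) ≤ D := by exact_mod_cast hW
          linarith
        have h3 : γ * (b + 1) * n ≤ κ / 8 * n := by gcongr
        have h4 : 0 < κ * n := by positivity
        have h5 : (D:ℝ) ≤ κ * n / 8 := by
          nlinarith [(Nat.cast_nonneg D : (0:ℝ) ≤ D), (Nat.cast_nonneg b : (0:ℝ) ≤ b)]
        have h6 : 0 < γ * n := by positivity
        nlinarith
      obtain ⟨f, hf1, hf2, hf3, hf4⟩ := embed_one (hok t hts) (ρ t) (hinj t hts) (E \ H) Bad hav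
      have hupd : ∀ t' ∈ s', Function.update F t f t' = F t' := fun t' ht' =>
        Function.update_of_ne (fun h : t' = t => ht (h ▸ ht')) _ _
      have hbi : (s'.biUnion fun t' => (p t').img (Function.update F t f t')) = H := by
        rw [hH]
        refine Finset.biUnion_congr rfl fun t' ht' => ?_
        rw [hupd t' ht']
      have hdis : ∀ t' ∈ s', Disjoint ((p t).img f) ((p t').img (F t')) := by
        intro t' ht'
        rw [Finset.disjoint_left]
        intro e h1 h2
        exact (Finset.mem_sdiff.1 (hf4 h1)).2 (Finset.mem_biUnion.2 ⟨t', ht', h2⟩)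
      refine ⟨Function.update F t f, ?_, ?_, ?_⟩
      · intro t' ht'
        rcases Finset.mem_insert.1 ht' with rfl | ht'
        · rw [Function.update_self]
          exact ⟨hf1, hf2, hf4.trans Finset.sdiff_subset⟩
        · rw [hupd t' ht']; exact hF1 t' ht'
      · intro t₁ h₁ t₂ h₂ hne
        rcases Finset.mem_insert.1 h₁ with k₁ | k₁ <;> rcases Finset.mem_insert.1 h₂ with k₂ | k₂
        · exact absurd (k₁.trans k₂.symm) hne
        · rw [k₁, Function.update_self, hupd t₂ k₂]; exact hdis t₂ k₂
        · rw [k₂, Function.update_self, hupd t₁ k₁]; exact (hdis t₁ k₁).symm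
        · rw [hupd t₁ k₁, hupd t₂ k₂]; exact hF2 t₁ k₁ t₂ k₂ hne
      · intro v
        rw [Finset.biUnion_insert, Function.update_self, hbi]
        have hu : (deg ((p t).img f ∪ H) v : ℝ) ≤ deg ((p t).img f) v + deg H v := by
          exact_mod_cast deg_union_le _ _ v
        have hmono : (rootCount s' p ρ v : ℝ) ≤ rootCount (insert t s') p ρ v := by
          exact_mod_cast Finset.card_le_card
            (Finset.filter_subset_filter _ (Finset.subset_insert _ _))
        have hle : (deg ((p t).img f) v : ℝ) ≤ D := by
          exact_mod_cast Pat.deg_img_le (hok t hts) f v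
        have hmono' : (D:ℝ) * (rootCount s' p ρ v : ℝ) ≤ D * rootCount (insert t s') p ρ v := by
          gcongr
        by_cases hv0 : deg ((p t).img f) v = 0
        · rw [hv0] at hu
          have := hF3 v
          push_cast at hu
          linarith
        · obtain ⟨x, hx⟩ := Finset.card_pos.1 (Nat.pos_of_ne_zero hv0)
          obtain ⟨i, hi, hiv⟩ := Pat.img_vertex (hok t hts) (mem_nb.1 hx)
          by_cases hir : i < (p t).r
          · have hroot : rootCount (insert t s') p ρ v = rootCount s' p ρ v + 1 := by
              unfold rootCount
              rw [Finset.filter_insert, if_pos, Finset.card_insert_of_notMem]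
              · simp [ht]
              · exact ⟨i, Finset.mem_range.2 hir, by rw [← hf1 i hir, hiv]⟩
            rw [hroot]
            have := hF3 v
            push_cast
            linarith
          · have hb := hf3 i (by omega) hi
            rw [hiv, hBad] at hb
            simp only [Finset.mem_filter, Finset.mem_univ, true_and, not_le] at hb
            have : (0:ℝ) ≤ D * rootCount (insert t s') p ρ v := by positivity
            linarith
  obtain ⟨F, h1, h2, h3⟩ := main s subset_rfl
  refine ⟨F, h1, h2, fun v => (h3 v).trans ?_⟩
  have h4 : (D:ℝ) * (rootCount s p ρ v : ℝ) ≤ D * (β₂ * n) := by gcongr; exact hrc v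
  have h5 : β₂ * (D + 1) * n ≤ γ / 2 * n := by gcongr
  have h6 : 0 ≤ β₂ * n := by positivity
  have h7 : γ * n ≤ β / 2 * n := by gcongr
  nlinarith

/-! ### Random equipartitions -/

/-- A vertex set which splits every member of a polynomially large family almost evenly. -/
lemma halving (ξ K : ℝ) (hξ : 0 < ξ) : ∃ n₀ : ℕ, ∀ (V : Type) [Fintype V] [DecidableEq V]
    (𝓕 : Finset (Finset V)), n₀ ≤ Fintype.card V → (𝓕.card : ℝ) ≤ K * (Fintype.card V : ℝ) ^ 2 →
    ∃ T : Finset V, ∀ S ∈ 𝓕, |((S ∩ T).card : ℝ) - S.card / 2| ≤ ξ * (Fintype.card V : ℝ) := by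
  set l : ℝ := min 1 (ξ / 2) with hl
  have hl0 : 0 < l := by positivity
  obtain ⟨n₀, hn₀⟩ := eventually_sq_mul_exp_lt (2 * K) (l * ξ / 2) 1 (by positivity) one_pos
  refine ⟨n₀, fun V _ _ 𝓕 hn hF => ?_⟩
  set n : ℝ := (Fintype.card V : ℝ) with hnn
  set p : V → ℝ := fun _ => 1 / 2 with hp
  have hp01 : ∀ i ∈ (Finset.univ : Finset V), 0 ≤ p i ∧ p i ≤ 1 := fun i _ => by
    simp only [hp]; constructor <;> norm_num
  have hEx : ∀ S : Finset V, Ex p Finset.univ (fun T => ((S ∩ T).card : ℝ)) = S.card / 2 := by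
    intro S
    have : (fun T : Finset V => ((S ∩ T).card : ℝ)) =
        fun T => ∑ v ∈ S, if v ∈ T then (1:ℝ) else 0 := by
      funext T
      rw [Finset.sum_boole, Finset.filter_mem_eq_inter]
    rw [this, Ex_sum, Finset.sum_congr rfl fun v _ => Ex_mem_one (Finset.mem_univ v)]
    simp [hp, div_eq_mul_inv]
  have hinf : ∀ S : Finset V, ∀ i ∈ (Finset.univ : Finset V), ∀ t ⊆ Finset.univ, i ∉ t →
      |((S ∩ insert i t).card : ℝ) - ((S ∩ t).card : ℝ)| ≤ 1 := by
    intro S i _ t _ hi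
    by_cases hiS : i ∈ S
    · rw [Finset.inter_insert_of_mem hiS, Finset.card_insert_of_notMem (by simp [hi])]
      simp
    · rw [Finset.inter_insert_of_notMem hiS]; simp
  have hS : ∑ i ∈ (Finset.univ : Finset V), p i * (1:ℝ) ^ 2 ≤ n := by
    have : (0:ℝ) ≤ (Fintype.card V : ℝ) := by positivity
    simp only [hp, hnn, one_pow, mul_one, Finset.sum_const, Finset.card_univ, nsmul_eq_mul]
    linarith
  have hexp : Real.exp (l ^ 2 * n - l * (ξ * n)) ≤ Real.exp (-(l * ξ / 2 * n)) := by
    apply Real.exp_le_exp.2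
    have h1 : l ≤ ξ / 2 := min_le_right _ _
    have h2 : 0 ≤ n := by positivity
    have h3 : l * n * l ≤ l * n * (ξ / 2) := by gcongr
    nlinarith
  have hup : ∀ S : Finset V, Ex p Finset.univ (fun T =>
      if S.card / 2 + ξ * n < ((S ∩ T).card : ℝ) then 1 else 0) ≤
        Real.exp (-(l * ξ / 2 * n)) := by
    intro S
    have := Ex_tail Finset.univ hp01 (fun _ => 1) (fun T => ((S ∩ T).card : ℝ)) (hinf S) l (ξ * n) n
      hl0 (fun _ _ => by rw [mul_one]; exact min_le_left _ _) hS
    rw [hEx S] at this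
    exact this.trans hexp
  have hlo : ∀ S : Finset V, Ex p Finset.univ (fun T =>
      if ((S ∩ T).card : ℝ) < S.card / 2 - ξ * n then 1 else 0) ≤
        Real.exp (-(l * ξ / 2 * n)) := by
    intro S
    have := Ex_tail_lower Finset.univ hp01 (fun _ => 1) (fun T => ((S ∩ T).card : ℝ)) (hinf S) l
      (ξ * n) n hl0 (fun _ _ => by rw [mul_one]; exact min_le_left _ _) hS
    rw [hEx S] at this
    exact this.trans hexp
  obtain ⟨T, -, hT⟩ := Ex_exists Finset.univ hp01 (fun T => ∑ S ∈ 𝓕,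
    ((if S.card / 2 + ξ * n < ((S ∩ T).card : ℝ) then 1 else 0) +
      (if ((S ∩ T).card : ℝ) < S.card / 2 - ξ * n then 1 else 0))) (by
    rw [Ex_sum]
    calc _ ≤ ∑ S ∈ 𝓕, 2 * Real.exp (-(l * ξ / 2 * n)) := by
          refine Finset.sum_le_sum fun S _ => ?_
          rw [Ex_add]
          linarith [hup S, hlo S]
      _ = 𝓕.card * (2 * Real.exp (-(l * ξ / 2 * n))) := by simp
      _ ≤ K * n ^ 2 * (2 * Real.exp (-(l * ξ / 2 * n))) := by gcongr
      _ = 2 * K * n ^ 2 * Real.exp (-(l * ξ / 2 * n)) := by ring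
      _ < 1 := hn₀ _ hn)
  refine ⟨T, fun S hS => ?_⟩
  by_contra hcon
  have h0 : ∀ S ∈ 𝓕, (0:ℝ) ≤ ((if S.card / 2 + ξ * n < ((S ∩ T).card : ℝ) then 1 else 0) +
      (if ((S ∩ T).card : ℝ) < S.card / 2 - ξ * n then 1 else 0)) := fun S _ => by
    split_ifs <;> norm_num
  have h1 := (Finset.single_le_sum h0 hS).trans_lt hT
  by_cases c1 : (S.card : ℝ) / 2 + ξ * n < ((S ∩ T).card : ℝ)
  · rw [if_pos c1] at h1
    split_ifs at h1 <;> norm_num at h1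
  · by_cases c2 : ((S ∩ T).card : ℝ) < S.card / 2 - ξ * n
    · rw [if_pos c2] at h1
      split_ifs at h1; norm_num at h1
    · apply hcon
      rw [abs_le]
      constructor <;> linarith

/-- Iterated halving: a labelling with `2 ^ m` labels which splits every member of the family
almost evenly. -/
lemma labelling (m : ℕ) (ξ K : ℝ) (hξ : 0 < ξ) : ∃ n₀ : ℕ, ∀ (V : Type) [Fintype V] [DecidableEq V]
    (𝓕 : Finset (Finset V)), n₀ ≤ Fintype.card V → (𝓕.card : ℝ) ≤ K * (Fintype.card V : ℝ) ^ 2 →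
    ∃ lab : V → ℕ, (∀ v, lab v < 2 ^ m) ∧ ∀ S ∈ 𝓕, ∀ c < 2 ^ m,
      |((S.filter fun v => lab v = c).card : ℝ) - S.card / 2 ^ m| ≤ ξ * (Fintype.card V : ℝ) := by
  induction m generalizing ξ with
  | zero =>
    refine ⟨0, fun V _ _ 𝓕 _ _ => ⟨fun _ => 0, by simp, fun S _ c hc => ?_⟩⟩
    have : c = 0 := by simpa using hc
    subst this
    simp only [Finset.filter_true, pow_zero, div_one, sub_self, abs_zero]
    positivity
  | succ m ih =>
    obtain ⟨n₁, h₁⟩ := ih (ξ / 2) (by positivity)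
    obtain ⟨n₂, h₂⟩ := halving (ξ / 2) (2 ^ m * K) (by positivity)
    refine ⟨max n₁ n₂, fun V _ _ 𝓕 hn hF => ?_⟩
    obtain ⟨lab, hlab, hspl⟩ := h₁ V 𝓕 ((le_max_left _ _).trans hn) hF
    set 𝓖 : Finset (Finset V) := (𝓕 ×ˢ Finset.range (2 ^ m)).image
      (fun q => q.1.filter fun v => lab v = q.2) with h𝓖
    have hG : (𝓖.card : ℝ) ≤ 2 ^ m * K * (Fintype.card V : ℝ) ^ 2 := by
      have h1 : 𝓖.card ≤ 𝓕.card * 2 ^ m := by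
        refine Finset.card_image_le.trans ?_
        rw [Finset.card_product, Finset.card_range]
      calc (𝓖.card : ℝ) ≤ 𝓕.card * 2 ^ m := by exact_mod_cast h1
        _ ≤ K * (Fintype.card V : ℝ) ^ 2 * 2 ^ m := by gcongr
        _ = _ := by ring
    obtain ⟨T, hT⟩ := h₂ V 𝓖 ((le_max_right _ _).trans hn) hG
    refine ⟨fun v => 2 * lab v + if v ∈ T then 1 else 0, fun v => ?_, fun S hS c hc => ?_⟩
    · have := hlab v
      rw [pow_succ]
      dsimp only
      split_ifs <;> omega
    · rw [pow_succ] at hc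
      have hc2 : c / 2 < 2 ^ m := by omega
      have a1 := hspl S hS (c / 2) hc2
      have a2 := hT (S.filter fun v => lab v = c / 2) (Finset.mem_image.2
        ⟨(S, c / 2), Finset.mem_product.2 ⟨hS, Finset.mem_range.2 hc2⟩, rfl⟩)
      set S' := S.filter fun v => lab v = c / 2 with hS'
      have h1 : (S.card : ℝ) / 2 ^ (m + 1) = S.card / 2 ^ m / 2 := by
        rw [pow_succ, div_div]
      rw [h1]
      have a1' := abs_le.1 a1
      have a2' := abs_le.1 a2
      rcases Nat.mod_two_eq_zero_or_one c with h0 | h0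
      · have h2 : (S.filter fun v => (2 * lab v + if v ∈ T then 1 else 0) = c) = S' \ T := by
          ext v
          simp only [hS', Finset.mem_filter, Finset.mem_sdiff]
          by_cases hv : v ∈ T <;> simp only [hv, if_true, if_false] <;> grind
        have h3 : ((S' \ T).card : ℝ) = S'.card - (S' ∩ T).card := by
          rw [eq_sub_iff_add_eq]
          exact_mod_cast Finset.card_sdiff_add_card_inter S' T
        rw [h2, h3, abs_le]
        constructor <;> linarith
      · have h2 : (S.filter fun v => (2 * lab v + if v ∈ T then 1 else 0) = c) = S' ∩ T := by
          ext v
          simp only [hS', Finset.mem_filter, Finset.mem_inter]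
          by_cases hv : v ∈ T <;> simp only [hv, if_true, if_false] <;> grind
        rw [h2, abs_le]
        constructor <;> linarith

/-! ### Short cycles generating the even subgraphs of a structured graph -/

section gens
variable {V : Type} [Fintype V] [DecidableEq V]

lemma exists_enum (s : Finset V) (x : V) : ∃ f : ℕ → V, Set.InjOn f (Set.Iio s.card) ∧
    ∀ y, y ∈ s ↔ ∃ i < s.card, f i = y := by
  refine ⟨fun i => s.toList.getD i x, ?_, ?_⟩
  · intro i hi j hj hij
    rw [Set.mem_Iio, ← Finset.length_toList] at hi hj
    simp only [List.getD_eq_getElem _ _ hi, List.getD_eq_getElem _ _ hj] at hij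
    exact (List.Nodup.getElem_inj_iff s.nodup_toList).1 hij
  · intro y
    rw [← Finset.mem_toList, List.mem_iff_getElem, ← Finset.length_toList]
    constructor
    · rintro ⟨i, hi, h⟩
      exact ⟨i, hi, by simp only [List.getD_eq_getElem _ _ hi, h]⟩
    · rintro ⟨i, hi, h⟩
      exact ⟨i, hi, by simpa only [List.getD_eq_getElem _ _ hi] using h⟩

/-- The path `x j σ` as a vector over `𝔽₂`, or just the edge `x j` if `j = σ`. -/
noncomputable def pathVec (x σ j : V) : Sym2 V → ZMod 2 :=
  Pi.single s(x, j) 1 + if j = σ then 0 else Pi.single s(j, σ) 1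

/-- The degree of `v`, modulo two, in an edge vector. -/
def degVec (v : V) : (Sym2 V → ZMod 2) →ₗ[ZMod 2] ZMod 2 where
  toFun f := ∑ x, f s(v, x)
  map_add' f g := by simp [Finset.sum_add_distrib]
  map_smul' c f := by simp [Finset.mul_sum]

lemma degVec_single (v a b : V) (hab : a ≠ b) :
    degVec v (Pi.single s(a, b) 1) = (if v = a then 1 else 0) + if v = b then 1 else 0 := by
  change ∑ x, (Pi.single s(a, b) (1 : ZMod 2) : Sym2 V → ZMod 2) s(v, x) = _
  simp only [Pi.single_apply, Sym2.eq_iff]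
  by_cases h1 : v = a
  · subst h1
    simp [hab]
  · by_cases h2 : v = b
    · subst h2
      simp [h1]
    · simp [h1, h2]

lemma degVec_pathVec (v x σ j : V) (hxj : x ≠ j) :
    degVec v (pathVec x σ j) = (if v = x then 1 else 0) + if v = σ then 1 else 0 := by
  unfold pathVec
  rw [map_add, degVec_single v x j hxj]
  by_cases h : j = σ
  · rw [if_pos h, map_zero, add_zero, h]
  · rw [if_neg h, degVec_single v j σ h]
    have : ∀ a b c : ZMod 2, a + b + (b + c) = a + c := by decide
    exact this _ _ _

/-- The points of the generator attached to `x`, `σ` and `j, i`: the triangle `x j i` if `σ` is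
one of `j, i`, and the four-cycle `x j σ i` otherwise. -/
def genPt (x σ j i : V) (k : ℕ) : V :=
  if σ = j ∨ σ = i then (if k = 0 then x else if k = 1 then j else i)
  else (if k = 0 then x else if k = 1 then j else if k = 2 then σ else i)

/-- The length of the generator. -/
def genLen (σ j i : V) : ℕ := if σ = j ∨ σ = i then 3 else 4

/-- The `k`-th edge of the cycle of length `m` with points `p 0, …, p (m - 1)`. -/
def slot (p : ℕ → V) (m k : ℕ) : Sym2 V := s(p k, p ((k + 1) % m))

lemma gen_vec (x σ j j' : V) (hj : j ≠ j') :
    ∑ k ∈ Finset.range (genLen σ j j'), (Pi.single (slot (genPt x σ j j') (genLen σ j j') k) 1 :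
      Sym2 V → ZMod 2) = pathVec x σ j + pathVec x σ j' := by
  unfold genLen
  split_ifs with h
  · simp only [Finset.sum_range_succ, Finset.sum_range_zero, zero_add, slot, genPt, h, if_true,
      pathVec]
    norm_num
    rcases h with rfl | rfl
    · rw [if_neg hj.symm, Sym2.eq_swap (a := j') (b := x), Sym2.eq_swap (a := j') (b := σ)]
      simp
      abel
    · rw [if_neg hj, Sym2.eq_swap (a := σ) (b := x)]
      simp
  · simp only [Finset.sum_range_succ, Finset.sum_range_zero, zero_add, slot, genPt, h, if_false,
      pathVec]
    push Not at h
    rw [if_neg h.1.symm, if_neg h.2.symm]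
    norm_num
    rw [Sym2.eq_swap (a := j') (b := x), Sym2.eq_swap (a := j') (b := σ)]
    abel


/-- The edge vector of the closed walk with points `p 0, …, p (m - 1)`. -/
noncomputable def cycVec (p : ℕ → V) (m : ℕ) : Sym2 V → ZMod 2 :=
  ∑ k ∈ Finset.range m, Pi.single (slot p m k) 1

lemma elim_one {W : Submodule (ZMod 2) (Sym2 V → ZMod 2)} (x σ : V) (S : Finset V) (c : V → ZMod 2)
    (hW : ∀ j ∈ S, ∀ j' ∈ S, pathVec x σ j + pathVec x σ j' ∈ W) (hc : ∑ j ∈ S, c j = 0) :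
    ∑ j ∈ S, c j • pathVec x σ j ∈ W := by
  rcases S.eq_empty_or_nonempty with rfl | ⟨j0, hj0⟩
  · simp
  have : ∑ j ∈ S, c j • pathVec x σ j = ∑ j ∈ S, c j • (pathVec x σ j + pathVec x σ j0) := by
    simp only [smul_add, Finset.sum_add_distrib, ← Finset.sum_smul, hc, zero_smul, add_zero]
  rw [this]
  exact W.sum_mem fun j hj => W.smul_mem _ (hW j hj j0 hj0)

/-- Every even vector supported on a graph lies in the span of short cycles through successive
vertices: the vertices are eliminated in the order of the rank `r`. -/
lemma elim_all (r : V → ℕ) (hr : Function.Injective r) (P : V → V → Prop) [DecidableRel P]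
    (hPs : ∀ a b, P a b → P b a) (hPi : ∀ a, ¬ P a a) (σ : V → V)
    (hσ : ∀ x j, P x j → r x < r j → r x < r (σ x) ∧ (P (σ x) j ∨ j = σ x))
    (W : Submodule (ZMod 2) (Sym2 V → ZMod 2))
    (hW : ∀ x j j', P x j → r x < r j → P x j' → r x < r j' →
      pathVec x (σ x) j + pathVec x (σ x) j' ∈ W) (N : ℕ) (hN : ∀ x, r x < N) (d : ℕ) :
    ∀ K, N ≤ K + d → ∀ f : Sym2 V → ZMod 2, (∀ a b, f s(a, b) ≠ 0 → P a b ∧ K ≤ r a ∧ K ≤ r b) →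
      (∀ v, degVec v f = 0) → f ∈ W := by
  induction d with
  | zero =>
    intro K hK f hf _
    have : f = 0 := by
      funext e
      induction e using Sym2.ind with
      | _ a b =>
        by_contra h
        have := hf a b h
        have := hN a
        omega
    rw [this]; exact W.zero_mem
  | succ d ih =>
    intro K hK f hf hd
    by_cases hx : ∃ x, r x = K
    swap
    · refine ih (K + 1) (by omega) f (fun a b h => ?_) hd
      obtain ⟨h1, h2, h3⟩ := hf a b h
      have h4 : r a ≠ K := fun h => hx ⟨a, h⟩
      have h5 : r b ≠ K := fun h => hx ⟨b, h⟩
      exact ⟨h1, by omega, by omega⟩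
    obtain ⟨x, hx⟩ := hx
    set S : Finset V := Finset.univ.filter fun j => P x j ∧ r x < r j with hS
    have hmS : ∀ j, j ∈ S ↔ P x j ∧ r x < r j := by simp [hS]
    have hout : ∀ j, j ∉ S → f s(x, j) = 0 := by
      intro j hj
      by_contra h
      obtain ⟨h1, h2, h3⟩ := hf x j h
      have h4 : r x ≠ r j := fun h => hPi x (by have := hr h; rw [← this] at h1; exact h1)
      exact hj ((hmS j).2 ⟨h1, by omega⟩)
    have hsum : ∑ j ∈ S, f s(x, j) = 0 := by
      rw [← hd x]
      exact Finset.sum_subset (Finset.subset_univ _) fun j _ hj => hout j hj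
    have hmem := elim_one (W := W) x (σ x) S (fun j => f s(x, j))
      (fun j hj j' hj' => by
        rw [hmS] at hj hj'
        exact hW x j j' hj.1 hj.2 hj'.1 hj'.2) hsum
    set g : Sym2 V → ZMod 2 := ∑ j ∈ S, f s(x, j) • pathVec x (σ x) j with hg
    have hgv : ∀ e, g e = (∑ j ∈ S, f s(x, j) * (if e = s(x, j) then 1 else 0)) +
        ∑ j ∈ S, f s(x, j) * (if j ≠ σ x ∧ e = s(j, σ x) then 1 else 0) := by
      intro e
      rw [hg, Finset.sum_apply, ← Finset.sum_add_distrib]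
      refine Finset.sum_congr rfl fun j _ => ?_
      simp only [pathVec, Pi.smul_apply, Pi.add_apply, Pi.single_apply, smul_eq_mul, mul_add]
      by_cases h : j = σ x <;> simp [h, Pi.single_apply]
    have hxS : x ∉ S := by simp [hmS]
    have hzero : ∀ b, (f + g) s(x, b) = 0 := by
      intro b
      rw [Pi.add_apply, hgv]
      have h2 : ∑ j ∈ S, f s(x, j) * (if j ≠ σ x ∧ s(x, b) = s(j, σ x) then 1 else 0) = 0 := by
        refine Finset.sum_eq_zero fun j hj => ?_
        rw [if_neg, mul_zero]
        rintro ⟨-, h⟩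
        have h3 := (hmS j).1 hj
        have h4 := (hσ x j h3.1 h3.2).1
        rcases Sym2.eq_iff.1 h with ⟨h, -⟩ | ⟨h, -⟩
        · rw [h] at hxS; exact hxS hj
        · rw [← h] at h4; omega
      rw [h2, add_zero]
      have h1 : ∀ j ∈ S, f s(x, j) * (if s(x, b) = s(x, j) then (1 : ZMod 2) else 0) =
          if b = j then f s(x, j) else 0 := by
        intro j hj
        by_cases h : b = j
        · simp [h]
        · rw [if_neg, if_neg h, mul_zero]
          intro h'
          exact h (Sym2.congr_right.1 h')
      rw [Finset.sum_congr rfl h1, Finset.sum_ite_eq]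
      split_ifs with hb
      · exact CharTwo.add_self_eq_zero _
      · rw [hout b hb, add_zero]
    have hfg : f + g ∈ W := by
      refine ih (K + 1) (by omega) (f + g) ?_ ?_
      · intro a b hab
        have hax : a ≠ x := by rintro rfl; exact hab (hzero b)
        have hbx : b ≠ x := by rintro rfl; rw [Sym2.eq_swap] at hab; exact hab (hzero a)
        by_cases hfab : f s(a, b) ≠ 0
        · obtain ⟨h1, h2, h3⟩ := hf a b hfab
          have h4 : r a ≠ K := fun h => hax (hr (h.trans hx.symm))
          have h5 : r b ≠ K := fun h => hbx (hr (h.trans hx.symm))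
          exact ⟨h1, by omega, by omega⟩
        · push Not at hfab
          rw [Pi.add_apply, hfab, zero_add, hgv] at hab
          have h1 : ∑ j ∈ S, f s(x, j) * (if s(a, b) = s(x, j) then (1 : ZMod 2) else 0) = 0 := by
            refine Finset.sum_eq_zero fun j hj => ?_
            rw [if_neg, mul_zero]
            intro h
            rcases Sym2.eq_iff.1 h with ⟨h, -⟩ | ⟨-, h⟩
            · exact hax h
            · exact hbx h
          rw [h1, zero_add] at hab
          obtain ⟨j, hj, hne⟩ := Finset.exists_ne_zero_of_sum_ne_zero hab
          have h3 := (hmS j).1 hj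
          have hh : j ≠ σ x ∧ s(a, b) = s(j, σ x) := by
            by_contra h
            rw [if_neg h, mul_zero] at hne
            exact hne rfl
          obtain ⟨h4, h5⟩ := hσ x j h3.1 h3.2
          have h6 := h5.resolve_right hh.1
          rcases Sym2.eq_iff.1 hh.2 with ⟨rfl, rfl⟩ | ⟨rfl, rfl⟩
          · exact ⟨hPs _ _ h6, by omega, by omega⟩
          · exact ⟨h6, by omega, by omega⟩
      · intro v
        rw [map_add, hd v, zero_add, hg, map_sum]
        have : ∀ j ∈ S, degVec v (f s(x, j) • pathVec x (σ x) j) =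
            f s(x, j) * ((if v = x then 1 else 0) + if v = σ x then 1 else 0) := by
          intro j hj
          rw [map_smul, degVec_pathVec _ _ _ _ (ne_of_mem_of_not_mem hj hxS).symm, smul_eq_mul]
        rw [Finset.sum_congr rfl this, ← Finset.sum_mul, hsum, zero_mul]
    have : f = (f + g) - g := by simp
    rw [this]
    exact W.sub_mem hfg hmem

end gens

section gens
variable {V : Type} [Fintype V] [DecidableEq V]

/-- The positions `(g, k)` at which the edge `e` occurs as the `k`-th edge of the cycle of `g`. -/
def inc {α : Type} [DecidableEq α] (Γ : Finset α) (m : α → ℕ) (p : α → ℕ → V) (e : Sym2 V) :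
    Finset (α × ℕ) :=
  (Γ ×ˢ Finset.range 4).filter fun t => t.2 < m t.1 ∧ slot (p t.1) (m t.1) t.2 = e

lemma genPt_slot (x σ j j' : V) (k : ℕ) (hk : k < genLen σ j j') :
    ∃ a b, slot (genPt x σ j j') (genLen σ j j') k = s(a, b) ∧ (a = x ∨ a = σ) ∧
      (b = j ∨ b = j') := by
  unfold genLen at hk ⊢
  split_ifs at hk ⊢ with h
  · simp only [slot, genPt, h, if_true]
    interval_cases k
    · exact ⟨x, j, by simp, by simp, by simp⟩
    · rcases h with h | h
      · exact ⟨j, j', by simp, by simp [h], by simp⟩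
      · exact ⟨j', j, by simp [Sym2.eq_swap], by simp [h], by simp⟩
    · exact ⟨x, j', by simp [Sym2.eq_swap], by simp, by simp⟩
  · simp only [slot, genPt, h, if_false]
    interval_cases k
    · exact ⟨x, j, by simp, by simp, by simp⟩
    · exact ⟨σ, j, by simp [Sym2.eq_swap], by simp, by simp⟩
    · exact ⟨σ, j', by simp, by simp, by simp⟩
    · exact ⟨x, j', by simp [Sym2.eq_swap], by simp, by simp⟩

lemma genPt_adj (P : V → V → Prop) (hPs : ∀ a b, P a b → P b a) (x σ j j' : V)
    (h1 : P x j) (h2 : P x j') (h3 : P σ j ∨ j = σ) (h4 : P σ j' ∨ j' = σ) (hj : j ≠ j')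
    (k : ℕ) (hk : k < genLen σ j j') :
    P (genPt x σ j j' k) (genPt x σ j j' ((k + 1) % genLen σ j j')) := by
  unfold genLen at hk ⊢
  split_ifs at hk ⊢ with h
  · simp only [genPt, h, if_true]
    interval_cases k
    · simpa using h1
    · rcases h with rfl | rfl
      · simpa using h4.resolve_right hj.symm
      · simpa using hPs _ _ (h3.resolve_right hj)
    · simpa using hPs _ _ h2
  · push Not at h
    have h' : ¬ (σ = j ∨ σ = j') := by simp [h]
    simp only [genPt, h', if_false]
    interval_cases k
    · simpa using h1
    · simpa using hPs _ _ (h3.resolve_right h.1.symm)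
    · simpa using h4.resolve_right h.2.symm
    · simpa using hPs _ _ h2

lemma genPt_inj (x σ j j' : V) (h1 : x ≠ j) (h2 : x ≠ j') (h3 : j ≠ j') (h4 : x ≠ σ) :
    Set.InjOn (genPt x σ j j') (Set.Iio (genLen σ j j')) := by
  intro a ha b hb hab
  rw [Set.mem_Iio] at ha hb
  unfold genLen at ha hb
  split_ifs at ha hb with h
  · simp only [genPt, h, if_true] at hab
    interval_cases a <;> interval_cases b <;> simp_all
  · simp only [genPt, h, if_false] at hab
    push Not at h
    interval_cases a <;> interval_cases b <;> simp_all [eq_comm]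

/-- The even subgraphs of the pair graph `P` are generated, modulo two, by cycles of length three
or four among which every pair occurs a bounded number of times. -/
theorem generators (r : V → ℕ) (hr : Function.Injective r) (P : V → V → Prop) [DecidableRel P]
    (hPs : ∀ a b, P a b → P b a) (hPi : ∀ a, ¬ P a a) (σ : V → V) (c : V → Bool)
    (hσ : ∀ x j, P x j → r x < r j → r x < r (σ x) ∧ (P (σ x) j ∨ j = σ x))
    (hinj : ∀ x x' j j', P x j → r x < r j → P x' j' → r x' < r j' → c x = c x' → σ x = σ x' →
      x = x') :
    ∃ (Γ : Finset (V × ℕ)) (m : V × ℕ → ℕ) (p : V × ℕ → ℕ → V),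
      (∀ g ∈ Γ, (m g = 3 ∨ m g = 4) ∧ Set.InjOn (p g) (Set.Iio (m g)) ∧
        ∀ k < m g, P (p g k) (p g ((k + 1) % m g))) ∧
      (∀ e, (inc Γ m p e).card ≤ 48) ∧
      ∀ L : Finset (Sym2 V), (∀ a b, s(a, b) ∈ L → P a b) → (∀ v, Even (deg L v)) →
        ∃ J ⊆ Γ, ∀ e, e ∈ L ↔ Odd (inc J m p e).card := by
  classical
  set S : V → Finset V := fun x => Finset.univ.filter fun j => P x j ∧ r x < r j with hS
  have hmS : ∀ x j, j ∈ S x ↔ P x j ∧ r x < r j := by simp [hS]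
  choose l hl1 hl2 using fun x => exists_enum (S x) x
  have hlm : ∀ x i, i < (S x).card → P x (l x i) ∧ r x < r (l x i) := fun x i hi =>
    (hmS x _).1 ((hl2 x _).2 ⟨i, hi, rfl⟩)
  obtain ⟨M, hM⟩ : ∃ M, ∀ x, (S x).card ≤ M := ⟨Fintype.card V, fun x => Finset.card_le_univ _⟩
  set Γ : Finset (V × ℕ) := (Finset.univ ×ˢ Finset.range M).filter
    fun g => g.2 + 1 < (S g.1).card with hΓ
  have hmΓ : ∀ g, g ∈ Γ ↔ g.2 + 1 < (S g.1).card := by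
    intro g
    simp only [hΓ, Finset.mem_filter, Finset.mem_product, Finset.mem_univ, true_and,
      Finset.mem_range, and_iff_right_iff_imp]
    have := hM g.1
    omega
  set m : V × ℕ → ℕ := fun g => genLen (σ g.1) (l g.1 g.2) (l g.1 (g.2 + 1)) with hm
  set p : V × ℕ → ℕ → V := fun g => genPt g.1 (σ g.1) (l g.1 g.2) (l g.1 (g.2 + 1)) with hp
  have hne : ∀ g ∈ Γ, l g.1 g.2 ≠ l g.1 (g.2 + 1) := by
    intro g hg h
    rw [hmΓ] at hg
    have := hl1 g.1 (Set.mem_Iio.2 (by omega)) (Set.mem_Iio.2 hg) h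
    omega
  have hm34 : ∀ g, m g = 3 ∨ m g = 4 := by
    intro g; simp only [hm, genLen]; split_ifs <;> simp
  refine ⟨Γ, m, p, ?_, ?_, ?_⟩
  · intro g hg
    have hg' := (hmΓ g).1 hg
    obtain ⟨a1, a2⟩ := hlm g.1 g.2 (by omega)
    obtain ⟨b1, b2⟩ := hlm g.1 (g.2 + 1) hg'
    have hxl : ∀ y, P g.1 y → g.1 ≠ y := fun y hy h => hPi y (by rw [h] at hy; exact hy)
    have hs := hσ _ _ a1 a2
    refine ⟨hm34 g, genPt_inj _ _ _ _ (hxl _ a1) (hxl _ b1) (hne g hg) ?_, fun k hk => ?_⟩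
    · intro h; rw [← h] at hs; omega
    · exact genPt_adj P hPs _ _ _ _ a1 b1 hs.2 (hσ _ _ b1 b2).2 (hne g hg) k hk
  · intro e
    induction e using Sym2.ind with
    | _ u v =>
      set Q : V → V → Finset (V × ℕ) := fun u v => Γ.filter fun g => (u = g.1 ∨ u = σ g.1) ∧
        (v = l g.1 g.2 ∨ v = l g.1 (g.2 + 1)) with hQ
      have hQ6 : ∀ u v, (Q u v).card ≤ 6 := by
        intro u v
        have : (Finset.univ : Finset (Fin 3 × Bool)).card = 6 := by simp
        rw [← this]
        refine Finset.card_le_card_of_injOn (fun g =>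
          ((if g.1 = u then 0 else if c g.1 then 1 else 2 : Fin 3), decide (v = l g.1 g.2)))
          (fun _ _ => Finset.mem_coe.2 (Finset.mem_univ _)) ?_
        rintro ⟨x, i⟩ hg ⟨x', i'⟩ hg' h
        simp only [hQ, Finset.coe_filter, Set.mem_ofPred_eq] at hg hg'
        obtain ⟨h1, h2, h3⟩ := hg
        obtain ⟨h1', h2', h3'⟩ := hg'
        rw [hmΓ] at h1 h1'
        simp only at h1 h1'
        rw [Prod.mk.injEq] at h
        obtain ⟨e1, e2⟩ := h
        have hxx : x = x' := by
          obtain ⟨a1, a2⟩ := hlm x i (by omega)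
          obtain ⟨b1, b2⟩ := hlm x' i' (by omega)
          simp only at e1
          by_cases q1 : x = u
          · by_cases q2 : x' = u
            · rw [q1, q2]
            · rw [if_pos q1, if_neg q2] at e1
              split_ifs at e1 <;> exact absurd e1 (by decide)
          · by_cases q2 : x' = u
            · rw [if_neg q1, if_pos q2] at e1
              split_ifs at e1 <;> exact absurd e1 (by decide)
            · rw [if_neg q1, if_neg q2] at e1
              refine hinj x x' _ _ a1 a2 b1 b2 ?_ ?_
              · cases hc : c x <;> cases hc' : c x' <;> rw [hc, hc'] at e1 <;> first | rfl | exact absurd e1 (by decide)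
              · have s1 := h2.resolve_left (fun h => q1 h.symm)
                have s2 := h2'.resolve_left (fun h => q2 h.symm)
                exact s1.symm.trans s2
        subst hxx
        rw [Prod.mk.injEq]
        refine ⟨rfl, ?_⟩
        rw [decide_eq_decide] at e2
        simp only at e2 h3 h3'
        by_cases q : v = l x i
        · exact hl1 x (Set.mem_Iio.2 (by omega)) (Set.mem_Iio.2 (by omega)) (q.symm.trans (e2.1 q))
        · have s1 := h3.resolve_left q
          have s2 := h3'.resolve_left (fun h => q (e2.2 h))
          have := hl1 x (Set.mem_Iio.2 h1) (Set.mem_Iio.2 h1') (s1.symm.trans s2)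
          omega
      calc (inc Γ m p s(u, v)).card ≤ ((Q u v ∪ Q v u) ×ˢ Finset.range 4).card := by
            refine Finset.card_le_card ?_
            rintro ⟨g, k⟩ hgk
            simp only [inc, Finset.mem_filter, Finset.mem_product] at hgk
            obtain ⟨⟨h1, h2⟩, h3, h4⟩ := hgk
            simp only [Finset.mem_product, h2, and_true, Finset.mem_union]
            obtain ⟨a, b, h5, h6, h7⟩ := genPt_slot _ _ _ _ k h3
            have h8 : s(a, b) = s(u, v) := h5.symm.trans h4
            rcases Sym2.eq_iff.1 h8 with ⟨rfl, rfl⟩ | ⟨rfl, rfl⟩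
            · left; exact Finset.mem_filter.2 ⟨h1, h6, h7⟩
            · right; exact Finset.mem_filter.2 ⟨h1, h6, h7⟩
        _ ≤ 12 * 4 := by
            rw [Finset.card_product, Finset.card_range]
            refine Nat.mul_le_mul_right _ ((Finset.card_union_le _ _).trans ?_)
            have := hQ6 u v
            have := hQ6 v u
            omega
  · intro L hL hLe
    set f : Sym2 V → ZMod 2 := fun e => if e ∈ L then 1 else 0 with hf
    set W : Submodule (ZMod 2) (Sym2 V → ZMod 2) :=
      Submodule.span (ZMod 2) ((fun g => cycVec (p g) (m g)) '' (Γ : Set (V × ℕ))) with hWdef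
    have hgW : ∀ g ∈ Γ, pathVec g.1 (σ g.1) (l g.1 g.2) + pathVec g.1 (σ g.1) (l g.1 (g.2 + 1))
        ∈ W := by
      intro g hg
      rw [← gen_vec _ _ _ _ (hne g hg)]
      exact Submodule.subset_span ⟨g, hg, rfl⟩
    have hself : ∀ a : Sym2 V → ZMod 2, a + a = 0 := fun a => by
      funext e; exact CharTwo.add_self_eq_zero _
    have hW0 : ∀ x i, i < (S x).card → pathVec x (σ x) (l x 0) + pathVec x (σ x) (l x i) ∈ W := by
      intro x i
      induction i with
      | zero => intro _; rw [hself]; exact W.zero_mem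
      | succ i ih =>
        intro hi
        have h1 := W.add_mem (ih (by omega)) (hgW (x, i) ((hmΓ _).2 hi))
        have h2 : pathVec x (σ x) (l x 0) + pathVec x (σ x) (l x (i + 1)) =
          pathVec x (σ x) (l x 0) + pathVec x (σ x) (l x i) +
            (pathVec x (σ x) (l x i) + pathVec x (σ x) (l x (i + 1))) := by
          have := hself (pathVec x (σ x) (l x i))
          rw [add_assoc, ← add_assoc (pathVec x (σ x) (l x i)), this, zero_add]
        rw [h2]; exact h1
    have hW : ∀ x j j', P x j → r x < r j → P x j' → r x < r j' →
        pathVec x (σ x) j + pathVec x (σ x) j' ∈ W := by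
      intro x j j' a1 a2 b1 b2
      obtain ⟨i, hi, rfl⟩ := (hl2 x j).1 ((hmS _ _).2 ⟨a1, a2⟩)
      obtain ⟨i', hi', rfl⟩ := (hl2 x j').1 ((hmS _ _).2 ⟨b1, b2⟩)
      have h1 := W.add_mem (hW0 x i hi) (hW0 x i' hi')
      have h2 : pathVec x (σ x) (l x i) + pathVec x (σ x) (l x i') =
        pathVec x (σ x) (l x 0) + pathVec x (σ x) (l x i) +
            (pathVec x (σ x) (l x 0) + pathVec x (σ x) (l x i')) := by
        have := hself (pathVec x (σ x) (l x 0))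
        rw [add_comm (pathVec x (σ x) (l x 0)) (pathVec x (σ x) (l x i)), add_assoc,
          ← add_assoc (pathVec x (σ x) (l x 0)), this, zero_add]
      rw [h2]; exact h1
    obtain ⟨N, hN⟩ : ∃ N, ∀ x, r x < N :=
      ⟨(Finset.univ.sup r) + 1, fun x => Nat.lt_succ_of_le (Finset.le_sup (Finset.mem_univ x))⟩
    have hfW : f ∈ W := by
      refine elim_all r hr P hPs hPi σ hσ W hW N hN N 0 (by omega) f ?_ ?_
      · intro a b hab
        refine ⟨hL a b ?_, by omega, by omega⟩
        by_contra h
        simp [hf, h] at hab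
      · intro v
        change ∑ x, f s(v, x) = 0
        simp only [hf]
        rw [Finset.sum_boole]
        exact (ZMod.natCast_eq_zero_iff_even).2 (hLe v)
    rw [hWdef, Submodule.mem_span_image_finset_iff_exists_fun] at hfW
    obtain ⟨q', hq'⟩ := hfW
    set q : V × ℕ → ZMod 2 := fun g => if h : g ∈ Γ then q' ⟨g, h⟩ else 0 with hqdef
    have hq : ∑ g ∈ Γ, q g • cycVec (p g) (m g) = f := by
      rw [← hq', ← Finset.sum_coe_sort Γ]
      refine Finset.sum_congr rfl fun g _ => ?_
      simp [hqdef]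
    refine ⟨Γ.filter fun g => q g = 1, Finset.filter_subset _ _, fun e => ?_⟩
    have h1 : ((inc (Γ.filter fun g => q g = 1) m p e).card : ZMod 2) = f e := by
      rw [← hq, Finset.sum_apply]
      have h2 : inc (Γ.filter fun g => q g = 1) m p e =
        ((Γ.filter fun g => q g = 1) ×ˢ Finset.range 4).filter
          fun t => t.2 < m t.1 ∧ slot (p t.1) (m t.1) t.2 = e := rfl
      rw [h2, ← Finset.sum_boole, Finset.sum_product, Finset.sum_filter]
      refine Finset.sum_congr rfl fun g _ => ?_
      have h3 : ∀ a : ZMod 2, a ≠ 1 → a = 0 := by decide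
      by_cases hg : q g = 1
      · rw [if_pos hg, hg, one_smul, cycVec, Finset.sum_apply]
        have h4 : Finset.range (m g) = (Finset.range 4).filter fun k => k < m g := by
          ext k
          simp only [Finset.mem_range, Finset.mem_filter]
          rcases hm34 g with h | h <;> omega
        rw [h4, Finset.sum_filter]
        refine Finset.sum_congr rfl fun k _ => ?_
        simp only [Pi.single_apply, eq_comm (a := e)]
        by_cases hk : k < m g <;> simp [hk]
      · rw [if_neg hg, h3 _ hg, zero_smul, Pi.zero_apply]
    rw [← ZMod.natCast_eq_one_iff_odd, h1]
    simp [hf]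

end gens

/-! ### Absorbers for cycles of length four, six and eight -/

/-- The pairs `(i, j)` with `j < i` from `S`, representing the edges of the complete graph on `S`. -/
def clq (S : Finset ℕ) : Finset (ℕ × ℕ) := (S ×ˢ S).filter fun q => q.2 < q.1

/-- The union of the complete graphs on the members of a list. -/
def clqs (t : List (Finset ℕ)) : Finset (ℕ × ℕ) := t.foldr (fun S I => clq S ∪ I) ∅

/-- The cycle `0, 1, …, c - 1`. -/
def cycIx (c : ℕ) : Finset (ℕ × ℕ) :=
  ((Finset.range c).filter fun k => 1 ≤ k).image (fun k => (k, k - 1)) ∪ {(c - 1, 0)}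

/-- The pattern with `r` roots whose edges are the pairs in `I`. -/
def patOf (r N : ℕ) (I : Finset (ℕ × ℕ)) : Pat where
  r := r
  N := N
  back i := (I.filter fun q => q.1 = i).image Prod.snd

section gadgets
variable {V : Type} [Fintype V] [DecidableEq V]

/-- The edges obtained from index pairs under a map `F` of the vertices. -/
def imx (F : ℕ → V) (I : Finset (ℕ × ℕ)) : Finset (Sym2 V) := I.image fun q => s(F q.1, F q.2)

lemma imx_union (F : ℕ → V) (I I' : Finset (ℕ × ℕ)) : imx F (I ∪ I') = imx F I ∪ imx F I' :=
  Finset.image_union _ _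

lemma imx_disjoint {F : ℕ → V} {N : ℕ} (hF : Set.InjOn F (Set.Iio N)) {I I' : Finset (ℕ × ℕ)}
    (hI : ∀ q ∈ I, q.2 < q.1 ∧ q.1 < N) (hI' : ∀ q ∈ I', q.2 < q.1 ∧ q.1 < N)
    (h : Disjoint I I') : Disjoint (imx F I) (imx F I') := by
  rw [Finset.disjoint_left]
  intro e h1 h2
  obtain ⟨q, hq, rfl⟩ := Finset.mem_image.1 h1
  obtain ⟨q', hq', he⟩ := Finset.mem_image.1 h2
  obtain ⟨a1, a2⟩ := hI q hq
  obtain ⟨b1, b2⟩ := hI' q' hq'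
  rcases Sym2.eq_iff.1 he with ⟨e1, e2⟩ | ⟨e1, e2⟩
  · have e1 := hF (Set.mem_Iio.2 b2) (Set.mem_Iio.2 a2) e1
    have e2 := hF (Set.mem_Iio.2 (b1.trans b2)) (Set.mem_Iio.2 (a1.trans a2)) e2
    rw [Prod.ext e1 e2] at hq'
    exact Finset.disjoint_left.1 h hq hq'
  · have e1 := hF (Set.mem_Iio.2 b2) (Set.mem_Iio.2 (a1.trans a2)) e1
    have e2 := hF (Set.mem_Iio.2 (b1.trans b2)) (Set.mem_Iio.2 a2) e2
    omega

lemma imx_clq {F : ℕ → V} {N : ℕ} (hF : Set.InjOn F (Set.Iio N)) {S : Finset ℕ}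
    (hS : ∀ i ∈ S, i < N) : imx F (clq S) = edges (S.image F) := by
  ext e
  constructor
  · intro h
    obtain ⟨q, hq, rfl⟩ := Finset.mem_image.1 h
    simp only [clq, Finset.mem_filter, Finset.mem_product] at hq
    refine mem_edges.2 ⟨Finset.mem_image_of_mem _ hq.1.1, Finset.mem_image_of_mem _ hq.1.2, ?_⟩
    intro h
    have := hF (Set.mem_Iio.2 (hS _ hq.1.1)) (Set.mem_Iio.2 (hS _ hq.1.2)) h
    omega
  · induction e using Sym2.ind with
    | _ a b =>
      intro h
      obtain ⟨h1, h2, h3⟩ := mem_edges.1 h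
      obtain ⟨i, hi, rfl⟩ := Finset.mem_image.1 h1
      obtain ⟨j, hj, rfl⟩ := Finset.mem_image.1 h2
      refine Finset.mem_image.2 ?_
      rcases lt_trichotomy i j with h | h | h
      · exact ⟨(j, i), by simp [clq, hi, hj, h], Sym2.eq_swap⟩
      · rw [h] at h3; exact absurd rfl h3
      · exact ⟨(i, j), by simp [clq, hi, hj, h], rfl⟩

lemma clqs_lt {N : ℕ} {t : List (Finset ℕ)} (h : ∀ S ∈ t, ∀ i ∈ S, i < N) :
    ∀ q ∈ clqs t, q.2 < q.1 ∧ q.1 < N := by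
  induction t with
  | nil => simp [clqs]
  | cons S t ih =>
    intro q hq
    rcases Finset.mem_union.1 (show q ∈ clq S ∪ clqs t from hq) with hq | hq
    · simp only [clq, Finset.mem_filter, Finset.mem_product] at hq
      exact ⟨hq.2, h S (by simp) _ hq.1.1⟩
    · exact ih (fun T hT => h T (by simp [hT])) q hq

/-- A list of index cliques of odd order, pairwise edge-disjoint, is mapped to a decomposition. -/
lemma Dec_clqs {F : ℕ → V} {N : ℕ} (hF : Set.InjOn F (Set.Iio N)) (t : List (Finset ℕ))
    (h : ∀ S ∈ t, ∀ i ∈ S, i < N) (ho : ∀ S ∈ t, S.card % 2 = 1)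
    (hd : t.Pairwise fun S T => clq S ∩ clq T = ∅) : Dec (imx F (clqs t)) := by
  induction t with
  | nil => simpa [clqs, imx] using Dec_empty
  | cons S t ih =>
    have hS : ∀ i ∈ S, i < N := h S (by simp)
    have ht : ∀ T ∈ t, ∀ i ∈ T, i < N := fun T hT => h T (by simp [hT])
    rw [List.pairwise_cons] at hd
    change Dec (imx F (clq S ∪ clqs t))
    rw [imx_union]
    refine Dec_union ?_ (ih ht (fun T hT => ho T (by simp [hT])) hd.2) ?_
    · rw [imx_clq hF hS]
      refine Dec_edges ?_
      rw [Finset.card_image_of_injOn, Nat.odd_iff]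
      · exact ho S (by simp)
      · exact hF.mono fun i hi => Set.mem_Iio.2 (hS i hi)
    · refine imx_disjoint hF ?_ (clqs_lt ht) ?_
      · intro q hq
        simp only [clq, Finset.mem_filter, Finset.mem_product] at hq
        exact ⟨hq.2, hS _ hq.1.1⟩
      · have hd1 := hd.1
        clear ih ho h hS ht hd
        induction t with
        | nil => simp [clqs]
        | cons T t ih =>
          change Disjoint (clq S) (clq T ∪ clqs t)
          rw [Finset.disjoint_union_right]
          exact ⟨Finset.disjoint_iff_inter_eq_empty.2 (hd1 T (by simp)),
            ih fun U hU => hd1 U (by simp [hU])⟩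

lemma patOf_img {r N : ℕ} {I : Finset (ℕ × ℕ)} (h : ∀ q ∈ I, r ≤ q.1 ∧ q.1 < N) (F : ℕ → V) :
    (patOf r N I).img F = imx F I := by
  ext e
  rw [Pat.mem_img]
  simp only [patOf, imx, Finset.mem_image, Finset.mem_filter]
  constructor
  · rintro ⟨i, h1, h2, j, ⟨q, ⟨hq, rfl⟩, rfl⟩, rfl⟩
    exact ⟨q, hq, rfl⟩
  · rintro ⟨q, hq, rfl⟩
    exact ⟨q.1, (h q hq).1, (h q hq).2, q.2, ⟨q, ⟨hq, rfl⟩, rfl⟩, rfl⟩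

lemma imx_cycIx (F : ℕ → V) (c : ℕ) (hc : 2 ≤ c) :
    imx F (cycIx c) = (Finset.range c).image (slot F c) := by
  ext e
  simp only [imx, cycIx, Finset.mem_image, Finset.mem_union, Finset.mem_filter, Finset.mem_range,
    Finset.mem_singleton, slot]
  constructor
  · rintro ⟨q, ⟨k, ⟨h1, h2⟩, rfl⟩ | rfl, rfl⟩
    · refine ⟨k - 1, by omega, ?_⟩
      rw [Nat.sub_add_cancel h2, Nat.mod_eq_of_lt h1, Sym2.eq_swap]
    · refine ⟨c - 1, by omega, ?_⟩
      rw [Nat.sub_add_cancel (by omega), Nat.mod_self]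
  · rintro ⟨k, h1, rfl⟩
    by_cases hk : k + 1 = c
    · refine ⟨(c - 1, 0), Or.inr rfl, ?_⟩
      rw [hk, Nat.mod_self, ← hk, Nat.add_sub_cancel]
    · refine ⟨(k + 1, k), Or.inl ⟨k + 1, ⟨by omega, by omega⟩, rfl⟩, ?_⟩
      rw [Nat.mod_eq_of_lt (by omega), Sym2.eq_swap]

end gadgets

/-- The cliques of the decomposition of the absorber itself: triangles `w i, w (i + 1), v (i + 1)`
for the cycle `v` and a closed trail `w` of new vertices, and for each 4-cycle of the trail two
further triangles through an apex. -/
def absA : ℕ → List (Finset ℕ)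
  | 4 => [{4, 5, 1}, {5, 6, 2}, {6, 7, 3}, {7, 4, 0}, {8, 4, 6}, {8, 5, 7}]
  | 6 => [{6, 7, 1}, {7, 8, 2}, {8, 6, 3}, {6, 9, 4}, {9, 10, 5}, {10, 6, 0}]
  | _ => [{8, 9, 1}, {9, 10, 2}, {10, 11, 3}, {11, 8, 4}, {8, 12, 5}, {12, 13, 6}, {13, 14, 7},
      {14, 8, 0}, {15, 8, 10}, {15, 9, 11}, {16, 8, 13}, {16, 12, 14}]

/-- The cliques of the decomposition of the absorber together with the cycle: triangles
`v i, v (i + 1), w i`, and the trail `w` filled up to triangles or complete graphs of order five. -/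
def absB : ℕ → List (Finset ℕ)
  | 4 => [{0, 1, 4}, {1, 2, 5}, {2, 3, 6}, {3, 0, 7}, {4, 5, 6, 7, 8}]
  | 6 => [{0, 1, 6}, {1, 2, 7}, {2, 3, 8}, {3, 4, 6}, {4, 5, 9}, {5, 0, 10}, {6, 7, 8}, {6, 9, 10}]
  | _ => [{0, 1, 8}, {1, 2, 9}, {2, 3, 10}, {3, 4, 11}, {4, 5, 8}, {5, 6, 12}, {6, 7, 13},
      {7, 0, 14}, {8, 9, 10, 11, 15}, {8, 12, 13, 14, 16}]

/-- The pattern of the absorber of a cycle of length `c`. -/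
def absPat (c : ℕ) : Pat := patOf c (if c = 4 then 9 else if c = 6 then 11 else 17) (clqs (absA c))

lemma absPat_r (c : ℕ) : (absPat c).r = c := rfl

lemma absPat_ok {c : ℕ} (hc : c = 4 ∨ c = 6 ∨ c = 8) : (absPat c).ok 5 17 := by
  have h1 : ∀ i < (absPat c).N, ∀ j ∈ (absPat c).back i, j < i := by
    rcases hc with rfl | rfl | rfl <;> decide +kernel
  have h2 : ∀ i < (absPat c).N, ((absPat c).back i).card ≤ 5 := by
    rcases hc with rfl | rfl | rfl <;> decide +kernel
  refine ⟨?_, ?_, ?_, fun i _ hi => h1 i hi, fun i _ hi => h2 i hi⟩ <;>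
    rcases hc with rfl | rfl | rfl <;> decide

lemma absPat_spec {V : Type} [Fintype V] [DecidableEq V] {c : ℕ} (hc : c = 4 ∨ c = 6 ∨ c = 8)
    (F : ℕ → V) (hF : Set.InjOn F (Set.Iio (absPat c).N)) :
    Dec ((absPat c).img F) ∧ Dec ((absPat c).img F ∪ (Finset.range c).image (slot F c)) := by
  have h2 : 2 ≤ c := by omega
  have himg : (absPat c).img F = imx F (clqs (absA c)) := by
    refine patOf_img ?_ F
    rcases hc with rfl | rfl | rfl <;> decide +kernel
  have hun : clqs (absA c) ∪ cycIx c = clqs (absB c) := by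
    rcases hc with rfl | rfl | rfl <;> decide +kernel
  rw [himg, ← imx_cycIx F c h2, ← imx_union, hun]
  constructor
  · refine Dec_clqs hF _ ?_ ?_ ?_ <;> rcases hc with rfl | rfl | rfl <;> decide +kernel
  · refine Dec_clqs hF _ ?_ ?_ ?_ <;> rcases hc with rfl | rfl | rfl <;> decide +kernel

/-! ### The omni-absorber -/

section core
variable {V : Type} [Fintype V] [DecidableEq V]

/-- The elements of `𝒞` are paths of length two (`cp c`) joining the ends of a pair `base c`, and
for two paths with the same ends `Ab` is a private absorber of the four-cycle they form. Given a
set `𝒰` of paths and a set `L` of pairs, each pair having an even number of paths plus pairs, the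
paths and pairs are removed two at a time, forming triangles and four-cycles. -/
lemma absorb_pairs {C : Type} [DecidableEq C] (𝒞 : Finset C) (base : C → Sym2 V)
    (cp : C → Finset (Sym2 V)) (Ab : C × C → Finset (Sym2 V)) (X Y : Finset (Sym2 V))
    (T : Finset (C × C))
    (hT : ∀ t, t ∈ T ↔ t.1 ∈ 𝒞 ∧ t.2 ∈ 𝒞 ∧ t.1 ≠ t.2 ∧ base t.1 = base t.2)
    (hcp : ∀ c ∈ 𝒞, ∀ c' ∈ 𝒞, c ≠ c' → Disjoint (cp c) (cp c'))
    (hcX : ∀ c ∈ 𝒞, Disjoint (cp c) X) (hcY : ∀ c ∈ 𝒞, Disjoint (cp c) Y) (hXY : Disjoint X Y)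
    (hAY : ∀ t ∈ T, Ab t ⊆ Y) (hAD : ∀ t ∈ T, Dec (Ab t ∪ (cp t.1 ∪ cp t.2)))
    (hAd : ∀ t ∈ T, ∀ t' ∈ T, t ≠ t' → Disjoint (Ab t) (Ab t'))
    (htri : ∀ c ∈ 𝒞, base c ∈ X → Dec (insert (base c) (cp c))) :
    ∀ (n : ℕ) (𝒰 : Finset C), 𝒰.card = n → 𝒰 ⊆ 𝒞 → ∀ L ⊆ X,
      (∀ e, e ∈ L ↔ Odd (𝒰.filter fun c => base c = e).card) →
      ∃ U : Finset (C × C), (∀ t ∈ U, t ∈ T ∧ t.1 ∈ 𝒰 ∧ t.2 ∈ 𝒰) ∧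
        Dec (𝒰.biUnion cp ∪ L ∪ U.biUnion Ab) := by
  intro n
  induction n using Nat.strong_induction_on with
  | _ n ih =>
  intro 𝒰 hn h𝒰 L hL hpar
  rcases 𝒰.eq_empty_or_nonempty with rfl | ⟨c, hc⟩
  · have : L = ∅ := by
      ext e; rw [hpar]; simp
    exact ⟨∅, by simp, by simpa [this] using Dec_empty⟩
  have hc𝒞 := h𝒰 hc
  have hdis : ∀ 𝒰' ⊆ 𝒰, ∀ c₁ ∈ 𝒰, c₁ ∉ 𝒰' → Disjoint (cp c₁) (𝒰'.biUnion cp) := by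
    intro 𝒰' h𝒰' c₁ h1 h2
    rw [Finset.disjoint_biUnion_right]
    intro c₂ h3
    exact hcp c₁ (h𝒰 h1) c₂ (h𝒰 (h𝒰' h3)) (fun h => h2 (h ▸ h3))
  have hUY : ∀ U : Finset (C × C), (∀ t ∈ U, t ∈ T) → U.biUnion Ab ⊆ Y := by
    intro U hU
    rw [Finset.biUnion_subset]
    exact fun t ht => hAY t (hU t ht)
  have hcovX : ∀ 𝒰' ⊆ 𝒰, Disjoint (𝒰'.biUnion cp) X := by
    intro 𝒰' h
    rw [Finset.disjoint_biUnion_left]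
    exact fun c hc => hcX c (h𝒰 (h hc))
  have hcovY : ∀ 𝒰' ⊆ 𝒰, Disjoint (𝒰'.biUnion cp) Y := by
    intro 𝒰' h
    rw [Finset.disjoint_biUnion_left]
    exact fun c hc => hcY c (h𝒰 (h hc))
  by_cases hbL : base c ∈ L
  · -- a triangle formed by the pair and one path
    have hsub : 𝒰.erase c ⊆ 𝒰 := Finset.erase_subset _ _
    obtain ⟨U, hU1, hU2⟩ := ih (𝒰.erase c).card
      (by rw [← hn]; exact Finset.card_erase_lt_of_mem hc) (𝒰.erase c) rfl (hsub.trans h𝒰)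
      (L.erase (base c)) ((Finset.erase_subset _ _).trans hL) (by
        intro e
        rw [Finset.filter_erase]
        by_cases he : e = base c
        · subst he
          have hm : c ∈ 𝒰.filter fun c' => base c' = base c := Finset.mem_filter.2 ⟨hc, rfl⟩
          have h1 := Finset.card_erase_add_one hm
          have h2 := (hpar (base c)).1 hbL
          rw [← h1, Nat.odd_add_one] at h2
          simp only [Finset.mem_erase, ne_eq, not_true_eq_false, false_and, h2]
        · have hm : c ∉ 𝒰.filter fun c' => base c' = e :=
            fun h => he (Finset.mem_filter.1 h).2.symm
          rw [Finset.erase_eq_of_notMem hm, ← hpar]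
          simp [he])
    refine ⟨U, fun t ht => ⟨(hU1 t ht).1, hsub (hU1 t ht).2.1, hsub (hU1 t ht).2.2⟩, ?_⟩
    have heq : 𝒰.biUnion cp ∪ L ∪ U.biUnion Ab = insert (base c) (cp c) ∪
        ((𝒰.erase c).biUnion cp ∪ L.erase (base c) ∪ U.biUnion Ab) := by
      conv_lhs => rw [← Finset.insert_erase hc, ← Finset.insert_erase hbL, Finset.biUnion_insert]
      ext e
      simp only [Finset.mem_union, Finset.mem_insert]
      tauto
    rw [heq]
    refine Dec_union (htri c hc𝒞 (hL hbL)) hU2 ?_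
    have hUY' := hUY U fun t ht => (hU1 t ht).1
    rw [Finset.disjoint_insert_left]
    constructor
    · simp only [Finset.mem_union, not_or]
      refine ⟨⟨fun h => ?_, by simp⟩, fun h => ?_⟩
      · exact Finset.disjoint_left.1 (hcovX _ hsub) h (hL hbL)
      · exact Finset.disjoint_left.1 hXY (hL hbL) (hUY' h)
    · rw [Finset.disjoint_union_right, Finset.disjoint_union_right]
      exact ⟨⟨hdis _ hsub c hc (by simp), (hcX c hc𝒞).mono_right
        ((Finset.erase_subset _ _).trans hL)⟩, (hcY c hc𝒞).mono_right hUY'⟩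
  · -- a four-cycle formed by two paths
    have hm : c ∈ 𝒰.filter fun c' => base c' = base c := Finset.mem_filter.2 ⟨hc, rfl⟩
    have hev : ¬ Odd (𝒰.filter fun c' => base c' = base c).card := fun h => hbL ((hpar _).2 h)
    obtain ⟨c', hc', hne⟩ : ∃ c' ∈ 𝒰.filter fun c' => base c' = base c, c' ≠ c := by
      by_contra hcon
      push Not at hcon
      have : (𝒰.filter fun c' => base c' = base c) = {c} :=
        Finset.eq_singleton_iff_unique_mem.2 ⟨hm, hcon⟩
      rw [this] at hev
      simp at hev
    obtain ⟨hc'𝒰, hbb⟩ := Finset.mem_filter.1 hc'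
    have hc'e : c' ∈ 𝒰.erase c := Finset.mem_erase.2 ⟨hne, hc'𝒰⟩
    set 𝒰' := (𝒰.erase c).erase c' with h𝒰'
    have hsub : 𝒰' ⊆ 𝒰 := (Finset.erase_subset _ _).trans (Finset.erase_subset _ _)
    obtain ⟨U, hU1, hU2⟩ := ih 𝒰'.card
      (by rw [← hn]; exact (Finset.card_erase_lt_of_mem hc'e).trans
            (Finset.card_erase_lt_of_mem hc)) 𝒰' rfl (hsub.trans h𝒰) L hL (by
        intro e
        rw [h𝒰', Finset.filter_erase, Finset.filter_erase, hpar]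
        by_cases he : e = base c
        · subst he
          have h1 := Finset.card_erase_add_one hm
          have h2 := Finset.card_erase_add_one (Finset.mem_erase.2 ⟨hne, hc'⟩)
          rw [← h1, ← h2, Nat.odd_add_one, Nat.odd_add_one, not_not]
        · rw [Finset.erase_eq_of_notMem, Finset.erase_eq_of_notMem]
          · simp [Ne.symm he]
          · intro h
            have := (Finset.mem_filter.1 (Finset.mem_of_mem_erase h)).2
            exact he (this.symm.trans hbb))
    have htT : (c, c') ∈ T := (hT _).2 ⟨hc𝒞, h𝒰 hc'𝒰, hne.symm, hbb.symm⟩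
    have hcU' : c ∉ 𝒰' := by simp [h𝒰']
    have hc'U' : c' ∉ 𝒰' := by simp [h𝒰']
    refine ⟨insert (c, c') U, ?_, ?_⟩
    · intro t ht
      rcases Finset.mem_insert.1 ht with rfl | ht
      · exact ⟨htT, hc, hc'𝒰⟩
      · exact ⟨(hU1 t ht).1, hsub (hU1 t ht).2.1, hsub (hU1 t ht).2.2⟩
    have heq : 𝒰.biUnion cp ∪ L ∪ (insert (c, c') U).biUnion Ab = Ab (c, c') ∪ (cp c ∪ cp c') ∪
        (𝒰'.biUnion cp ∪ L ∪ U.biUnion Ab) := by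
      conv_lhs => rw [← Finset.insert_erase hc, ← Finset.insert_erase hc'e, Finset.biUnion_insert,
        Finset.biUnion_insert, Finset.biUnion_insert]
      ext e
      simp only [Finset.mem_union, ← h𝒰']
      tauto
    rw [heq]
    refine Dec_union (hAD _ htT) hU2 ?_
    have hUY' := hUY U fun t ht => (hU1 t ht).1
    have hAb := hAY _ htT
    simp only [Finset.disjoint_union_left, Finset.disjoint_union_right]
    refine ⟨⟨⟨?_, ?_, ?_⟩, ?_, ?_, ?_⟩, ?_, ?_, ?_⟩
    · exact ((hcovY _ hsub).mono_right hAb).symm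
    · exact hdis _ hsub c hc hcU'
    · exact hdis _ hsub c' hc'𝒰 hc'U'
    · exact (hXY.mono hL hAb).symm
    · exact (hcX c hc𝒞).mono_right hL
    · exact (hcX c' (h𝒰 hc'𝒰)).mono_right hL
    · rw [Finset.disjoint_biUnion_right]
      intro t ht
      refine hAd _ htT t (hU1 t ht).1 ?_
      rintro rfl
      exact hcU' (hU1 _ ht).2.1
    · exact (hcY c hc𝒞).mono_right hUY'
    · exact (hcY c' (h𝒰 hc'𝒰)).mono_right hUY'

/-- The number of members of a disjoint family having an edge at `v` is at most the degree. -/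
lemma card_touch_le {ι : Type} [DecidableEq ι] (s : Finset ι) (f : ι → Finset (Sym2 V))
    (R : Finset (Sym2 V)) (hf : ∀ i ∈ s, f i ⊆ R)
    (hd : ∀ i ∈ s, ∀ j ∈ s, i ≠ j → Disjoint (f i) (f j)) (v : V) :
    (s.filter fun i => ∃ x, s(v, x) ∈ f i).card ≤ deg R v := by
  classical
  set g : ι → V := fun i => if h : ∃ x, s(v, x) ∈ f i then h.choose else v with hg
  have hgs : ∀ i, (∃ x, s(v, x) ∈ f i) → s(v, g i) ∈ f i := by
    intro i h
    simp only [hg, dif_pos h]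
    exact h.choose_spec
  refine Finset.card_le_card_of_injOn g ?_ ?_
  · intro i hi
    obtain ⟨h1, h2⟩ := Finset.mem_filter.1 hi
    exact Finset.mem_coe.2 (mem_nb.2 (hf i h1 (hgs i h2)))
  · intro i hi j hj hij
    obtain ⟨h1, h2⟩ := Finset.mem_filter.1 hi
    obtain ⟨h3, h4⟩ := Finset.mem_filter.1 hj
    by_contra hne
    have h5 := hgs j h4
    rw [← hij] at h5
    exact Finset.disjoint_left.1 (hd i h1 j h3 hne) (hgs i h2) h5

end core

section omni
variable {V : Type} [Fintype V] [DecidableEq V] {α : Type} [DecidableEq α]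

/-- The edges joining `z` to the ends of the pair `e`: a path of length two replacing `e`. -/
def cherry (z : V) (e : Sym2 V) : Finset (Sym2 V) :=
  (Finset.univ.filter fun x => x ∈ e).image fun x => s(z, x)

lemma mem_cherry {z : V} {e e' : Sym2 V} : e' ∈ cherry z e ↔ ∃ x ∈ e, s(z, x) = e' := by
  simp [cherry]

lemma cherry_mk (z u v : V) : cherry z s(u, v) = {s(z, u), s(z, v)} := by
  ext e; simp [mem_cherry, eq_comm]

/-- A system of cycles of length three or four in the graph `P`, with bounded multiplicities. -/
structure GenSys (Γ : Finset α) (m : α → ℕ) (p : α → ℕ → V) (P : V → V → Prop) : Prop where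
  len : ∀ g ∈ Γ, m g = 3 ∨ m g = 4
  inj : ∀ g ∈ Γ, Set.InjOn (p g) (Set.Iio (m g))
  adj : ∀ g ∈ Γ, ∀ k < m g, P (p g k) (p g ((k + 1) % m g))
  cnt : ∀ e, (inc Γ m p e).card ≤ 48

/-- Each edge of each cycle gets two copies; the copies of the `k`-th edge have the numbers `2 * k`
and `2 * k + 1`. -/
def copies (Γ : Finset α) (m : α → ℕ) : Finset (α × ℕ) :=
  (Γ ×ˢ Finset.range 8).filter fun c => c.2 < 2 * m c.1

/-- The pair of which `c` is a copy. -/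
def base (m : α → ℕ) (p : α → ℕ → V) (c : α × ℕ) : Sym2 V := slot (p c.1) (m c.1) (c.2 / 2)

/-- The pattern made of two paths of length two along each edge of a cycle of length `m`. -/
def dblPat (m : ℕ) : Pat where
  r := m
  N := 3 * m
  back i := {(i - m) / 2, ((i - m) / 2 + 1) % m}

lemma dblPat_ok {m : ℕ} (hm : m = 3 ∨ m = 4) : (dblPat m).ok 5 17 := by
  refine ⟨?_, ?_, ?_, ?_, ?_⟩
  · simp only [dblPat]; omega
  · simp only [dblPat]; omega
  · simp only [dblPat]; omega
  · intro i h1 h2 j hj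
    simp only [dblPat, Finset.mem_insert, Finset.mem_singleton] at h1 h2 hj
    rcases hj with rfl | rfl
    · omega
    · exact (Nat.mod_lt _ (by omega)).trans_le h1
  · intro i _ _
    exact Finset.card_le_two.trans (by norm_num)

lemma mem_copies {Γ : Finset α} {m : α → ℕ} {p : α → ℕ → V} {P : V → V → Prop}
    (hG : GenSys Γ m p P) {c : α × ℕ} : c ∈ copies Γ m ↔ c.1 ∈ Γ ∧ c.2 < 2 * m c.1 := by
  simp only [copies, Finset.mem_filter, Finset.mem_product, Finset.mem_range]
  constructor
  · rintro ⟨⟨h1, h2⟩, h3⟩; exact ⟨h1, h3⟩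
  · rintro ⟨h1, h2⟩
    refine ⟨⟨h1, ?_⟩, h2⟩
    rcases hG.len _ h1 with h | h <;> omega

/-- The copies with even (`b = 0`) or odd (`b = 1`) number of a pair in the cycles of `J`
correspond to the occurrences of the pair. -/
lemma card_half {Γ : Finset α} {m : α → ℕ} {p : α → ℕ → V} {P : V → V → Prop}
    (hG : GenSys Γ m p P) {J : Finset α} (hJ : J ⊆ Γ) {b : ℕ} (hb : b < 2) (e : Sym2 V) :
    ((copies Γ m).filter fun c => (c.1 ∈ J ∧ c.2 % 2 = b) ∧ base m p c = e).card =
      (inc J m p e).card := by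
  symm
  refine Finset.card_bij (fun t _ => (t.1, 2 * t.2 + b)) ?_ ?_ ?_
  · rintro ⟨g, k⟩ h
    simp only [inc, Finset.mem_filter, Finset.mem_product] at h
    obtain ⟨⟨h1, h2⟩, h3, h4⟩ := h
    rw [Finset.mem_filter, mem_copies hG]
    refine ⟨⟨hJ h1, by simp only; omega⟩, ⟨h1, by simp only; omega⟩, ?_⟩
    simp only [base]
    rw [show (2 * k + b) / 2 = k by omega, h4]
  · rintro ⟨g, k⟩ _ ⟨g', k'⟩ _ h
    simp only [Prod.mk.injEq] at h ⊢
    exact ⟨h.1, by omega⟩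
  · rintro ⟨g, q⟩ h
    rw [Finset.mem_filter, mem_copies hG] at h
    obtain ⟨⟨h1, h2⟩, ⟨h3, h4⟩, h5⟩ := h
    simp only at h1 h2 h3 h4
    refine ⟨(g, q / 2), ?_, ?_⟩
    · simp only [inc, Finset.mem_filter, Finset.mem_product, Finset.mem_range]
      refine ⟨⟨h3, ?_⟩, by omega, h5⟩
      rcases hG.len _ h1 with h | h <;> omega
    · simp only [Prod.mk.injEq, true_and]; omega

lemma card_same_base {Γ : Finset α} {m : α → ℕ} {p : α → ℕ → V} {P : V → V → Prop}
    (hG : GenSys Γ m p P) (e : Sym2 V) :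
    ((copies Γ m).filter fun c => base m p c = e).card = 2 * (inc Γ m p e).card := by
  have h0 := card_half hG (Finset.Subset.refl Γ) (b := 0) (by norm_num) e
  have h1 := card_half hG (Finset.Subset.refl Γ) (b := 1) (by norm_num) e
  rw [two_mul]
  conv_rhs => lhs; rw [← h0]
  conv_rhs => rhs; rw [← h1]
  rw [← Finset.card_union_of_disjoint]
  · congr 1
    ext c
    simp only [Finset.mem_filter, Finset.mem_union, mem_copies hG]
    have := Nat.mod_two_eq_zero_or_one c.2
    tauto
  · rw [Finset.disjoint_left]
    intro c h2 h3
    rw [Finset.mem_filter] at h2 h3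
    omega

/-- The number of cycles through `v` is bounded by the number of pairs at `v`. -/
lemma card_through {Γ : Finset α} {m : α → ℕ} {p : α → ℕ → V} {P : V → V → Prop}
    [DecidableRel P] (hG : GenSys Γ m p P) (v : V) :
    (Γ.filter fun g => ∃ i ∈ Finset.range (m g), p g i = v).card ≤
      48 * (Finset.univ.filter fun y => P v y).card := by
  have hsub : (Γ.filter fun g => ∃ i ∈ Finset.range (m g), p g i = v) ⊆
      (Finset.univ.filter fun y => P v y).biUnion fun y => (inc Γ m p s(v, y)).image Prod.fst := by
    intro g hg
    obtain ⟨h1, i, h2, rfl⟩ := Finset.mem_filter.1 hg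
    rw [Finset.mem_range] at h2
    refine Finset.mem_biUnion.2 ⟨p g ((i + 1) % m g), ?_, ?_⟩
    · simpa using hG.adj g h1 i h2
    · refine Finset.mem_image.2 ⟨(g, i), ?_, rfl⟩
      simp only [inc, Finset.mem_filter, Finset.mem_product, Finset.mem_range]
      refine ⟨⟨h1, ?_⟩, h2, rfl⟩
      rcases hG.len _ h1 with h | h <;> omega
  calc _ ≤ _ := Finset.card_le_card hsub
    _ ≤ ∑ y ∈ Finset.univ.filter fun y => P v y, ((inc Γ m p s(v, y)).image Prod.fst).card :=
        Finset.card_biUnion_le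
    _ ≤ ∑ y ∈ Finset.univ.filter fun y => P v y, 48 :=
        Finset.sum_le_sum fun y _ => Finset.card_image_le.trans (hG.cnt _)
    _ = _ := by rw [Finset.sum_const, smul_eq_mul, mul_comm]

end omni

/-- A choice of middle vertices `z` for the copies of the edges of the cycles. -/
structure Middles {V : Type} [Fintype V] [DecidableEq V] {α : Type} [DecidableEq α]
    (Γ : Finset α) (m : α → ℕ) (p : α → ℕ → V) (E : Finset (Sym2 V)) (z : α × ℕ → V) : Prop where
  sub : ∀ c ∈ copies Γ m, cherry (z c) (base m p c) ⊆ E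
  disj : ∀ c ∈ copies Γ m, ∀ c' ∈ copies Γ m, c ≠ c' →
    Disjoint (cherry (z c) (base m p c)) (cherry (z c') (base m p c'))
  inj : ∀ g, ∀ q, (g, q) ∈ copies Γ m → ∀ q', (g, q') ∈ copies Γ m → z (g, q) = z (g, q') → q = q'
  ne : ∀ c ∈ copies Γ m, ∀ i < m c.1, z c ≠ p c.1 i

/-- The copies of all edges of the cycles are embedded with small maximum degree. -/
lemma exists_middles (β : ℝ) (hβ : 0 < β) : ∃ γ : ℝ, 0 < γ ∧ ∃ n₀ : ℕ,
    ∀ (V : Type) [Fintype V] [DecidableEq V] (α : Type) [DecidableEq α] (E : Finset (Sym2 V))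
      (Γ : Finset α) (m : α → ℕ) (p : α → ℕ → V) (P : V → V → Prop) [DecidableRel P],
      n₀ ≤ Fintype.card V → E ⊆ edges Finset.univ →
      (∀ U : Finset V, U.card ≤ 5 → (0.1 : ℝ) * (Fintype.card V : ℝ) ≤
        ((Finset.univ.filter fun x => ∀ u ∈ U, s(x, u) ∈ E).card : ℝ)) →
      GenSys Γ m p P →
      (∀ v, ((Finset.univ.filter fun y => P v y).card : ℝ) ≤ γ * (Fintype.card V : ℝ)) →
      ∃ z : α × ℕ → V, Middles Γ m p E z ∧
        ∀ v, (deg ((copies Γ m).biUnion fun c => cherry (z c) (base m p c)) v : ℝ) ≤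
          β * (Fintype.card V : ℝ) := by
  obtain ⟨β₂, hβ₂, n₀, H⟩ := embed_tasks 5 17 0.1 β (by norm_num) hβ
  refine ⟨β₂ / 48, by positivity, n₀, ?_⟩
  intro V _ _ α _ E Γ m p P _ hn hE hU hG hP
  obtain ⟨F, hF1, hF2, hF3⟩ := H V α E Γ (fun g => dblPat (m g)) p hn hE hU
    (fun g hg => dblPat_ok (hG.len g hg)) (fun g hg => hG.inj g hg) (by
      intro v
      have h1 : ((rootCount Γ (fun g => dblPat (m g)) p v : ℕ) : ℝ) ≤
          ((48 * (Finset.univ.filter fun y => P v y).card : ℕ) : ℝ) := by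
        exact_mod_cast card_through hG v
      have h2 := hP v
      push_cast at h1
      linarith)
  have hm0 : ∀ g ∈ Γ, 0 < m g := fun g hg => by rcases hG.len g hg with h | h <;> omega
  have hbase : ∀ c ∈ copies Γ m, ∀ x ∈ base m p c, ∃ j ∈ (dblPat (m c.1)).back (m c.1 + c.2),
      j < m c.1 ∧ F c.1 j = x := by
    intro c hc x hx
    obtain ⟨h1, h2⟩ := (mem_copies hG).1 hc
    have hr := (hF1 c.1 h1).1
    simp only [base, slot, Sym2.mem_iff] at hx
    have h3 := Nat.mod_lt (c.2 / 2 + 1) (hm0 _ h1)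
    rcases hx with rfl | rfl
    · exact ⟨c.2 / 2, by simp [dblPat], by omega, hr _ (by change c.2 / 2 < m c.1; omega)⟩
    · exact ⟨(c.2 / 2 + 1) % m c.1, by simp [dblPat], h3, hr _ h3⟩
  have himg : ∀ c ∈ copies Γ m, cherry (F c.1 (m c.1 + c.2)) (base m p c) ⊆
      (dblPat (m c.1)).img (F c.1) := by
    intro c hc e he
    obtain ⟨h1, h2⟩ := (mem_copies hG).1 hc
    obtain ⟨x, hx, rfl⟩ := mem_cherry.1 he
    obtain ⟨j, hj, -, rfl⟩ := hbase c hc x hx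
    exact Pat.mem_img.2 ⟨m c.1 + c.2, by simp [dblPat], by simp only [dblPat]; omega, j, hj, rfl⟩
  refine ⟨fun c => F c.1 (m c.1 + c.2), ⟨?_, ?_, ?_, ?_⟩, ?_⟩
  · intro c hc
    exact (himg c hc).trans (hF1 c.1 ((mem_copies hG).1 hc).1).2.2
  · rintro ⟨g, q⟩ hc ⟨g', q'⟩ hc' hne
    obtain ⟨h1, h2⟩ := (mem_copies hG).1 hc
    obtain ⟨h1', h2'⟩ := (mem_copies hG).1 hc'
    by_cases hg : g = g'
    · subst hg
      have hinj := (hF1 g h1).2.1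
      rw [Finset.disjoint_left]
      intro e he he'
      obtain ⟨x, hx, rfl⟩ := mem_cherry.1 he
      obtain ⟨x', hx', hxx⟩ := mem_cherry.1 he'
      simp only at h2 h2' hxx
      rcases Sym2.eq_iff.1 hxx with ⟨h3, -⟩ | ⟨-, h3⟩
      · have := hinj (show m g + q' < 3 * m g by omega) (show m g + q < 3 * m g by omega) h3
        exact hne (by rw [Prod.mk.injEq]; exact ⟨rfl, by omega⟩)
      · obtain ⟨j, -, hj, rfl⟩ := hbase _ hc' x' hx'
        simp only at hj h3
        have := hinj (show j < 3 * m g by omega) (show m g + q < 3 * m g by omega) h3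
        omega
    · exact (hF2 g h1 g' h1' hg).mono (himg _ hc) (himg _ hc')
  · intro g q hq q' hq' h
    obtain ⟨h1, h2⟩ := (mem_copies hG).1 hq
    obtain ⟨h1', h2'⟩ := (mem_copies hG).1 hq'
    simp only at h2 h2' h
    have := (hF1 g h1).2.1 (show m g + q < 3 * m g by omega) (show m g + q' < 3 * m g by omega) h
    omega
  · rintro ⟨g, q⟩ hc i hi h
    obtain ⟨h1, h2⟩ := (mem_copies hG).1 hc
    simp only at h2 h hi h1
    rw [← (hF1 g h1).1 i hi] at h
    have := (hF1 g h1).2.1 (show m g + q < 3 * m g by omega) (show i < 3 * m g by omega) h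
    omega
  · intro v
    refine le_trans ?_ (hF3 v)
    exact_mod_cast deg_mono (by
      rw [Finset.biUnion_subset]
      intro c hc
      exact (himg c hc).trans (Finset.subset_biUnion_of_mem (fun g => (dblPat (m g)).img (F g))
        ((mem_copies hG).1 hc).1)) v

section absorbers
variable {V : Type} [Fintype V] [DecidableEq V] {α : Type} [DecidableEq α]

/-- The cycle of length `2 * m g` obtained from the cycle `g` by replacing each edge by its copy of
even number. -/
def cyc (m : α → ℕ) (p : α → ℕ → V) (z : α × ℕ → V) (g : α) : Finset (Sym2 V) :=
  (Finset.range (m g)).biUnion fun k => cherry (z (g, 2 * k)) (base m p (g, 2 * k))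

/-- The vertices of the cycle `cyc m p z g` in order. -/
def cycRoot (p : α → ℕ → V) (z : α × ℕ → V) (g : α) (i : ℕ) : V :=
  if i % 2 = 0 then p g (i / 2) else z (g, i - 1)

/-- The vertices, in order, of the four-cycle formed by two copies with the same ends. -/
def pairRoot (m : α → ℕ) (p : α → ℕ → V) (z : α × ℕ → V) (t : (α × ℕ) × (α × ℕ)) (i : ℕ) : V :=
  if i = 0 then p t.1.1 (t.1.2 / 2) else if i = 1 then z t.1 else
    if i = 2 then p t.1.1 ((t.1.2 / 2 + 1) % m t.1.1) else z t.2

lemma slot_congr {F F' : ℕ → V} {c : ℕ} (h : ∀ i < c, F i = F' i) :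
    (Finset.range c).image (slot F c) = (Finset.range c).image (slot F' c) := by
  refine Finset.image_congr fun k hk => ?_
  have hk' : k < c := Finset.mem_range.1 hk
  simp only [slot]
  rw [h k hk', h _ (Nat.mod_lt _ (by omega))]

lemma cyc_eq (m : α → ℕ) (p : α → ℕ → V) (z : α × ℕ → V) (g : α) :
    (Finset.range (2 * m g)).image (slot (cycRoot p z g) (2 * m g)) = cyc m p z g := by
  have key : ∀ k < m g, cherry (z (g, 2 * k)) (base m p (g, 2 * k)) =
      {slot (cycRoot p z g) (2 * m g) (2 * k), slot (cycRoot p z g) (2 * m g) (2 * k + 1)} := by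
    intro k hk
    have h1 : (2 * k + 1) % (2 * m g) = 2 * k + 1 := Nat.mod_eq_of_lt (by omega)
    have h2 : (2 * k + 1 + 1) % (2 * m g) = 2 * ((k + 1) % m g) := by
      rw [show 2 * k + 1 + 1 = 2 * (k + 1) by ring, Nat.mul_mod_mul_left]
    have h3 : (2 * k + 1) % 2 ≠ 0 := by omega
    have h4 : 2 * k / 2 = k := by omega
    have h5 : 2 * ((k + 1) % m g) / 2 = (k + 1) % m g := by omega
    simp only [base, slot, h1, h2, cycRoot, h3, if_false, Nat.mul_mod_right, if_true, h4, h5,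
      cherry_mk, Nat.add_sub_cancel]
    rw [Sym2.eq_swap]
  ext e
  simp only [cyc, Finset.mem_image, Finset.mem_biUnion, Finset.mem_range]
  constructor
  · rintro ⟨i, hi, rfl⟩
    refine ⟨i / 2, by omega, ?_⟩
    rw [key _ (by omega)]
    rcases Nat.mod_two_eq_zero_or_one i with h | h
    · rw [show 2 * (i / 2) = i by omega]; simp
    · rw [show 2 * (i / 2) = i - 1 by omega, show i - 1 + 1 = i by omega]; simp
  · rintro ⟨k, hk, he⟩
    rw [key k hk] at he
    rcases Finset.mem_insert.1 he with he | he
    · exact ⟨2 * k, by omega, he.symm⟩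
    · exact ⟨2 * k + 1, by omega, (Finset.mem_singleton.1 he).symm⟩

lemma pair_eq (m : α → ℕ) (p : α → ℕ → V) (z : α × ℕ → V) {t : (α × ℕ) × (α × ℕ)}
    (ht : base m p t.1 = base m p t.2) :
    (Finset.range 4).image (slot (pairRoot m p z t) 4) =
      cherry (z t.1) (base m p t.1) ∪ cherry (z t.2) (base m p t.2) := by
  rw [← ht]
  have : base m p t.1 = s(p t.1.1 (t.1.2 / 2), p t.1.1 ((t.1.2 / 2 + 1) % m t.1.1)) := rfl
  rw [this, cherry_mk, cherry_mk]
  ext e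
  simp only [Finset.range_add_one, Finset.range_zero, Finset.image_insert, Finset.image_empty,
    slot, pairRoot, Finset.mem_insert, Finset.mem_union, Finset.mem_singleton,
    Finset.notMem_empty, or_false]
  norm_num
  rw [Sym2.eq_swap (a := p t.1.1 (t.1.2 / 2)) (b := z t.1),
    Sym2.eq_swap (a := p t.1.1 ((t.1.2 / 2 + 1) % m t.1.1)) (b := z t.2)]
  tauto

/-- The ordered pairs of distinct copies of the same edge. -/
def twins (Γ : Finset α) (m : α → ℕ) (p : α → ℕ → V) : Finset ((α × ℕ) × (α × ℕ)) :=
  ((copies Γ m) ×ˢ (copies Γ m)).filter fun t => t.1 ≠ t.2 ∧ base m p t.1 = base m p t.2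

lemma mem_twins {Γ : Finset α} {m : α → ℕ} {p : α → ℕ → V} {t : (α × ℕ) × (α × ℕ)} :
    t ∈ twins Γ m p ↔ t.1 ∈ copies Γ m ∧ t.2 ∈ copies Γ m ∧ t.1 ≠ t.2 ∧
      base m p t.1 = base m p t.2 := by
  simp [twins, and_assoc]

variable {Γ : Finset α} {m : α → ℕ} {p : α → ℕ → V} {P : V → V → Prop} {E : Finset (Sym2 V)}
  {z : α × ℕ → V}

lemma even_mem_copies (hG : GenSys Γ m p P) {g : α} (hg : g ∈ Γ) {k : ℕ} (hk : k < m g) :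
    (g, 2 * k) ∈ copies Γ m := (mem_copies hG).2 ⟨hg, by simpa using hk⟩

lemma cyc_disjoint (hG : GenSys Γ m p P) (hz : Middles Γ m p E z) {g g' : α} (hg : g ∈ Γ)
    (hg' : g' ∈ Γ) (h : g ≠ g') : Disjoint (cyc m p z g) (cyc m p z g') := by
  rw [cyc, Finset.disjoint_biUnion_left]
  intro k hk
  rw [cyc, Finset.disjoint_biUnion_right]
  intro k' hk'
  exact hz.disj _ (even_mem_copies hG hg (Finset.mem_range.1 hk)) _
    (even_mem_copies hG hg' (Finset.mem_range.1 hk')) (by simp [h])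

lemma cycRoot_inj (hG : GenSys Γ m p P) (hz : Middles Γ m p E z) {g : α} (hg : g ∈ Γ) :
    Set.InjOn (cycRoot p z g) (Set.Iio (2 * m g)) := by
  intro i hi j hj hij
  simp only [Set.mem_Iio] at hi hj
  have hc : ∀ i < 2 * m g, i % 2 ≠ 0 → (g, i - 1) ∈ copies Γ m := fun i hi _ =>
    (mem_copies hG).2 ⟨hg, by simp only; omega⟩
  simp only [cycRoot] at hij
  split_ifs at hij with h1 h2 h2
  · have := hG.inj g hg (show i / 2 ∈ Set.Iio (m g) by simp only [Set.mem_Iio]; omega)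
      (show j / 2 ∈ Set.Iio (m g) by simp only [Set.mem_Iio]; omega) hij
    omega
  · exact absurd hij.symm (hz.ne _ (hc j hj h2) (i / 2) (by simp only; omega))
  · exact absurd hij (hz.ne _ (hc i hi h1) (j / 2) (by simp only; omega))
  · have := hz.inj g _ (hc i hi h1) _ (hc j hj h2) hij
    omega

lemma pairRoot_inj (hG : GenSys Γ m p P) (hz : Middles Γ m p E z) {t : (α × ℕ) × (α × ℕ)}
    (ht : t ∈ twins Γ m p) : Set.InjOn (pairRoot m p z t) (Set.Iio 4) := by
  obtain ⟨h1, h2, h3, h4⟩ := mem_twins.1 ht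
  have hne : ∀ c ∈ copies Γ m, z c ∉ base m p c := by
    intro c hc hmem
    obtain ⟨hc1, hc2⟩ := (mem_copies hG).1 hc
    rcases Sym2.mem_iff.1 hmem with h | h
    · exact hz.ne c hc _ (by omega) h
    · exact hz.ne c hc _ (Nat.mod_lt _ (by omega)) h
  have hb : base m p t.1 = s(p t.1.1 (t.1.2 / 2), p t.1.1 ((t.1.2 / 2 + 1) % m t.1.1)) := rfl
  have n1 := hne _ h1
  have n2 := hne _ h2
  rw [← h4] at n2
  rw [hb, Sym2.mem_iff, not_or] at n1 n2
  have hzz : z t.1 ≠ z t.2 := by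
    intro h
    have := hz.disj _ h1 _ h2 h3
    rw [← h4, ← h, hb, cherry_mk] at this
    simp at this
  obtain ⟨hc1, hc2⟩ := (mem_copies hG).1 h1
  have huv : p t.1.1 (t.1.2 / 2) ≠ p t.1.1 ((t.1.2 / 2 + 1) % m t.1.1) := by
    intro h
    have h5 := hG.inj _ hc1 (show t.1.2 / 2 ∈ Set.Iio (m t.1.1) by simp only [Set.mem_Iio]; omega)
      (show (t.1.2 / 2 + 1) % m t.1.1 ∈ Set.Iio (m t.1.1) from Nat.mod_lt _ (by omega)) h
    have h6 := hG.len _ hc1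
    rcases Nat.lt_or_ge (t.1.2 / 2 + 1) (m t.1.1) with h7 | h7
    · rw [Nat.mod_eq_of_lt h7] at h5; omega
    · rw [show t.1.2 / 2 + 1 = m t.1.1 by omega, Nat.mod_self] at h5; omega
  intro i hi j hj hij
  simp only [Set.mem_Iio] at hi hj
  simp only [pairRoot] at hij
  obtain ⟨n1a, n1b⟩ := n1
  obtain ⟨n2a, n2b⟩ := n2
  split_ifs at hij <;> first | omega | (exfalso; simp_all)

end absorbers

section absorbers
variable {V : Type} [Fintype V] [DecidableEq V] {α : Type} [DecidableEq α]
variable {Γ : Finset α} {m : α → ℕ} {p : α → ℕ → V} {P : V → V → Prop} {E : Finset (Sym2 V)}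
  {z : α × ℕ → V}

/-- The union of all copies. -/
def allCherries (Γ : Finset α) (m : α → ℕ) (p : α → ℕ → V) (z : α × ℕ → V) : Finset (Sym2 V) :=
  (copies Γ m).biUnion fun c => cherry (z c) (base m p c)

lemma cyc_subset (hG : GenSys Γ m p P) {g : α} (hg : g ∈ Γ) :
    cyc m p z g ⊆ allCherries Γ m p z := by
  rw [cyc, Finset.biUnion_subset]
  intro k hk
  exact Finset.subset_biUnion_of_mem (fun c => cherry (z c) (base m p c))
    (even_mem_copies hG hg (Finset.mem_range.1 hk))

/-- The gadgets to be embedded: one for each cycle and one for each pair of twins. -/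
def gadPat (m : α → ℕ) : α ⊕ ((α × ℕ) × (α × ℕ)) → Pat :=
  Sum.elim (fun g => absPat (2 * m g)) fun _ => absPat 4

/-- The roots of the gadgets. -/
def gadRoot (m : α → ℕ) (p : α → ℕ → V) (z : α × ℕ → V) :
    α ⊕ ((α × ℕ) × (α × ℕ)) → ℕ → V :=
  Sum.elim (cycRoot p z) (pairRoot m p z)

lemma touch_slot {F : ℕ → V} {c : ℕ} {i : ℕ} (hi : i < c) :
    ∃ x, s(F i, x) ∈ (Finset.range c).image (slot F c) :=
  ⟨_, Finset.mem_image.2 ⟨i, Finset.mem_range.2 hi, rfl⟩⟩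

lemma gad_rootCount (hG : GenSys Γ m p P) (hz : Middles Γ m p E z) (v : V) :
    rootCount (Γ.disjSum (twins Γ m p)) (gadPat m) (gadRoot m p z) v ≤
      193 * deg (allCherries Γ m p z) v := by
  classical
  set R := allCherries Γ m p z with hR
  have hcR : ∀ c ∈ copies Γ m, cherry (z c) (base m p c) ⊆ R := fun c hc =>
    Finset.subset_biUnion_of_mem (fun c => cherry (z c) (base m p c)) hc
  have h1 : (Γ.filter fun g => ∃ i ∈ Finset.range (2 * m g), cycRoot p z g i = v).card ≤ deg R v := by
    refine le_trans (Finset.card_le_card ?_) (card_touch_le Γ (cyc m p z) R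
      (fun g hg => cyc_subset hG hg) (fun g hg g' hg' h => cyc_disjoint hG hz hg hg' h) v)
    intro g hg
    simp only [Finset.mem_filter] at hg
    obtain ⟨hg1, i, hi, hv⟩ := hg
    refine Finset.mem_filter.2 ⟨hg1, ?_⟩
    rw [← hv, ← cyc_eq]
    exact touch_slot (Finset.mem_range.1 hi)
  set B := (copies Γ m).filter fun c => ∃ x, s(v, x) ∈ cherry (z c) (base m p c) with hB
  have hBc : B.card ≤ deg R v := card_touch_le _ _ R hcR hz.disj v
  have hsame : ∀ c, ((copies Γ m).filter fun c' => base m p c' = base m p c).card ≤ 96 := by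
    intro c
    rw [card_same_base hG]
    have := hG.cnt (base m p c)
    omega
  have h2 : ((twins Γ m p).filter fun t => ∃ i ∈ Finset.range 4, pairRoot m p z t i = v).card ≤
      96 * deg R v + 96 * deg R v := by
    have hsub : ((twins Γ m p).filter fun t => ∃ i ∈ Finset.range 4, pairRoot m p z t i = v) ⊆
        (B.biUnion fun c => ((copies Γ m).filter fun c' => base m p c' = base m p c).image
          fun c' => (c, c')) ∪
        (B.biUnion fun c => ((copies Γ m).filter fun c' => base m p c' = base m p c).image
          fun c' => (c', c)) := by
      intro t ht
      obtain ⟨ht1, i, hi, hv⟩ := Finset.mem_filter.1 ht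
      obtain ⟨ha, hb, hc, hd⟩ := mem_twins.1 ht1
      obtain ⟨x, hx⟩ := touch_slot (F := pairRoot m p z t) (Finset.mem_range.1 hi)
      rw [pair_eq m p z hd, hv] at hx
      simp only [Finset.mem_union, Finset.mem_biUnion, Finset.mem_image, Finset.mem_filter, hB]
      rcases Finset.mem_union.1 hx with hx | hx
      · exact Or.inl ⟨t.1, ⟨ha, x, hx⟩, t.2, ⟨hb, hd.symm⟩, rfl⟩
      · exact Or.inr ⟨t.2, ⟨hb, x, hx⟩, t.1, ⟨ha, hd⟩, rfl⟩
    refine (Finset.card_le_card hsub).trans ((Finset.card_union_le _ _).trans ?_)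
    refine add_le_add ?_ ?_ <;>
    · refine (Finset.card_biUnion_le_card_mul _ _ 96
        fun c _ => Finset.card_image_le.trans (hsame c)).trans ?_
      rw [mul_comm]; exact Nat.mul_le_mul_left _ hBc
  have h3 : rootCount (Γ.disjSum (twins Γ m p)) (gadPat m) (gadRoot m p z) v =
      (Γ.filter fun g => ∃ i ∈ Finset.range (2 * m g), cycRoot p z g i = v).card +
      ((twins Γ m p).filter fun t => ∃ i ∈ Finset.range 4, pairRoot m p z t i = v).card := by
    unfold rootCount
    rw [Finset.card_filter, Finset.sum_disjSum, Finset.card_filter, Finset.card_filter]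
    congr 1 <;> refine Finset.sum_congr rfl fun _ _ => ?_ <;> congr
  rw [h3]
  omega

/-- Private absorbers for all cycles and all twins, disjoint from the copies. -/
lemma exists_absorbers (β : ℝ) (hβ : 0 < β) : ∃ β₂ : ℝ, 0 < β₂ ∧ ∃ n₀ : ℕ,
    ∀ (V : Type) [Fintype V] [DecidableEq V] (α : Type) [DecidableEq α] (E E' : Finset (Sym2 V))
      (Γ : Finset α) (m : α → ℕ) (p : α → ℕ → V) (P : V → V → Prop) (z : α × ℕ → V),
      n₀ ≤ Fintype.card V → E' ⊆ edges Finset.univ →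
      (∀ U : Finset V, U.card ≤ 5 → 0.1 * (Fintype.card V : ℝ) ≤
        ((Finset.univ.filter fun x => ∀ u ∈ U, s(x, u) ∈ E').card : ℝ)) →
      GenSys Γ m p P → Middles Γ m p E z →
      (∀ v, (deg (allCherries Γ m p z) v : ℝ) ≤ β₂ * (Fintype.card V : ℝ)) →
      ∃ Ab : α ⊕ ((α × ℕ) × (α × ℕ)) → Finset (Sym2 V),
        (∀ t ∈ Γ.disjSum (twins Γ m p), Ab t ⊆ E' ∧ Dec (Ab t)) ∧
        (∀ t ∈ Γ.disjSum (twins Γ m p), ∀ t' ∈ Γ.disjSum (twins Γ m p), t ≠ t' →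
          Disjoint (Ab t) (Ab t')) ∧
        (∀ g ∈ Γ, Dec (Ab (Sum.inl g) ∪ cyc m p z g)) ∧
        (∀ t ∈ twins Γ m p, Dec (Ab (Sum.inr t) ∪
          (cherry (z t.1) (base m p t.1) ∪ cherry (z t.2) (base m p t.2)))) ∧
        ∀ v, (deg ((Γ.disjSum (twins Γ m p)).biUnion Ab) v : ℝ) ≤ β * (Fintype.card V : ℝ) := by
  obtain ⟨β₂, hβ₂, n₀, H⟩ := embed_tasks 5 17 0.1 β (by norm_num) hβ
  refine ⟨β₂ / 193, by positivity, n₀, ?_⟩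
  intro V _ _ α _ E E' Γ m p P z hn hE' hcom hG hz hdeg
  have hlen : ∀ g ∈ Γ, 2 * m g = 4 ∨ 2 * m g = 6 ∨ 2 * m g = 8 := by
    intro g hg
    rcases hG.len g hg with h | h <;> omega
  obtain ⟨F, hF1, hF2, hF3⟩ := H V _ E' (Γ.disjSum (twins Γ m p)) (gadPat m) (gadRoot m p z) hn hE'
    hcom (by
      intro t ht
      rcases Finset.mem_disjSum.1 ht with ⟨g, hg, rfl⟩ | ⟨t, ht, rfl⟩
      · exact absPat_ok (hlen g hg)
      · exact absPat_ok (Or.inl rfl)) (by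
      intro t ht
      rcases Finset.mem_disjSum.1 ht with ⟨g, hg, rfl⟩ | ⟨t, ht', rfl⟩
      · exact cycRoot_inj hG hz hg
      · exact pairRoot_inj hG hz ht') (by
      intro v
      have h1 := gad_rootCount hG hz v
      have h2 := hdeg v
      have h3 : (rootCount (Γ.disjSum (twins Γ m p)) (gadPat m) (gadRoot m p z) v : ℝ) ≤
        193 * deg (allCherries Γ m p z) v := by exact_mod_cast h1
      calc _ ≤ _ := h3
        _ ≤ 193 * (β₂ / 193 * (Fintype.card V : ℝ)) := by linarith
        _ = _ := by ring)
  refine ⟨fun t => (gadPat m t).img (F t), ?_, hF2, ?_, ?_, hF3⟩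
  · intro t ht
    refine ⟨(hF1 t ht).2.2, ?_⟩
    have hi := (hF1 t ht).2.1
    rcases Finset.mem_disjSum.1 ht with ⟨g, hg, rfl⟩ | ⟨t, ht, rfl⟩
    · exact (absPat_spec (hlen g hg) _ hi).1
    · exact (absPat_spec (Or.inl rfl) _ hi).1
  · intro g hg
    obtain ⟨h1, hi, -⟩ := hF1 (Sum.inl g) (Finset.inl_mem_disjSum.2 hg)
    have := (absPat_spec (hlen g hg) _ hi).2
    rw [slot_congr (c := 2 * m g) (F' := cycRoot p z g) (fun i hi => h1 i hi), cyc_eq] at this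
    exact this
  · intro t ht
    obtain ⟨h1, hi, -⟩ := hF1 (Sum.inr t) (Finset.inr_mem_disjSum.2 ht)
    have := (absPat_spec (Or.inl rfl) _ hi).2
    rw [slot_congr (c := 4) (F' := pairRoot m p z t) (fun i hi => h1 i hi),
      pair_eq m p z (mem_twins.1 ht).2.2.2] at this
    exact this

end absorbers

section absorb
variable {V : Type} [Fintype V] [DecidableEq V] {α : Type} [DecidableEq α]
variable {Γ : Finset α} {m : α → ℕ} {p : α → ℕ → V} {P : V → V → Prop} {E : Finset (Sym2 V)}
  {z : α × ℕ → V}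

/-- The copies and their absorbers absorb every sum `L` of cycles: for each cycle in the sum the
copy `cyc m p z g` is absorbed, after which every pair of `L` has an odd number of unused copies and
every other pair an even number. -/
lemma absorb_all (hE : E ⊆ edges Finset.univ) (hG : GenSys Γ m p P) (hz : Middles Γ m p E z)
    {X : Finset (Sym2 V)} (hX : X ⊆ edges Finset.univ) (hXE : Disjoint X E)
    {Ab : α ⊕ ((α × ℕ) × (α × ℕ)) → Finset (Sym2 V)}
    (hA1 : ∀ t ∈ Γ.disjSum (twins Γ m p), Ab t ⊆ E \ allCherries Γ m p z ∧ Dec (Ab t))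
    (hA2 : ∀ t ∈ Γ.disjSum (twins Γ m p), ∀ t' ∈ Γ.disjSum (twins Γ m p), t ≠ t' →
          Disjoint (Ab t) (Ab t'))
    (hA3 : ∀ g ∈ Γ, Dec (Ab (Sum.inl g) ∪ cyc m p z g))
    (hA4 : ∀ t ∈ twins Γ m p, Dec (Ab (Sum.inr t) ∪
          (cherry (z t.1) (base m p t.1) ∪ cherry (z t.2) (base m p t.2))))
    {J : Finset α} (hJ : J ⊆ Γ) {L : Finset (Sym2 V)} (hL : L ⊆ X)
    (hLJ : ∀ e, e ∈ L ↔ Odd (inc J m p e).card) :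
    Dec (allCherries Γ m p z ∪ (Γ.disjSum (twins Γ m p)).biUnion Ab ∪ L) := by
  set R := allCherries Γ m p z with hR
  set T := twins Γ m p with hT
  set cp : α × ℕ → Finset (Sym2 V) := fun c => cherry (z c) (base m p c) with hcpd
  have hcR : ∀ c ∈ copies Γ m, cp c ⊆ R := fun c hc => Finset.subset_biUnion_of_mem cp hc
  have hRE : R ⊆ E := by
    rw [hR, allCherries, Finset.biUnion_subset]
    exact fun c hc => hz.sub c hc
  set 𝒥 := (copies Γ m).filter fun c => c.1 ∈ J ∧ c.2 % 2 = 0 with h𝒥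
  have hJc : J.biUnion (cyc m p z) = 𝒥.biUnion cp := by
    ext e
    simp only [Finset.mem_biUnion, cyc, Finset.mem_range, h𝒥, Finset.mem_filter]
    constructor
    · rintro ⟨g, hg, k, hk, he⟩
      exact ⟨(g, 2 * k), ⟨even_mem_copies hG (hJ hg) hk, hg, by simp⟩, he⟩
    · rintro ⟨⟨g, q⟩, ⟨h1, h2, h3⟩, he⟩
      have h4 := ((mem_copies hG).1 h1).2
      simp only at h2 h3 h4
      refine ⟨g, h2, q / 2, by omega, ?_⟩
      rw [show 2 * (q / 2) = q by omega]
      exact he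
  have hXY : Disjoint X (E \ R) := hXE.mono_right Finset.sdiff_subset
  have hRY : Disjoint R (E \ R) := Finset.disjoint_sdiff
  obtain ⟨U, hU1, hU2⟩ := absorb_pairs (copies Γ m) (base m p) cp (fun t => Ab (Sum.inr t)) X
    (E \ R) T (fun t => mem_twins) hz.disj
    (fun c hc => (hXE.mono_right (hz.sub c hc)).symm)
    (fun c hc => hRY.mono_left (hcR c hc)) hXY
    (fun t ht => (hA1 _ (Finset.inr_mem_disjSum.2 ht)).1) hA4
    (fun t ht t' ht' h => hA2 _ (Finset.inr_mem_disjSum.2 ht) _ (Finset.inr_mem_disjSum.2 ht')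
      (by simpa using h))
    (by
      intro c hc hb
      have hsub := hz.sub c hc
      obtain ⟨u, v, huv⟩ : ∃ u v, base m p c = s(u, v) := ⟨_, _, rfl⟩
      simp only [hcpd]
      rw [huv] at hb hsub ⊢
      rw [cherry_mk] at hsub ⊢
      have h1 : u ≠ v := (mem_edges.1 (hX hb)).2.2
      have h2 : z c ≠ u := (mem_edges.1 (hE (hsub (by simp)))).2.2
      have h3 : z c ≠ v := (mem_edges.1 (hE (hsub (by simp)))).2.2
      have : insert s(u, v) {s(z c, u), s(z c, v)} = edges {z c, u, v} := by
        rw [edges_triple_eq _ _ _ h2 h3 h1]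
        ext e; simp only [Finset.mem_insert, Finset.mem_singleton]; tauto
      rw [this]
      refine Dec_edges ?_
      rw [Finset.card_eq_three.2 ⟨_, _, _, h2, h3, h1, rfl⟩]
      decide)
    _ ((copies Γ m) \ 𝒥) rfl Finset.sdiff_subset L hL (by
      intro e
      have h1 := card_same_base hG e
      have h2 := card_half hG hJ (b := 0) (by norm_num) e
      have h3 : ((copies Γ m \ 𝒥).filter fun c => base m p c = e).card +
          ((copies Γ m).filter fun c => (c.1 ∈ J ∧ c.2 % 2 = 0) ∧ base m p c = e).card =
          ((copies Γ m).filter fun c => base m p c = e).card := by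
        rw [← Finset.card_union_of_disjoint]
        · congr 1
          ext c
          simp only [Finset.mem_union, Finset.mem_filter, Finset.mem_sdiff, h𝒥]
          tauto
        · rw [Finset.disjoint_left]
          intro c h4 h5
          simp only [Finset.mem_filter, Finset.mem_sdiff, h𝒥] at h4 h5
          tauto
      rw [hLJ, ← h2, Nat.odd_iff, Nat.odd_iff]
      omega)
  -- the absorbers not used yet decompose on their own
  set I := Γ.disjSum T with hI
  set K := J.disjSum U with hK
  have hKI : K ⊆ I := Finset.disjSum_mono hJ fun t ht => (hU1 t ht).1
  have hAE : ∀ S ⊆ I, S.biUnion Ab ⊆ E \ R := by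
    intro S hS
    rw [Finset.biUnion_subset]
    exact fun t ht => (hA1 t (hS ht)).1
  have hAdis : ∀ S ⊆ I, ∀ S' ⊆ I, Disjoint S S' → Disjoint (S.biUnion Ab) (S'.biUnion Ab) := by
    intro S hS S' hS' hd
    rw [Finset.disjoint_biUnion_left]
    intro t ht
    rw [Finset.disjoint_biUnion_right]
    intro t' ht'
    exact hA2 t (hS ht) t' (hS' ht') fun h => Finset.disjoint_left.1 hd ht (h ▸ ht')
  have hD1 : Dec (J.biUnion fun g => Ab (Sum.inl g) ∪ cyc m p z g) := by
    refine Dec_biUnion _ _ ?_ fun g hg => hA3 g (hJ hg)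
    intro g hg g' hg' hne
    have e1 := hA2 (Sum.inl g) (Finset.inl_mem_disjSum.2 (hJ hg)) (Sum.inl g')
      (Finset.inl_mem_disjSum.2 (hJ hg')) (by simpa using hne)
    have e2 := cyc_disjoint hG hz (hJ hg) (hJ hg') hne
    have e3 : ∀ g ∈ J, Ab (Sum.inl g) ⊆ E \ R := fun g hg =>
      (hA1 _ (Finset.inl_mem_disjSum.2 (hJ hg))).1
    have e4 : ∀ g ∈ J, cyc m p z g ⊆ R := fun g hg => cyc_subset hG (hJ hg)
    simp only [Finset.disjoint_union_left, Finset.disjoint_union_right]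
    exact ⟨⟨e1, hRY.mono (e4 g hg) (e3 g' hg')⟩, (hRY.mono (e4 g' hg') (e3 g hg)).symm, e2⟩
  have hD1e : (J.biUnion fun g => Ab (Sum.inl g) ∪ cyc m p z g) =
      (J.disjSum ∅).biUnion Ab ∪ 𝒥.biUnion cp := by
    rw [← hJc]
    ext e
    simp only [Finset.mem_union, Finset.mem_biUnion, Finset.mem_disjSum]
    constructor
    · rintro ⟨g, hg, h | h⟩
      · exact Or.inl ⟨_, Or.inl ⟨g, hg, rfl⟩, h⟩
      · exact Or.inr ⟨g, hg, h⟩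
    · rintro (⟨t, ⟨g, hg, rfl⟩ | ⟨g, hg, rfl⟩, h⟩ | ⟨g, hg, h⟩)
      · exact ⟨g, hg, Or.inl h⟩
      · exact absurd hg (Finset.notMem_empty _)
      · exact ⟨g, hg, Or.inr h⟩
  have hD3e : (U.biUnion fun t => Ab (Sum.inr t)) = ((∅ : Finset α).disjSum U).biUnion Ab := by
    ext e
    simp
  have hD4 : Dec ((I \ K).biUnion Ab) :=
    Dec_biUnion _ _ (fun t ht t' ht' h => hA2 t (Finset.mem_sdiff.1 ht).1 t'
      (Finset.mem_sdiff.1 ht').1 h) fun t ht => (hA1 t (Finset.mem_sdiff.1 ht).1).2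
  have hKe : K.biUnion Ab = (J.disjSum ∅).biUnion Ab ∪ ((∅ : Finset α).disjSum U).biUnion Ab := by
    rw [← Finset.union_biUnion]
    congr 1
    ext t
    simp only [hK, Finset.mem_union, Finset.mem_disjSum]
    simp
  have hIe : I.biUnion Ab = K.biUnion Ab ∪ (I \ K).biUnion Ab := by
    rw [← Finset.union_biUnion, Finset.union_sdiff_of_subset hKI]
  have hRe : R = 𝒥.biUnion cp ∪ (copies Γ m \ 𝒥).biUnion cp := by
    rw [← Finset.union_biUnion, Finset.union_sdiff_of_subset (Finset.filter_subset _ _)]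
    rfl
  have hJI : J.disjSum (∅ : Finset ((α × ℕ) × (α × ℕ))) ⊆ I :=
    Finset.disjSum_mono hJ (Finset.empty_subset _)
  have hUI : (∅ : Finset α).disjSum U ⊆ I :=
    Finset.disjSum_mono (Finset.empty_subset _) fun t ht => (hU1 t ht).1
  have h𝒥R : 𝒥.biUnion cp ⊆ R := by rw [hRe]; exact Finset.subset_union_left
  have h𝒰R : (copies Γ m \ 𝒥).biUnion cp ⊆ R := by
    conv_rhs => rw [hRe]
    exact Finset.subset_union_right
  rw [hD1e] at hD1
  rw [hD3e] at hU2
  have hLR : Disjoint L R := hXE.mono hL hRE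
  have hLY : Disjoint L (E \ R) := hXY.mono_left hL
  have hD13 := Dec_union hD1 hU2 (by
    simp only [Finset.disjoint_union_left, Finset.disjoint_union_right]
    refine ⟨⟨⟨?_, ?_⟩, ?_, ?_⟩, ?_, ?_⟩
    · exact (hRY.mono h𝒰R (hAE _ hJI)).symm
    · rw [Finset.disjoint_biUnion_left]
      intro c hc
      rw [Finset.disjoint_biUnion_right]
      intro c' hc'
      refine hz.disj c (Finset.mem_filter.1 hc).1 c' (Finset.mem_sdiff.1 hc').1 ?_
      rintro rfl
      exact (Finset.mem_sdiff.1 hc').2 hc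
    · exact (hLY.mono_right (hAE _ hJI)).symm
    · exact (hLR.mono_right h𝒥R).symm
    · refine hAdis _ hJI _ hUI ?_
      rw [Finset.disjoint_left]
      intro t h1 h2
      rcases Finset.mem_disjSum.1 h1 with ⟨g, hg, rfl⟩ | ⟨g, hg, rfl⟩ <;>
        simp at h1 h2
    · exact hRY.mono h𝒥R (hAE _ hUI))
  have := Dec_union hD13 hD4 (by
    have hY : ∀ S ⊆ I, Disjoint S (I \ K) → Disjoint (S.biUnion Ab) ((I \ K).biUnion Ab) :=
      fun S hS h => hAdis S hS _ Finset.sdiff_subset h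
    have hs := hAE (I \ K) Finset.sdiff_subset
    have hk : ∀ S ⊆ K, Disjoint S (I \ K) := fun S hS =>
      Finset.disjoint_sdiff.mono_left hS
    simp only [Finset.disjoint_union_left]
    exact ⟨⟨hY _ hJI (hk _ (Finset.disjSum_mono (Finset.Subset.refl _) (Finset.empty_subset _))),
      hRY.mono h𝒥R hs⟩, ⟨hRY.mono h𝒰R hs, hLY.mono_right hs⟩,
      hY _ hUI (hk _ (Finset.disjSum_mono (Finset.empty_subset _) (Finset.Subset.refl _)))⟩)
  convert this using 1
  rw [hIe, hKe]
  conv_lhs => rw [hRe]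
  ext e
  simp only [Finset.mem_union]
  tauto

end absorb

section omni

/-- Removing a graph of small maximum degree destroys few common neighbours. -/
lemma common_sdiff {V : Type} [Fintype V] [DecidableEq V] (E R : Finset (Sym2 V)) (U : Finset V)
    {δ : ℝ} (hδ : ∀ u ∈ U, (deg R u : ℝ) ≤ δ) :
    ((Finset.univ.filter fun x => ∀ u ∈ U, s(x, u) ∈ E).card : ℝ) - U.card * δ ≤
      ((Finset.univ.filter fun x => ∀ u ∈ U, s(x, u) ∈ E \ R).card : ℝ) := by
  have h1 : (Finset.univ.filter fun x => ∀ u ∈ U, s(x, u) ∈ E) ⊆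
      (Finset.univ.filter fun x => ∀ u ∈ U, s(x, u) ∈ E \ R) ∪ U.biUnion fun u => nb R u := by
    intro x hx
    simp only [Finset.mem_filter, Finset.mem_univ, true_and] at hx
    by_cases h : ∃ u ∈ U, s(u, x) ∈ R
    · obtain ⟨u, hu, h⟩ := h
      exact Finset.mem_union_right _ (Finset.mem_biUnion.2 ⟨u, hu, mem_nb.2 h⟩)
    · push Not at h
      refine Finset.mem_union_left _ (Finset.mem_filter.2 ⟨Finset.mem_univ _, fun u hu => ?_⟩)
      rw [Finset.mem_sdiff, Sym2.eq_swap (a := x)]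
      exact ⟨Sym2.eq_swap (a := x) (b := u) ▸ hx u hu, h u hu⟩
  have h2 := (Finset.card_le_card h1).trans (Finset.card_union_le _ _)
  have h3 : ((U.biUnion fun u => nb R u).card : ℝ) ≤ U.card * δ := by
    calc ((U.biUnion fun u => nb R u).card : ℝ) ≤ ((∑ u ∈ U, (nb R u).card : ℕ) : ℝ) := by
          exact_mod_cast Finset.card_biUnion_le
      _ = ∑ u ∈ U, (deg R u : ℝ) := by push_cast; rfl
      _ ≤ ∑ _u ∈ U, δ := Finset.sum_le_sum hδ
      _ = U.card * δ := by simp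
  have h4 : ((Finset.univ.filter fun x => ∀ u ∈ U, s(x, u) ∈ E).card : ℝ) ≤
    ((Finset.univ.filter fun x => ∀ u ∈ U, s(x, u) ∈ E \ R).card : ℝ) +
      ((U.biUnion fun u => nb R u).card : ℝ) := by exact_mod_cast h2
  linarith

/-- An omni-absorber: a sparse graph `A` such that `A ∪ L` is decomposable for every even `L`
contained in the reserved graph `X`. -/
theorem omni (β : ℝ) (hβ : 0 < β) : ∃ γ : ℝ, 0 < γ ∧ ∃ n₀ : ℕ,
    ∀ (V : Type) [Fintype V] [DecidableEq V] (α : Type) [DecidableEq α] (E X : Finset (Sym2 V))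
      (Γ : Finset α) (m : α → ℕ) (p : α → ℕ → V) (P : V → V → Prop) [DecidableRel P],
      n₀ ≤ Fintype.card V → E ⊆ edges Finset.univ →
      (∀ U : Finset V, U.card ≤ 5 → (0.2 : ℝ) * (Fintype.card V : ℝ) ≤
        ((Finset.univ.filter fun x => ∀ u ∈ U, s(x, u) ∈ E).card : ℝ)) →
      GenSys Γ m p P →
      (∀ v, ((Finset.univ.filter fun y => P v y).card : ℝ) ≤ γ * (Fintype.card V : ℝ)) →
      X ⊆ edges Finset.univ → Disjoint X E →
      (∀ L ⊆ X, (∀ v, Even (deg L v)) → ∃ J ⊆ Γ, ∀ e, e ∈ L ↔ Odd (inc J m p e).card) →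
      ∃ A ⊆ E, (∀ v, (deg A v : ℝ) ≤ β * (Fintype.card V : ℝ)) ∧
        ∀ L ⊆ X, (∀ v, Even (deg L v)) → Dec (A ∪ L) := by
  obtain ⟨β₂, hβ₂, n₁, H1⟩ := exists_absorbers (β / 2) (by positivity)
  set β₁ : ℝ := min 0.02 (min (β / 2) β₂) with hβ₁
  have hβ₁0 : 0 < β₁ := by positivity
  have b1 : β₁ ≤ 0.02 := min_le_left _ _
  have b2 : β₁ ≤ β / 2 := (min_le_right _ _).trans (min_le_left _ _)
  have b3 : β₁ ≤ β₂ := (min_le_right _ _).trans (min_le_right _ _)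
  obtain ⟨γ, hγ, n₂, H2⟩ := exists_middles β₁ hβ₁0
  refine ⟨γ, hγ, max n₁ n₂, ?_⟩
  intro V _ _ α _ E X Γ m p P _ hn hE hcom hG hP hX hXE hspan
  have hn0 : (0 : ℝ) ≤ Fintype.card V := Nat.cast_nonneg _
  obtain ⟨z, hz, hzd⟩ := H2 V α E Γ m p P ((le_max_right _ _).trans hn) hE
    (fun U hU => by linarith [hcom U hU]) hG hP
  have hRE : allCherries Γ m p z ⊆ E := by
    rw [allCherries, Finset.biUnion_subset]
    exact fun c hc => hz.sub c hc
  have hRd : ∀ v, (deg (allCherries Γ m p z) v : ℝ) ≤ β₁ * (Fintype.card V : ℝ) := hzd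
  obtain ⟨Ab, hA1, hA2, hA3, hA4, hA5⟩ := H1 V α E (E \ allCherries Γ m p z) Γ m p P z
    ((le_max_left _ _).trans hn) (Finset.sdiff_subset.trans hE) (by
      intro U hU
      have h1 := common_sdiff E (allCherries Γ m p z) U (fun u _ => hRd u)
      have h2 := hcom U hU
      have h3 : (U.card : ℝ) ≤ 5 := by exact_mod_cast hU
      have h4 : (U.card : ℝ) * (β₁ * (Fintype.card V : ℝ)) ≤ 5 * (0.02 * (Fintype.card V : ℝ)) := by
        gcongr
      linarith) hG hz (fun v => (hRd v).trans (by gcongr))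
  refine ⟨allCherries Γ m p z ∪ (Γ.disjSum (twins Γ m p)).biUnion Ab, ?_, ?_, ?_⟩
  · refine Finset.union_subset hRE ?_
    rw [Finset.biUnion_subset]
    exact fun t ht => (hA1 t ht).1.trans Finset.sdiff_subset
  · intro v
    have h1 : (deg (allCherries Γ m p z ∪ (Γ.disjSum (twins Γ m p)).biUnion Ab) v : ℝ) ≤
        (deg (allCherries Γ m p z) v : ℝ) + deg ((Γ.disjSum (twins Γ m p)).biUnion Ab) v := by
      exact_mod_cast deg_union_le _ _ v
    have h2 : β₁ * (Fintype.card V : ℝ) ≤ β / 2 * (Fintype.card V : ℝ) := by gcongr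
    linarith [hRd v, hA5 v]
  · intro L hL hLe
    obtain ⟨J, hJ, hLJ⟩ := hspan L hL hLe
    exact absorb_all hE hG hz hX hXE hA1 hA2 hA3 hA4 hJ hL hLJ

end omni

/-! ### The reserved graph -/

section cells
variable {V : Type} [Fintype V] [DecidableEq V]

/-- `x` is the last vertex of its cell in the order `i`; the cells are the classes of `lab`. -/
def isLast (i lab : V → ℕ) (x : V) : Prop := ∀ y, lab y = lab x → i y ≤ i x

/-- The cells are arranged in a grid with `q` columns; two vertices are related if their cells share
a row or a column, or if both are the last ones of their cells. -/
def cellRel (i lab : V → ℕ) (q : ℕ) (x y : V) : Prop :=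
  x ≠ y ∧ (lab x / q = lab y / q ∨ lab x % q = lab y % q ∨ (isLast i lab x ∧ isLast i lab y))

lemma cellRel_symm {i lab : V → ℕ} {q : ℕ} {x y : V} (h : cellRel i lab q x y) :
    cellRel i lab q y x :=
  ⟨h.1.symm, h.2.imp Eq.symm (Or.imp Eq.symm And.symm)⟩

/-- The even subgraphs of `cellRel` are generated by a system of short cycles with bounded
multiplicities. -/
lemma cell_generators {i lab : V → ℕ} (hi : Function.Injective i) (q : ℕ) :
    ∃ (Γ : Finset (V × ℕ)) (m : V × ℕ → ℕ) (p : V × ℕ → ℕ → V),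
      GenSys Γ m p (cellRel i lab q) ∧
      ∀ L : Finset (Sym2 V), (∀ a b, s(a, b) ∈ L → cellRel i lab q a b) → (∀ v, Even (deg L v)) →
        ∃ J ⊆ Γ, ∀ e, e ∈ L ↔ Odd (inc J m p e).card := by
  classical
  set N : ℕ := ∑ v, i v + 1 with hN
  have hiN : ∀ v, i v < N := fun v =>
    Nat.lt_succ_of_le (Finset.single_le_sum (f := i) (fun _ _ => Nat.zero_le _) (Finset.mem_univ v))
  -- the last vertices are moved to the end of the order
  set r : V → ℕ := fun x => if isLast i lab x then N + i x else i x with hr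
  have hrl : ∀ x, isLast i lab x → r x = N + i x := fun x h => if_pos h
  have hrn : ∀ x, ¬ isLast i lab x → r x = i x := fun x h => if_neg h
  have hrinj : Function.Injective r := by
    intro x y hxy
    apply hi
    have := hiN x
    have := hiN y
    by_cases h1 : isLast i lab x <;> by_cases h2 : isLast i lab y
    · rw [hrl x h1, hrl y h2] at hxy; omega
    · rw [hrl x h1, hrn y h2] at hxy; omega
    · rw [hrn x h1, hrl y h2] at hxy; omega
    · rwa [hrn x h1, hrn y h2] at hxy
  have hlast : ∀ x y, isLast i lab x → r x < r y → isLast i lab y := by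
    intro x y hx hxy
    by_contra hy
    rw [hrl x hx, hrn y hy] at hxy
    have := hiN y
    omega
  set S : V → Finset V := fun x =>
    Finset.univ.filter fun y => r x < r y ∧ (isLast i lab x ∨ lab y = lab x) with hS
  have hSm : ∀ x y, y ∈ S x ↔ r x < r y ∧ (isLast i lab x ∨ lab y = lab x) := by
    intro x y; simp [hS]
  have hmin : ∀ x, ∃ y, (S x).Nonempty → y ∈ S x ∧ ∀ y' ∈ S x, r y ≤ r y' := by
    intro x
    by_cases h : (S x).Nonempty
    · obtain ⟨y, h1, h2⟩ := (S x).exists_min_image r h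
      exact ⟨y, fun _ => ⟨h1, h2⟩⟩
    · exact ⟨x, fun h' => absurd h' h⟩
  choose σ hσ using hmin
  have hne : ∀ x j, r x < r j → (S x).Nonempty := by
    intro x j hj
    by_cases hx : isLast i lab x
    · exact ⟨j, (hSm _ _).2 ⟨hj, Or.inl hx⟩⟩
    · obtain ⟨y, hy, hmax⟩ := (Finset.univ.filter fun y => lab y = lab x).exists_max_image i
        ⟨x, by simp⟩
      have hy' : lab y = lab x := by simpa using hy
      have hyl : isLast i lab y := fun w hw => hmax w (by simp [hw, hy'])
      refine ⟨y, (hSm _ _).2 ⟨?_, Or.inr hy'⟩⟩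
      rw [hrl y hyl, hrn x hx]
      have := hiN x
      omega
  obtain ⟨Γ, m, p, h1, h2, h3⟩ := generators r hrinj (cellRel i lab q)
    (fun a b h => cellRel_symm h) (fun a h => h.1 rfl) σ (fun x => decide (isLast i lab x)) (by
      intro x j hxj hlt
      obtain ⟨hs, -⟩ := hσ x (hne x j hlt)
      obtain ⟨hs1, hs2⟩ := (hSm _ _).1 hs
      refine ⟨hs1, ?_⟩
      by_cases hj : j = σ x
      · exact Or.inr hj
      · refine Or.inl ⟨fun h => hj h.symm, ?_⟩
        by_cases hx : isLast i lab x
        · exact Or.inr (Or.inr ⟨hlast x _ hx hs1, hlast x _ hx hlt⟩)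
        · rw [hs2.resolve_left hx]
          rcases hxj.2 with h | h | h
          · exact Or.inl h
          · exact Or.inr (Or.inl h)
          · exact absurd h.1 hx) (by
      intro x x' j j' _ hlt _ hlt' hc hσσ
      have hiff : isLast i lab x ↔ isLast i lab x' := by simpa using hc
      obtain ⟨hs, hsm⟩ := hσ x (hne x j hlt)
      obtain ⟨hs', hsm'⟩ := hσ x' (hne x' j' hlt')
      obtain ⟨a1, a2⟩ := (hSm _ _).1 hs
      obtain ⟨b1, b2⟩ := (hSm _ _).1 hs'
      have hlab : isLast i lab x ∨ lab x = lab x' := by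
        by_cases hx : isLast i lab x
        · exact Or.inl hx
        · refine Or.inr ?_
          rw [← a2.resolve_left hx, hσσ, b2.resolve_left (fun h => hx (hiff.2 h))]
      apply hrinj
      rcases lt_trichotomy (r x) (r x') with h | h | h
      · have := hsm x' ((hSm _ _).2 ⟨h, hlab.imp id Eq.symm⟩)
        rw [hσσ] at this
        omega
      · exact h
      · have := hsm' x ((hSm _ _).2 ⟨h, hlab.imp hiff.1 id⟩)
        rw [← hσσ] at this
        omega)
  exact ⟨Γ, m, p, ⟨fun g hg => (h1 g hg).1, fun g hg => (h1 g hg).2.1, fun g hg => (h1 g hg).2.2,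
    h2⟩, h3⟩

end cells

section reserve

lemma cellRel_card {V : Type} [Fintype V] [DecidableEq V] {i lab : V → ℕ}
    (hi : Function.Injective i) {q : ℕ} (hq : 0 < q) (hlab : ∀ v, lab v < q * q) {B : ℝ}
    (hB : ∀ c < q * q, ((Finset.univ.filter fun v => lab v = c).card : ℝ) ≤ B)
    [DecidableRel (cellRel i lab q)] (v : V) :
    ((Finset.univ.filter fun y => cellRel i lab q v y).card : ℝ) ≤ 2 * (q * B) + q * q := by
  classical
  set r : ℕ := lab v / q with hr
  set c : ℕ := lab v % q with hc
  have hrq : r < q := Nat.div_lt_of_lt_mul (hlab v)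
  have hcq : c < q := Nat.mod_lt _ hq
  have hsum : ∀ f : ℕ → ℕ, (∀ j < q, f j < q * q) →
      (((Finset.range q).biUnion fun j => Finset.univ.filter fun y => lab y = f j).card : ℝ) ≤
        q * B := by
    intro f hf
    calc _ ≤ ((∑ j ∈ Finset.range q, (Finset.univ.filter fun y => lab y = f j).card : ℕ) : ℝ) := by
          exact_mod_cast Finset.card_biUnion_le
      _ = ∑ j ∈ Finset.range q, ((Finset.univ.filter fun y => lab y = f j).card : ℝ) := by
          push_cast; rfl
      _ ≤ ∑ _j ∈ Finset.range q, B :=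
          Finset.sum_le_sum fun j hj => hB _ (hf j (Finset.mem_range.1 hj))
      _ = q * B := by simp
  have hlastc : (Finset.univ.filter fun y => isLast i lab y).card ≤ q * q := by
    rw [← Finset.card_range (q * q)]
    refine Finset.card_le_card_of_injOn lab (fun y _ => by simpa using hlab y) ?_
    intro x hx y hy hxy
    simp only [Finset.coe_filter, Finset.mem_univ, true_and, Set.mem_ofPred_eq] at hx hy
    exact hi (le_antisymm (hy x hxy) (hx y hxy.symm))
  have hsub : (Finset.univ.filter fun y => cellRel i lab q v y) ⊆
      (((Finset.range q).biUnion fun j => Finset.univ.filter fun y => lab y = q * r + j) ∪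
      ((Finset.range q).biUnion fun j => Finset.univ.filter fun y => lab y = q * j + c)) ∪
      Finset.univ.filter fun y => isLast i lab y := by
    intro y hy
    simp only [Finset.mem_filter, Finset.mem_univ, true_and] at hy
    simp only [Finset.mem_union, Finset.mem_biUnion, Finset.mem_range, Finset.mem_filter,
      Finset.mem_univ, true_and]
    rcases hy.2 with h | h | h
    · refine Or.inl (Or.inl ⟨lab y % q, Nat.mod_lt _ hq, ?_⟩)
      rw [hr, h, Nat.div_add_mod]
    · refine Or.inl (Or.inr ⟨lab y / q, Nat.div_lt_of_lt_mul (hlab y), ?_⟩)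
      rw [hc, h, Nat.div_add_mod]
    · exact Or.inr h.2
  have h1 := hsum (fun j => q * r + j) (fun j hj => by
    calc q * r + j < q * r + q := by omega
      _ = q * (r + 1) := by ring
      _ ≤ q * q := Nat.mul_le_mul_left _ hrq)
  have h2 := hsum (fun j => q * j + c) (fun j hj => by
    calc q * j + c < q * j + q := by omega
      _ = q * (j + 1) := by ring
      _ ≤ q * q := Nat.mul_le_mul_left _ hj)
  have h3 : ((Finset.univ.filter fun y => isLast i lab y).card : ℝ) ≤ q * q := by
    exact_mod_cast hlastc
  have h4 := (Finset.card_le_card hsub).trans ((Finset.card_union_le _ _).trans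
    (Nat.add_le_add_right (Finset.card_union_le _ _) _))
  have h5 : ((Finset.univ.filter fun y => cellRel i lab q v y).card : ℝ) ≤
    (((Finset.range q).biUnion fun j => Finset.univ.filter fun y => lab y = q * r + j).card : ℝ) +
    (((Finset.range q).biUnion fun j => Finset.univ.filter fun y => lab y = q * j + c).card : ℝ) +
    ((Finset.univ.filter fun y => isLast i lab y).card : ℝ) := by exact_mod_cast h4
  linarith

/-- A sparse graph `P` whose even subgraphs are generated by short cycles, and in which any two
vertices nevertheless have linearly many common neighbours along edges of `E`. -/
theorem reserve (γ : ℝ) (hγ : 0 < γ) : ∃ κ : ℝ, 0 < κ ∧ ∃ n₀ : ℕ,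
    ∀ (V : Type) [Fintype V] [DecidableEq V] (E : Finset (Sym2 V)),
      n₀ ≤ Fintype.card V → E ⊆ edges Finset.univ →
      (∀ v, (0.9 : ℝ) * (Fintype.card V : ℝ) ≤ (deg E v : ℝ)) →
      ∃ (P : V → V → Prop) (_ : DecidableRel P) (Γ : Finset (V × ℕ)) (m : V × ℕ → ℕ)
        (p : V × ℕ → ℕ → V), GenSys Γ m p P ∧
        (∀ v, ((Finset.univ.filter fun y => P v y).card : ℝ) ≤ γ * (Fintype.card V : ℝ)) ∧
        (∀ a b, P a b → P b a) ∧
        (∀ L : Finset (Sym2 V), (∀ a b, s(a, b) ∈ L → P a b) → (∀ v, Even (deg L v)) →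
          ∃ J ⊆ Γ, ∀ e, e ∈ L ↔ Odd (inc J m p e).card) ∧
        ∀ U : Finset V, U.card ≤ 2 → κ * (Fintype.card V : ℝ) ≤
          ((Finset.univ.filter fun x => ∀ u ∈ U, s(x, u) ∈ E ∧ P x u).card : ℝ) := by
  obtain ⟨h, hh⟩ := exists_nat_gt (8 / γ)
  set q : ℕ := 2 ^ h with hqd
  have hq0 : 0 < q := by positivity
  have hqR : (0 : ℝ) < q := by exact_mod_cast hq0
  have hqγ : 8 / γ ≤ (q : ℝ) := by
    have : h ≤ q := Nat.lt_two_pow_self.le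
    have : (h : ℝ) ≤ q := by exact_mod_cast this
    linarith
  have hqq : 2 ^ (2 * h) = q * q := by rw [hqd, two_mul, pow_add]
  have hqqR : (2 : ℝ) ^ (2 * h) = q * q := by exact_mod_cast hqq
  set ξ : ℝ := 0.1 / (q * q) with hξ
  have hξ0 : 0 < ξ := by positivity
  obtain ⟨n₁, H⟩ := labelling (2 * h) ξ 2 hξ0
  obtain ⟨n₂, hn₂⟩ := exists_nat_gt (2 * (q * q) / γ)
  refine ⟨0.7 / (q * q), by positivity, max (max n₁ n₂) 1, ?_⟩
  intro V _ _ E hn hE hdeg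
  classical
  have hn1 : n₁ ≤ Fintype.card V := (le_max_left _ _).trans ((le_max_left _ _).trans hn)
  have hn2 : n₂ ≤ Fintype.card V := (le_max_right _ _).trans ((le_max_left _ _).trans hn)
  have hn3 : 1 ≤ Fintype.card V := (le_max_right _ _).trans hn
  have hne : Nonempty V := Fintype.card_pos_iff.1 hn3
  set n : ℝ := (Fintype.card V : ℝ) with hnd
  have hnR : (1 : ℝ) ≤ n := by rw [hnd]; exact_mod_cast hn3
  set 𝓕 : Finset (Finset V) := insert Finset.univ
    ((Finset.univ : Finset (V × V)).image fun t => nb E t.1 ∩ nb E t.2) with h𝓕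
  obtain ⟨lab, hlab, hcell⟩ := H V 𝓕 hn1 (by
    have h1 : 𝓕.card ≤ Fintype.card V ^ 2 + 1 := by
      refine (Finset.card_insert_le _ _).trans ?_
      refine Nat.add_le_add_right (Finset.card_image_le.trans ?_) 1
      rw [Finset.card_univ, Fintype.card_prod, sq]
    have h2 : (𝓕.card : ℝ) ≤ n ^ 2 + 1 := by rw [hnd]; exact_mod_cast h1
    nlinarith)
  rw [hqq] at hlab hcell
  rw [hqqR] at hcell
  set i : V → ℕ := fun v => (Fintype.equivFin V v : ℕ) with hid
  have hi : Function.Injective i := fun a b hab =>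
    (Fintype.equivFin V).injective (Fin.ext hab)
  obtain ⟨Γ, m, p, hG, hspan⟩ := cell_generators (lab := lab) hi q
  refine ⟨cellRel i lab q, inferInstance, Γ, m, p, hG, ?_, fun a b h => cellRel_symm h, hspan, ?_⟩
  · intro v
    have h1 := cellRel_card hi hq0 hlab (B := 2 * n / (q * q)) (by
      intro c hc
      have h2 := (abs_le.1 (hcell Finset.univ (Finset.mem_insert_self _ _) c hc)).2
      rw [Finset.card_univ] at h2
      have h3 : (2 * n / (q * q) : ℝ) = n / (q * q) + n / (q * q) := by ring
      have h4 : ξ * n ≤ n / (q * q) := by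
        rw [hξ, div_mul_eq_mul_div]
        gcongr
        linarith
      rw [h3]
      linarith) v
    have h2 : (2 * (q * (2 * n / (q * q))) : ℝ) = 4 / q * n := by
      field_simp
      norm_num
    have h3 : (4 : ℝ) / q ≤ γ / 2 := by
      rw [div_le_iff₀ hγ] at hqγ
      rw [div_le_iff₀ hqR]
      linarith
    have h4 : (q * q : ℝ) ≤ γ / 2 * n := by
      have : (n₂ : ℝ) ≤ n := by rw [hnd]; exact_mod_cast hn2
      have h5 := hn₂.trans_le this
      rw [div_lt_iff₀ hγ] at h5
      linarith
    have h5 : (4 : ℝ) / q * n ≤ γ / 2 * n := by gcongr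
    rw [h2] at h1
    linarith
  · intro U hU
    obtain ⟨a, b, hab⟩ : ∃ a b, U ⊆ {a, b} := by
      rcases Nat.lt_or_ge U.card 2 with h | h
      · obtain ⟨a, ha⟩ := Finset.card_le_one_iff_subset_singleton.1 (Nat.lt_succ_iff.1 h)
        exact ⟨a, a, by simpa using ha⟩
      · obtain ⟨a, b, -, hab⟩ := Finset.card_eq_two.1 (le_antisymm hU h)
        exact ⟨a, b, hab.subset⟩
    set c : ℕ := q * (lab a / q) + lab b % q with hc
    have hbq : lab b % q < q := Nat.mod_lt _ hq0
    have hcd : c / q = lab a / q := by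
      rw [hc, Nat.mul_add_div hq0, Nat.div_eq_of_lt hbq, add_zero]
    have hcm : c % q = lab b % q := by
      rw [hc, Nat.mul_add_mod, Nat.mod_mod]
    have hcq : c < q * q := by
      have : lab a / q < q := Nat.div_lt_of_lt_mul (hlab a)
      calc c < q * (lab a / q) + q := by omega
        _ = q * (lab a / q + 1) := by ring
        _ ≤ q * q := Nat.mul_le_mul_left _ this
    have h1 := (abs_le.1 (hcell (nb E a ∩ nb E b) (Finset.mem_insert_of_mem
      (Finset.mem_image.2 ⟨(a, b), Finset.mem_univ _, rfl⟩)) c hcq)).1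
    have h2 : (0.8 : ℝ) * n ≤ ((nb E a ∩ nb E b).card : ℝ) := by
      have h3 := Finset.card_union_add_card_inter (nb E a) (nb E b)
      have h4 : (nb E a ∪ nb E b).card ≤ Fintype.card V := Finset.card_le_univ _
      have h5 : ((nb E a ∪ nb E b).card : ℝ) + ((nb E a ∩ nb E b).card : ℝ) =
        (deg E a : ℝ) + deg E b := by exact_mod_cast h3
      have h6 : ((nb E a ∪ nb E b).card : ℝ) ≤ n := by rw [hnd]; exact_mod_cast h4
      linarith [hdeg a, hdeg b]
    have h3 : (0.8 : ℝ) / (q * q) * n ≤ ((nb E a ∩ nb E b).card : ℝ) / (q * q) := by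
      rw [div_mul_eq_mul_div]
      gcongr
    have h4 : ((nb E a ∩ nb E b).filter fun v => lab v = c) ⊆
        Finset.univ.filter fun x => ∀ u ∈ U, s(x, u) ∈ E ∧ cellRel i lab q x u := by
      intro x hx
      simp only [Finset.mem_filter, Finset.mem_inter, mem_nb] at hx
      obtain ⟨⟨hxa, hxb⟩, hxc⟩ := hx
      have hna : x ≠ a := (mem_edges.1 (hE hxa)).2.2.symm
      have hnb : x ≠ b := (mem_edges.1 (hE hxb)).2.2.symm
      refine Finset.mem_filter.2 ⟨Finset.mem_univ _, fun u hu => ?_⟩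
      rcases Finset.mem_insert.1 (hab hu) with rfl | hu
      · exact ⟨by rwa [Sym2.eq_swap], hna, Or.inl (by rw [hxc, hcd])⟩
      · rw [Finset.mem_singleton] at hu
        subst hu
        exact ⟨by rwa [Sym2.eq_swap], hnb, Or.inr (Or.inl (by rw [hxc, hcm]))⟩
    have h5 : (((nb E a ∩ nb E b).filter fun v => lab v = c).card : ℝ) ≤
        ((Finset.univ.filter fun x => ∀ u ∈ U, s(x, u) ∈ E ∧ cellRel i lab q x u).card : ℝ) := by
      exact_mod_cast Finset.card_le_card h4
    have h6 : (0.7 : ℝ) / (q * q) * n = 0.8 / (q * q) * n - ξ * n := by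
      rw [hξ]; ring
    rw [h6]
    refine le_trans ?_ h5
    linarith

end reserve

/-! ### Assembling the decomposition -/

section assembly

/-- A triangle rooted at two of its vertices, without the edge between the roots. -/
def coverPat : Pat where
  r := 2
  N := 3
  back _ := {0, 1}

lemma coverPat_ok : coverPat.ok 2 3 := by
  refine ⟨by simp [coverPat], by simp [coverPat], by simp [coverPat], ?_, fun i _ _ => ?_⟩
  · intro i h1 h2 j hj
    simp only [coverPat, Finset.mem_insert, Finset.mem_singleton] at h1 hj
    omega
  · exact Finset.card_le_two

lemma coverPat_img {V : Type} [Fintype V] [DecidableEq V] (F : ℕ → V) :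
    coverPat.img F = {s(F 2, F 0), s(F 2, F 1)} := by
  simp [Pat.img, coverPat]

/-- A sparse leftover `Lf` is covered by edge-disjoint triangles using two edges of `X` each. -/
lemma cover (κ : ℝ) (hκ : 0 < κ) : ∃ η : ℝ, 0 < η ∧ ∃ n₀ : ℕ,
    ∀ (V : Type) [Fintype V] [DecidableEq V] (X Lf : Finset (Sym2 V)),
      n₀ ≤ Fintype.card V → X ⊆ edges Finset.univ → Lf ⊆ edges Finset.univ → Disjoint X Lf →
      (∀ U : Finset V, U.card ≤ 2 → κ * (Fintype.card V : ℝ) ≤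
        ((Finset.univ.filter fun x => ∀ u ∈ U, s(x, u) ∈ X).card : ℝ)) →
      (∀ v, (deg Lf v : ℝ) ≤ η * (Fintype.card V : ℝ)) →
      ∃ W ⊆ X, Dec (Lf ∪ W) := by
  obtain ⟨η, hη, n₀, H⟩ := embed_tasks 2 3 κ 1 hκ one_pos
  refine ⟨η, hη, n₀, ?_⟩
  intro V _ _ X Lf hn hX hLf hdis hcom hdeg
  have hends : ∀ e : Sym2 V, ∃ t : V × V, s(t.1, t.2) = e := by
    intro e
    induction e using Sym2.ind with
    | _ a b => exact ⟨(a, b), rfl⟩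
  choose t ht using hends
  set ρ : Sym2 V → ℕ → V := fun e i => if i = 0 then (t e).1 else (t e).2 with hρ
  have hne : ∀ e ∈ Lf, (t e).1 ≠ (t e).2 := by
    intro e he
    have h1 := hLf he
    rw [← ht e] at h1
    exact (mem_edges.1 h1).2.2
  obtain ⟨F, hF1, hF2, -⟩ := H V (Sym2 V) X Lf (fun _ => coverPat) ρ hn hX hcom
    (fun _ _ => coverPat_ok) (by
      intro e he i hi j hj hij
      have hi' : i < 2 := hi
      have hj' : j < 2 := hj
      have := hne e he
      simp only [hρ] at hij
      split_ifs at hij with h1 h2 h2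
      · omega
      · exact absurd hij this
      · exact absurd hij.symm this
      · omega) (by
      intro v
      refine le_trans ?_ (hdeg v)
      have h1 := card_touch_le Lf (fun e => {e}) Lf (fun e he => by simpa using he)
        (fun e _ e' _ h => by simpa using h) v
      have h2 : rootCount Lf (fun _ => coverPat) ρ v ≤ deg Lf v := by
        refine le_trans (Finset.card_le_card ?_) h1
        intro e he
        obtain ⟨he1, i, -, hi⟩ := Finset.mem_filter.1 he
        refine Finset.mem_filter.2 ⟨he1, ?_⟩
        simp only [Finset.mem_singleton]
        simp only [hρ] at hi
        split_ifs at hi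
        · exact ⟨(t e).2, by rw [← hi]; exact ht e⟩
        · exact ⟨(t e).1, by rw [← hi, Sym2.eq_swap]; exact ht e⟩
      exact_mod_cast h2)
  have hF0 : ∀ e ∈ Lf, s(F e 0, F e 1) = e := by
    intro e he
    rw [(hF1 e he).1 0 (by simp [coverPat]), (hF1 e he).1 1 (by simp [coverPat])]
    simpa [hρ] using ht e
  refine ⟨Lf.biUnion fun e => coverPat.img (F e), ?_, ?_⟩
  · rw [Finset.biUnion_subset]
    exact fun e he => (hF1 e he).2.2
  have heq : (Lf ∪ Lf.biUnion fun e => coverPat.img (F e)) =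
      Lf.biUnion fun e => insert e (coverPat.img (F e)) := by
    ext e
    simp only [Finset.mem_union, Finset.mem_biUnion, Finset.mem_insert]
    constructor
    · rintro (h | ⟨e', h1, h2⟩)
      · exact ⟨e, h, Or.inl rfl⟩
      · exact ⟨e', h1, Or.inr h2⟩
    · rintro ⟨e', h1, rfl | h2⟩
      · exact Or.inl h1
      · exact Or.inr ⟨e', h1, h2⟩
  rw [heq]
  refine Dec_biUnion _ _ ?_ ?_
  · intro e he e' he' hne'
    have h1 := hF2 e he e' he' hne'
    have h2 : ∀ e ∈ Lf, ∀ e' ∈ Lf, e' ∉ coverPat.img (F e) := fun e he e' he' h =>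
      Finset.disjoint_left.1 hdis ((hF1 e he).2.2 h) he'
    rw [Finset.disjoint_insert_left, Finset.disjoint_insert_right, Finset.mem_insert]
    exact ⟨fun h => h.elim hne' (h2 e' he' e he), h2 e he e' he', h1⟩
  · intro e he
    have hinj := (hF1 e he).2.1
    have hN : ∀ j < 3, j ∈ Set.Iio coverPat.N := fun j hj => hj
    have h01 : F e 0 ≠ F e 1 := fun h => by
      have := hinj (hN 0 (by norm_num)) (hN 1 (by norm_num)) h
      omega
    have h20 : F e 2 ≠ F e 0 := fun h => by
      have := hinj (hN 2 (by norm_num)) (hN 0 (by norm_num)) h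
      omega
    have h21 : F e 2 ≠ F e 1 := fun h => by
      have := hinj (hN 2 (by norm_num)) (hN 1 (by norm_num)) h
      omega
    have h3 : insert e (coverPat.img (F e)) = edges {F e 2, F e 0, F e 1} := by
      rw [edges_triple_eq _ _ _ h20 h21 h01, coverPat_img, hF0 e he]
      ext e'; simp only [Finset.mem_insert, Finset.mem_singleton]; tauto
    simp only [h3]
    refine Dec_edges ?_
    rw [Finset.card_eq_three.2 ⟨_, _, _, h20, h21, h01, rfl⟩]
    decide

lemma common_of_deg {V : Type} [Fintype V] [DecidableEq V] (E : Finset (Sym2 V)) (U : Finset V)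
    {δ : ℝ} (hδ : ∀ u ∈ U, (Fintype.card V : ℝ) - δ ≤ (deg E u : ℝ)) :
    (Fintype.card V : ℝ) - U.card * δ ≤
      ((Finset.univ.filter fun x => ∀ u ∈ U, s(x, u) ∈ E).card : ℝ) := by
  have h1 : (Finset.univ : Finset V) ⊆
      (Finset.univ.filter fun x => ∀ u ∈ U, s(x, u) ∈ E) ∪ U.biUnion fun u => (nb E u)ᶜ := by
    intro x _
    by_cases h : ∃ u ∈ U, s(u, x) ∉ E
    · obtain ⟨u, hu, h⟩ := h
      exact Finset.mem_union_right _ (Finset.mem_biUnion.2 ⟨u, hu, by simpa using h⟩)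
    · push Not at h
      refine Finset.mem_union_left _ (Finset.mem_filter.2 ⟨Finset.mem_univ _, fun u hu => ?_⟩)
      rw [Sym2.eq_swap]
      exact h u hu
  have h2 := (Finset.card_le_card h1).trans (Finset.card_union_le _ _)
  have h3 : ((U.biUnion fun u => (nb E u)ᶜ).card : ℝ) ≤ U.card * δ := by
    calc ((U.biUnion fun u => (nb E u)ᶜ).card : ℝ) ≤ ((∑ u ∈ U, (nb E u)ᶜ.card : ℕ) : ℝ) := by
          exact_mod_cast Finset.card_biUnion_le
      _ = ∑ u ∈ U, ((nb E u)ᶜ.card : ℝ) := by push_cast; rfl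
      _ ≤ ∑ _u ∈ U, δ := by
          refine Finset.sum_le_sum fun u hu => ?_
          have h4 := Finset.card_add_card_compl (nb E u)
          have h5 : (deg E u : ℝ) + ((nb E u)ᶜ.card : ℝ) = Fintype.card V := by exact_mod_cast h4
          linarith [hδ u hu]
      _ = U.card * δ := by simp
  rw [Finset.card_univ] at h2
  have h4 : (Fintype.card V : ℝ) ≤
    ((Finset.univ.filter fun x => ∀ u ∈ U, s(x, u) ∈ E).card : ℝ) +
      ((U.biUnion fun u => (nb E u)ᶜ).card : ℝ) := by exact_mod_cast h2
  linarith

/-- The edges of `X` are reserved, `A` is an omni-absorber for `X`; the rest is decomposed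
approximately into triangles, the leftover is covered by triangles using `X`, and what remains of
`X` is even and hence absorbed. -/
theorem dec_of_minDegree (ε : ℝ) (hε : 0 < ε) : ∃ n₀ : ℕ, ∀ (V : Type) [Fintype V] [DecidableEq V]
    (E : Finset (Sym2 V)), n₀ ≤ Fintype.card V → E ⊆ edges Finset.univ →
    (∀ v, Even (deg E v)) → (∀ v, (0.9 + ε) * (Fintype.card V : ℝ) ≤ (deg E v : ℝ)) → Dec E := by
  obtain ⟨γ₀, hγ₀, n₁, H1⟩ := omni (ε / 2) (by positivity)
  set γ : ℝ := min γ₀ (min (ε / 2) 0.01) with hγd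
  have hγ : 0 < γ := by positivity
  have g1 : γ ≤ γ₀ := min_le_left _ _
  have g2 : γ ≤ ε / 2 := (min_le_right _ _).trans (min_le_left _ _)
  have g3 : γ ≤ 0.01 := (min_le_right _ _).trans (min_le_right _ _)
  obtain ⟨κ, hκ, n₂, H2⟩ := reserve γ hγ
  obtain ⟨η, hη, n₃, H3⟩ := cover κ hκ
  obtain ⟨n₄, H4⟩ := approx_triangles η hη
  refine ⟨n₁ + n₂ + n₃ + n₄, ?_⟩
  intro V _ _ E hn hE heven hdeg
  classical
  set n : ℝ := (Fintype.card V : ℝ) with hnd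
  have hn0 : (0 : ℝ) ≤ n := Nat.cast_nonneg _
  obtain ⟨P, hPd, Γ, m, p, hG, hPc, hPs, hspan, hcomP⟩ := H2 V E (by omega) hE
    (fun v => le_trans (by nlinarith) (hdeg v))
  set X : Finset (Sym2 V) := E.filter fun e => ∃ a b, e = s(a, b) ∧ P a b with hX
  have hXm : ∀ a b, s(a, b) ∈ X ↔ s(a, b) ∈ E ∧ P a b := by
    intro a b
    rw [hX, Finset.mem_filter]
    refine and_congr_right fun _ => ⟨?_, fun h => ⟨a, b, rfl, h⟩⟩
    rintro ⟨a', b', h, hP⟩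
    rcases Sym2.eq_iff.1 h with ⟨rfl, rfl⟩ | ⟨rfl, rfl⟩
    · exact hP
    · exact hPs _ _ hP
  have hXE : X ⊆ E := Finset.filter_subset _ _
  have hXd : ∀ v, (deg X v : ℝ) ≤ γ * n := by
    intro v
    refine le_trans ?_ (hPc v)
    have : nb X v ⊆ Finset.univ.filter fun y => P v y := by
      intro y hy
      simpa using ((hXm v y).1 (mem_nb.1 hy)).2
    exact_mod_cast Finset.card_le_card this
  set E₀ := E \ X with hE₀
  have hE₀E : E₀ ⊆ E := Finset.sdiff_subset
  have hd₀ : ∀ v, (deg E₀ v : ℝ) = deg E v - deg X v := by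
    intro v
    have : (deg E₀ v : ℝ) + deg X v = deg E v := by exact_mod_cast deg_sdiff hXE v
    linarith
  obtain ⟨A, hAE, hAd, hAbs⟩ := H1 V (V × ℕ) E₀ X Γ m p P (by omega) (hE₀E.trans hE) (by
      intro U hU
      have h1 := common_of_deg E₀ U (δ := 0.11 * n) (fun u _ => by
        rw [hd₀ u]
        have h2 := hdeg u
        have h3 := hXd u
        have h4 : γ * n ≤ 0.01 * n := by gcongr
        have h5 : 0 ≤ ε * n := by positivity
        rw [add_mul] at h2
        linarith)
      have h2 : (U.card : ℝ) ≤ 5 := by exact_mod_cast hU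
      have h3 : (U.card : ℝ) * (0.11 * n) ≤ 5 * (0.11 * n) := by gcongr
      linarith) hG
    (fun v => (hPc v).trans (by gcongr)) (hXE.trans hE) Finset.disjoint_sdiff
    (fun L hL hLe => hspan L (fun a b h => ((hXm a b).1 (hL h)).2) hLe)
  set Gs := E₀ \ A with hGs
  have hGsE : Gs ⊆ E₀ := Finset.sdiff_subset
  obtain ⟨M, hM1, hM2, hM3⟩ := H4 V Gs (by omega) ((hGsE.trans hE₀E).trans hE) (by
    intro v
    have h1 : (deg Gs v : ℝ) + deg A v = deg E₀ v := by exact_mod_cast deg_sdiff hAE v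
    have h2 := hd₀ v
    have h3 := hXd v
    have h4 := hAd v
    have h5 := hdeg v
    have h6 : γ * n ≤ ε / 2 * n := by gcongr
    rw [add_mul] at h5
    linarith)
  set MU := M.biUnion edges with hMU
  have hMUG : MU ⊆ Gs := by
    rw [hMU, Finset.biUnion_subset]
    exact fun S hS => (hM1 S hS).2
  set Lf := Gs \ MU with hLf
  have hLfG : Lf ⊆ Gs := Finset.sdiff_subset
  have hXE₀ : Disjoint X E₀ := Finset.disjoint_sdiff
  obtain ⟨W, hWX, hWD⟩ := H3 V X Lf (by omega) (hXE.trans hE)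
    (((hLfG.trans hGsE).trans hE₀E).trans hE) (hXE₀.mono_right (hLfG.trans hGsE)) (by
      intro U hU
      refine (hcomP U hU).trans (Nat.cast_le.2 (Finset.card_le_card ?_))
      intro x hx
      refine Finset.mem_filter.2 ⟨Finset.mem_univ _, fun u hu => ?_⟩
      exact (hXm x u).2 ((Finset.mem_filter.1 hx).2 u hu)) hM3
  have hMD : Dec MU := Dec_biUnion _ _ hM2 fun S hS => Dec_edges (by rw [(hM1 S hS).1]; decide)
  -- the part outside the absorber and the remainder of `X`
  have hBD : Dec (MU ∪ (Lf ∪ W)) := by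
    refine Dec_union hMD hWD ?_
    rw [Finset.disjoint_union_right]
    exact ⟨Finset.disjoint_sdiff, (hXE₀.mono hWX (hMUG.trans hGsE)).symm⟩
  have hAG : Disjoint A Gs := Finset.disjoint_sdiff
  have hAX : Disjoint A X := (hXE₀.mono_right hAE).symm
  have hAB : Disjoint A (MU ∪ (Lf ∪ W)) := by
    simp only [Finset.disjoint_union_right]
    exact ⟨hAG.mono_right hMUG, hAG.mono_right hLfG, hAX.mono_right hWX⟩
  have hLB : Disjoint (X \ W) (MU ∪ (Lf ∪ W)) := by
    simp only [Finset.disjoint_union_right]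
    exact ⟨hXE₀.mono Finset.sdiff_subset (hMUG.trans hGsE),
      hXE₀.mono Finset.sdiff_subset (hLfG.trans hGsE), Finset.sdiff_disjoint⟩
  have hAL : Disjoint A (X \ W) := hAX.mono_right Finset.sdiff_subset
  have hEeq : E = (A ∪ X \ W) ∪ (MU ∪ (Lf ∪ W)) := by
    have e1 : E = X ∪ E₀ := (Finset.union_sdiff_of_subset hXE).symm
    have e2 : E₀ = A ∪ Gs := (Finset.union_sdiff_of_subset hAE).symm
    have e3 : Gs = MU ∪ Lf := (Finset.union_sdiff_of_subset hMUG).symm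
    have e4 : X = W ∪ X \ W := (Finset.union_sdiff_of_subset hWX).symm
    rw [e1, e2, e3]
    conv_lhs => rw [e4]
    ext e
    simp only [Finset.mem_union]
    tauto
  have hAL_B : Disjoint (A ∪ X \ W) (MU ∪ (Lf ∪ W)) := Finset.disjoint_union_left.2 ⟨hAB, hLB⟩
  have hAeven : ∀ v, Even (deg A v) := by
    have h0 := hAbs ∅ (Finset.empty_subset _) (fun v => by simp [deg, nb])
    rw [Finset.union_empty] at h0
    exact Dec_even h0
  have hLeven : ∀ v, Even (deg (X \ W) v) := by
    intro v
    have h1 := heven v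
    rw [hEeq, deg_union hAL_B, deg_union hAL, Nat.even_add] at h1
    have h2 := h1.2 (Dec_even hBD v)
    rw [Nat.even_add] at h2
    exact h2.1 (hAeven v)
  rw [hEeq]
  exact Dec_union (hAbs _ Finset.sdiff_subset hLeven) hBD hAL_B

end assembly

/-- For every `ε > 0` there is `n₀` such that every graph on `n ≥ n₀` vertices in which
every vertex has even degree and with minimum degree at least `(0.9 + ε) n` admits a
partition of its edge set into the edge sets of complete subgraphs of odd order. -/
theorem decomposition_into_odd_cliques :
    ∀ ε : ℝ, 0 < ε → ∃ n₀ : ℕ, ∀ (V : Type) [Fintype V] [DecidableEq V]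
      (G : SimpleGraph V) [DecidableRel G.Adj],
      n₀ ≤ Fintype.card V →
      (∀ v : V, Even (G.degree v)) →
      (∀ v : V, (0.9 + ε) * (Fintype.card V : ℝ) ≤ (G.degree v : ℝ)) →
      ∃ 𝒮 : Finset (Finset V),
        (∀ S ∈ 𝒮, G.IsClique (S : Set V) ∧ Odd S.card) ∧
        (∀ e ∈ G.edgeFinset, ∃! S, S ∈ 𝒮 ∧ ∀ v ∈ e, v ∈ S) := by
  intro ε hε
  obtain ⟨n₀, H⟩ := dec_of_minDegree ε hε
  refine ⟨n₀, ?_⟩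
  intro V _ _ G _ hn heven hdeg
  have hd : ∀ v, deg G.edgeFinset v = G.degree v := by
    intro v
    rw [← SimpleGraph.card_neighborFinset_eq_degree]
    unfold deg
    congr 1
    ext x
    simp
  obtain ⟨𝒮, h1, h2⟩ := H V G.edgeFinset hn
    (edges_univ_iff.2 fun e he => G.not_isDiag_of_mem_edgeFinset he)
    (fun v => by rw [hd]; exact heven v) (fun v => by rw [hd]; exact hdeg v)
  have hmem : ∀ e ∈ G.edgeFinset, ∀ S : Finset V, e ∈ edges S ↔ ∀ v ∈ e, v ∈ S := by
    intro e he S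
    have hnd := G.not_isDiag_of_mem_edgeFinset he
    induction e using Sym2.ind with
    | _ a b =>
      have hab : a ≠ b := by simpa using hnd
      simp [hab]
  refine ⟨𝒮, fun S hS => ⟨?_, (h1 S hS).1⟩, ?_⟩
  · intro a ha b hb hab
    have := (h1 S hS).2 (mem_edges.2 ⟨ha, hb, hab⟩)
    simpa using this
  · intro e he
    obtain ⟨S, ⟨hS1, hS2⟩, hS3⟩ := h2 e he
    refine ⟨S, ⟨hS1, (hmem e he S).1 hS2⟩, ?_⟩
    rintro T ⟨hT1, hT2⟩
    exact hS3 T ⟨hT1, (hmem e he T).2 hT2⟩
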